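/- Fix ε > 0, let α₁, α₂, … be a sequence of elements of 𝒦, and let γ₁, γ₂, … be a sequence of real numbers. Then there exists a set ℰ ⊆ ℬ ⊆ ℝ² of Hausdorff dimension dim_H(ℰ) = 2 such that for every i ∈ ℕ and every (β, δ) ∈ ℰ, the inequality n·‖nα_i − γ_i‖·‖nβ − δ‖ < (log log log n)^{ε + 1/2} / (log n)^{1/2} has infinitely many solutions n ∈ ℕ. -/

import Mathlib

open Filter MeasureTheory Real

/-- Distance from `x` to the nearest integer, `‖x‖ = min {|x - k| : k ∈ ℤ}`. -/
noncomputable def dni (x : ℝ) : ℝ := |x - round x|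

/-- The set of badly approximable numbers. -/
noncomputable def Bad : Set ℝ :=
  {α : ℝ | 0 < Filter.atTop.liminf (fun n : ℕ => (n : ℝ) * dni (n * α))}

/-- The `t`-th continued fraction convergent denominator `q_t(α)` of `α`. -/
noncomputable def qden (α : ℝ) (t : ℕ) : ℝ := (GenContFract.of α).dens t

/-- The set `𝒦` of irrationals whose convergent denominators grow at most exponentially. -/
noncomputable def KSet : Set ℝ :=
  {α : ℝ | Irrational α ∧ ∃ C : ℝ, ∀ t : ℕ, 1 ≤ t → Real.log (qden α t) / t ≤ C}

/-- `Bad(δ)`: the set of `β` that are badly approximable with inhomogeneous shift `δ`. -/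
noncomputable def BadShift (δ : ℝ) : Set ℝ :=
  {β : ℝ | 0 < Filter.atTop.liminf (fun n : ℕ => (n : ℝ) * dni (n * β - δ))}

/-- The set `ℬ = {(β, δ) : β ∈ Bad ∩ Bad(δ)}`. -/
noncomputable def BSet : Set (ℝ × ℝ) :=
  {p : ℝ × ℝ | p.1 ∈ Bad ∧ p.1 ∈ BadShift p.2}

/-!
Kaufman's construction puts, for every `t < 1`, a `t`-Frostman probability measure `ν` with
polynomially decaying Fourier transform on a set of uniformly badly approximable numbers: `ν` is the
stationary measure of a large finite set of inverse branches of iterates of the Gauss map, namely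
Möbius transformations whose matrices have bottom rows that are coprime pairs of size about `Y`. The
decay comes from averaging `𝐞 (n * mobius G x)` over words `G`: pairs of words with well separated
derivatives are controlled by the first-derivative test, the other pairs are few, and the resulting
mean square over Lebesgue measure bounds the one over `ν` because the averages vary slowly on the
cylinder intervals.

Along a lacunary sequence `n s` of denominators with `n s * ‖n s * α - γ‖` bounded, the decay bounds
the `L²` norms of the exponential sums `∑ 𝐞 (k * n s * β)` by their diagonal terms. Hence the points
`n s * β` with `K < s ≤ 2 K` come within `C / √K` of every `δ` for all `β` outside a set of small
`ν`-measure, and `log (n s)` is of order `s` because `α ∈ 𝒦`; this yields the approximation property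
for `ν`-almost every `β` and all `δ` simultaneously.

For a badly approximable `β`, a Cantor construction finds in the complement of any cover of small
`t`-dimensional weight a `δ` with `β ∈ Bad(δ)`. Slicing a cover of the plane by vertical lines and
averaging the weights over `ν` shows that the `2 t`-dimensional Hausdorff measure does not vanish.
-/

open scoped FourierTransform Pointwise

theorem dni_eq_norm (x : ℝ) : dni x = ‖(x : UnitAddCircle)‖ :=
  UnitAddCircle.norm_eq.symm

theorem dni_nonneg (x : ℝ) : 0 ≤ dni x := abs_nonneg _

theorem dni_le_abs_sub_intCast (x : ℝ) (k : ℤ) : dni x ≤ |x - k| := round_le x k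

theorem dni_sub_le (x y : ℝ) : dni (x - y) ≤ dni x + dni y := by
  simpa only [dni_eq_norm, AddCircle.coe_sub] using norm_sub_le _ _

theorem fourierChar_intCast (k : ℤ) : 𝐞 (k : ℝ) = 1 := by
  rw [fourierChar_apply', Circle.exp_two_pi_mul_int]

theorem norm_fourierChar_sub (x y : ℝ) : ‖(𝐞 x : ℂ) - 𝐞 y‖ = 2 * |sin (π * (x - y))| := by
  have factor : (𝐞 x : ℂ) - 𝐞 y = 𝐞 y * (𝐞 (x - y) - 1) := by
    rw [mul_sub_one, ← Circle.coe_mul, ← AddChar.map_add_eq_mul, add_sub_cancel]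
  rw [factor, norm_mul, Circle.norm_coe, one_mul, fourierChar_apply, mul_comm _ Complex.I,
    Complex.norm_exp_I_mul_ofReal_sub_one, norm_mul, norm_eq_abs, norm_eq_abs, abs_two,
    show 2 * π * (x - y) / 2 = π * (x - y) by ring]

theorem norm_fourierChar_sub_le (x y : ℝ) : ‖(𝐞 x : ℂ) - 𝐞 y‖ ≤ 2 * π * |x - y| := by
  have sin_le : |sin (π * (x - y))| ≤ π * |x - y| := by
    simpa only [abs_mul, abs_of_pos pi_pos] using abs_sin_le_abs (x := π * (x - y))
  rw [norm_fourierChar_sub]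
  linarith

theorem four_mul_dni_le_norm_one_sub_fourierChar (x : ℝ) : 4 * dni x ≤ ‖1 - (𝐞 x : ℂ)‖ := by
  have round_abs : |π * (x - round x)| = π * dni x := by rw [abs_mul, abs_of_pos pi_pos, dni]
  have jordan : 2 / π * (π * dni x) ≤ |sin (π * (x - round x))| := by
    rw [← round_abs]
    refine mul_abs_le_abs_sin ?_
    rw [round_abs]
    nlinarith [pi_pos, show dni x ≤ 1 / 2 from abs_sub_round x]
  have norm_eq : ‖1 - (𝐞 x : ℂ)‖ = 2 * |sin (π * (x - round x))| := by
    rw [← norm_fourierChar_sub, norm_sub_rev, fourierChar_intCast, Circle.coe_one]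
  rw [norm_eq]
  have cancel : 2 / π * (π * dni x) = 2 * dni x := by field_simp
  linarith

theorem ofReal_norm_sq_sum_mul_fourierChar {ι : Type*} (T : Finset ι) (c x : ι → ℝ) :
    ((‖∑ i ∈ T, (c i : ℂ) * 𝐞 (x i)‖ ^ 2 : ℝ) : ℂ) =
      ∑ i ∈ T, ∑ j ∈ T, (c i * c j : ℂ) * 𝐞 (x i - x j) := by
  rw [← Complex.normSq_eq_norm_sq, ← Complex.mul_conj, map_sum, Finset.sum_mul_sum]
  refine Finset.sum_congr rfl fun i _ ↦ Finset.sum_congr rfl fun j _ ↦ ?_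
  rw [sub_eq_add_neg, AddChar.map_add_eq_mul, AddChar.map_neg_eq_inv, Circle.coe_mul,
    Circle.coe_inv_eq_conj, map_mul, Complex.conj_ofReal]
  ring

/-! ### Möbius transformations of words -/

/-- The denominator `c x + d` of the Möbius transformation with matrix `[a, b; c, d]`. Entries are
natural numbers, so it is positive on `[0, ∞)` as soon as `d` is. -/
noncomputable def mobiusDenom (g : Matrix (Fin 2) (Fin 2) ℕ) (x : ℝ) : ℝ := g 1 0 * x + g 1 1

/-- The Möbius transformation `x ↦ (a x + b) / (c x + d)` with matrix `[a, b; c, d]`. -/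
noncomputable def mobius (g : Matrix (Fin 2) (Fin 2) ℕ) (x : ℝ) : ℝ :=
  (g 0 0 * x + g 0 1) / mobiusDenom g x

/-- Determinant one together with the inequalities under which the Möbius transformation maps
`[0, 1]` into itself with denominators between `d` and `2 d`. -/
structure IsAdmissible (g : Matrix (Fin 2) (Fin 2) ℕ) : Prop where
  det : g 0 0 * g 1 1 = g 0 1 * g 1 0 + 1
  c_le_d : g 1 0 ≤ g 1 1
  b_lt_d : g 0 1 < g 1 1
  a_add_b_le : g 0 0 + g 0 1 ≤ g 1 0 + g 1 1

/-- The alphabet at scale `Y`: determinant one and `Y < c ≤ 2 Y < d ≤ 3 Y`. These play the role of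
blocks of partial quotients, with the advantage that all of them contract at the same rate. -/
structure IsDigit (Y : ℕ) (g : Matrix (Fin 2) (Fin 2) ℕ) : Prop where
  det : g 0 0 * g 1 1 = g 0 1 * g 1 0 + 1
  lt_c : Y < g 1 0
  c_le : g 1 0 ≤ 2 * Y
  lt_d : 2 * Y < g 1 1
  d_le : g 1 1 ≤ 3 * Y
  b_lt_d : g 0 1 < g 1 1

theorem coprime_right_col_of_det {g : Matrix (Fin 2) (Fin 2) ℕ}
    (det : g 0 0 * g 1 1 = g 0 1 * g 1 0 + 1) : (g 0 1).Coprime (g 1 1) := by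
  refine Nat.isCoprime_iff_coprime.1 ⟨-g 1 0, g 0 0, ?_⟩
  zify at det
  linear_combination det

theorem eq_of_bottom_row_eq {g h : Matrix (Fin 2) (Fin 2) ℕ}
    (hg : g 0 0 * g 1 1 = g 0 1 * g 1 0 + 1) (hh : h 0 0 * h 1 1 = h 0 1 * h 1 0 + 1)
    (hgbd : g 0 1 < g 1 1) (hhbd : h 0 1 < h 1 1) (hc : g 1 0 = h 1 0) (hd : g 1 1 = h 1 1) :
    g = h := by
  have coprime : IsCoprime (h 1 1 : ℤ) (h 1 0) :=
    ⟨h 0 0, -h 0 1, by zify at hh; linear_combination hh⟩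
  have d_dvd : (h 1 1 : ℤ) ∣ g 0 1 - h 0 1 := by
    refine coprime.dvd_of_dvd_mul_right ⟨g 0 0 - h 0 0, ?_⟩
    rw [hc, hd] at hg
    zify at hg hh
    linear_combination hh - hg
  have hb : g 0 1 = h 0 1 := by
    have := Int.eq_zero_of_abs_lt_dvd d_dvd (by rw [abs_lt]; omega)
    omega
  have ha : g 0 0 = h 0 0 := by
    refine Nat.eq_of_mul_eq_mul_right (Nat.zero_lt_of_lt hhbd) ?_
    rw [hh, ← hb, ← hc, ← hd, hg]
  ext i j
  fin_cases i <;> fin_cases j <;> assumption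

namespace IsAdmissible

variable {g h : Matrix (Fin 2) (Fin 2) ℕ} {x y : ℝ}

theorem one : IsAdmissible 1 := by constructor <;> simp

theorem d_pos (hg : IsAdmissible g) : 0 < g 1 1 := Nat.zero_lt_of_lt hg.b_lt_d

theorem le_mobiusDenom (x_nonneg : 0 ≤ x) : (g 1 1 : ℝ) ≤ mobiusDenom g x :=
  le_add_of_nonneg_left (by positivity)

theorem mobiusDenom_pos (hg : IsAdmissible g) (hx : 0 ≤ x) : 0 < mobiusDenom g x :=
  (Nat.cast_pos.2 hg.d_pos).trans_le (le_mobiusDenom hx)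

theorem mobiusDenom_le (hg : IsAdmissible g) (hx : x ≤ 1) : mobiusDenom g x ≤ 2 * g 1 1 := by
  have c_le_d : (g 1 0 : ℝ) ≤ g 1 1 := mod_cast hg.c_le_d
  have : (g 1 0 : ℝ) * x ≤ g 1 0 := mul_le_of_le_one_right (by positivity) hx
  rw [mobiusDenom]
  linarith

theorem mapsTo_mobius (hg : IsAdmissible g) :
    Set.MapsTo (mobius g) (Set.Icc 0 1) (Set.Icc 0 1) := by
  rintro x ⟨hx0, hx1⟩
  have denom_pos := hg.mobiusDenom_pos hx0
  refine ⟨by unfold mobius; positivity, ?_⟩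
  have a_add_b_le : (g 0 0 : ℝ) + g 0 1 ≤ g 1 0 + g 1 1 := mod_cast hg.a_add_b_le
  have b_le_d : (g 0 1 : ℝ) ≤ g 1 1 := mod_cast hg.b_lt_d.le
  rw [mobius, div_le_one denom_pos, mobiusDenom]
  nlinarith

theorem mobiusDenom_mul (hh : IsAdmissible h) (hx : 0 ≤ x) :
    mobiusDenom (g * h) x = mobiusDenom g (mobius h x) * mobiusDenom h x := by
  have denom_pos := hh.mobiusDenom_pos hx
  unfold mobius mobiusDenom at *
  simp only [Matrix.mul_apply, Fin.sum_univ_two]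
  push_cast
  field_simp
  ring

theorem mobius_mul (hg : IsAdmissible g) (hh : IsAdmissible h) (hx : x ∈ Set.Icc (0 : ℝ) 1) :
    mobius (g * h) x = mobius g (mobius h x) := by
  have denom_pos := hh.mobiusDenom_pos hx.1
  have denom_pos' := hg.mobiusDenom_pos (hh.mapsTo_mobius hx).1
  rw [mobius, mobiusDenom_mul hh hx.1, mobius.eq_1 g, div_eq_div_iff (by positivity) denom_pos'.ne']
  suffices (g * h) 0 0 * x + (g * h) 0 1
      = (g 0 0 * mobius h x + g 0 1) * mobiusDenom h x by rw [this]; ring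
  unfold mobius mobiusDenom at *
  simp only [Matrix.mul_apply, Fin.sum_univ_two]
  push_cast
  field_simp
  ring

theorem mobius_sub (hg : IsAdmissible g) (hx : 0 ≤ x) (hy : 0 ≤ y) :
    mobius g x - mobius g y = (x - y) / (mobiusDenom g x * mobiusDenom g y) := by
  have det : (g 0 0 : ℝ) * g 1 1 = g 0 1 * g 1 0 + 1 := mod_cast hg.det
  rw [mobius, mobius, div_sub_div _ _ (hg.mobiusDenom_pos hx).ne' (hg.mobiusDenom_pos hy).ne']
  congr 1
  unfold mobiusDenom
  linear_combination (x - y) * det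

theorem strictMonoOn_mobius (hg : IsAdmissible g) : StrictMonoOn (mobius g) (Set.Ici 0) := by
  intro x hx y hy hxy
  have := hg.mobiusDenom_pos hx
  have := hg.mobiusDenom_pos hy
  rw [← sub_pos, hg.mobius_sub hy hx]
  have := sub_pos.2 hxy
  positivity

theorem continuousOn_mobius (hg : IsAdmissible g) : ContinuousOn (mobius g) (Set.Icc 0 1) := by
  unfold mobius
  refine ContinuousOn.div (by fun_prop) (by unfold mobiusDenom; fun_prop) fun x hx ↦ ?_
  exact (hg.mobiusDenom_pos hx.1).ne'

end IsAdmissible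

theorem measurable_mobius (g : Matrix (Fin 2) (Fin 2) ℕ) : Measurable (mobius g) := by
  unfold mobius mobiusDenom
  fun_prop

theorem mobius_zero (g : Matrix (Fin 2) (Fin 2) ℕ) : mobius g 0 = g 0 1 / g 1 1 := by
  simp [mobius, mobiusDenom]

theorem mobius_one (g : Matrix (Fin 2) (Fin 2) ℕ) :
    mobius g 1 = (g 0 0 + g 0 1) / (g 1 0 + g 1 1) := by
  simp [mobius, mobiusDenom]

namespace IsDigit

variable {Y : ℕ} {g h G : Matrix (Fin 2) (Fin 2) ℕ}

theorem a_le_c (hg : IsDigit Y g) : g 0 0 ≤ g 1 0 := by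
  have := hg.det
  have := hg.b_lt_d
  have := hg.lt_c
  by_contra! h
  nlinarith

theorem b_pos (hg : IsDigit Y g) : 0 < g 0 1 := by
  by_contra! h
  have ad_eq_one := hg.det
  rw [Nat.le_zero.1 h, zero_mul, zero_add] at ad_eq_one
  have := Nat.eq_one_of_mul_eq_one_left ad_eq_one
  have := hg.lt_d
  have := hg.d_le
  omega

theorem a_le_b (hg : IsDigit Y g) : g 0 0 ≤ g 0 1 := by
  have := hg.det
  have := hg.b_pos
  have : g 1 0 + 1 ≤ g 1 1 := Nat.succ_le_of_lt (hg.c_le.trans_lt hg.lt_d)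
  by_contra! h
  nlinarith

theorem isAdmissible (hg : IsDigit Y g) : IsAdmissible g :=
  ⟨hg.det, (hg.c_le.trans_lt hg.lt_d).le, hg.b_lt_d, add_le_add hg.a_le_c hg.b_lt_d.le⟩

theorem d_pos (hg : IsDigit Y g) : 0 < g 1 1 := hg.isAdmissible.d_pos

theorem isAdmissible_mul (hg : IsDigit Y g) (hG : IsAdmissible G) : IsAdmissible (G * g) := by
  constructor <;> simp only [Matrix.mul_apply, Fin.sum_univ_two]
  · have det_G := hG.det
    have det_g := hg.det
    zify at *
    linear_combination (g 0 0 * g 1 1 - g 0 1 * g 1 0 : ℤ) * det_G + det_g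
  · have := hg.a_le_b
    have := hg.isAdmissible.c_le_d
    gcongr
  · nlinarith [hG.a_add_b_le, hG.b_lt_d, hg.b_lt_d, hg.b_pos,
      mul_le_mul_of_nonneg_right hG.a_add_b_le (Nat.zero_le (g 0 1)),
      mul_lt_mul'' hG.b_lt_d hg.b_lt_d (by positivity) (by positivity)]
  · have := hg.isAdmissible.a_add_b_le
    obtain ⟨k, hk⟩ := Nat.exists_eq_add_of_le hg.isAdmissible.a_add_b_le
    calc G 0 0 * g 0 0 + G 0 1 * g 1 0 + (G 0 0 * g 0 1 + G 0 1 * g 1 1)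
        = (G 0 0 + G 0 1) * (g 0 0 + g 0 1) + G 0 1 * k := by linear_combination G 0 1 * hk
      _ ≤ (G 1 0 + G 1 1) * (g 0 0 + g 0 1) + G 1 1 * k :=
        add_le_add (Nat.mul_le_mul_right _ hG.a_add_b_le) (Nat.mul_le_mul_right _ hG.b_lt_d.le)
      _ = G 1 0 * g 0 0 + G 1 1 * g 1 0 + (G 1 0 * g 0 1 + G 1 1 * g 1 1) := by
        linear_combination G 1 1 * hk.symm

theorem mobius_one_lt_mobius_zero (hg : IsDigit Y g) (hh : IsDigit Y h)
    (hlt : mobius g 0 < mobius h 0) : mobius g 1 < mobius h 0 := by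
  have hg_d : (0 : ℝ) < g 1 1 := mod_cast hg.d_pos
  have hh_d : (0 : ℝ) < h 1 1 := mod_cast hh.d_pos
  rw [mobius_zero, mobius_zero, div_lt_div_iff₀ hg_d hh_d] at hlt
  rw [mobius_one, mobius_zero, div_lt_div_iff₀ (by positivity) hh_d]
  by_contra! hle
  have u_pos : (0 : ℤ) < h 0 1 * g 1 1 - g 0 1 * h 1 1 := sub_pos.2 (mod_cast hlt)
  have v_pos : (0 : ℤ) < g 0 0 * h 1 1 - h 0 1 * g 1 0 := by
    have : ((h 0 1 * (g 1 0 + g 1 1) : ℕ) : ℤ) ≤ ((g 0 0 + g 0 1) * h 1 1 : ℕ) := mod_cast hle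
    push_cast at this
    linarith
  have decomposition : (h 1 1 : ℤ) = (h 0 1 * g 1 1 - g 0 1 * h 1 1) * g 1 0
      + (g 0 0 * h 1 1 - h 0 1 * g 1 0) * g 1 1 := by
    have det := hg.det
    zify at det
    linear_combination -(h 1 1 : ℤ) * det
  have : g 1 0 + g 1 1 ≤ h 1 1 := by zify; nlinarith
  have := hg.lt_c
  have := hg.lt_d
  have := hh.d_le
  omega

theorem eq_of_mobius_zero_eq (hg : IsDigit Y g) (hh : IsDigit Y h)
    (heq : mobius g 0 = mobius h 0) : g = h := by
  rw [mobius_zero, mobius_zero] at heq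
  obtain ⟨hb, hd⟩ := Rat.div_int_inj (a := g 0 1) (b := g 1 1) (c := h 0 1) (d := h 1 1)
    (mod_cast hg.d_pos) (mod_cast hh.d_pos) (coprime_right_col_of_det hg.det)
    (coprime_right_col_of_det hh.det) (Rat.cast_injective (α := ℝ) (by push_cast; exact heq))
  rw [← Matrix.transpose_inj]
  refine eq_of_bottom_row_eq ?_ ?_ ?_ ?_ (mod_cast hb) (mod_cast hd) <;>
    simp only [Matrix.transpose_apply]
  · linarith [hg.det]
  · linarith [hh.det]
  · exact hg.c_le.trans_lt hg.lt_d
  · exact hh.c_le.trans_lt hh.lt_d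

theorem eq_of_mobius_eq (hg : IsDigit Y g) (hh : IsDigit Y h) {x y : ℝ}
    (hx : x ∈ Set.Icc (0 : ℝ) 1) (hy : y ∈ Set.Icc (0 : ℝ) 1) (heq : mobius g x = mobius h y) :
    g = h := by
  have mem_Icc {k : Matrix (Fin 2) (Fin 2) ℕ} (hk : IsDigit Y k) {z : ℝ}
      (hz : z ∈ Set.Icc (0 : ℝ) 1) : mobius k z ∈ Set.Icc (mobius k 0) (mobius k 1) :=
    have mono := hk.isAdmissible.strictMonoOn_mobius.monotoneOn
    ⟨mono Set.self_mem_Ici hz.1 hz.1, mono hz.1 (Set.mem_Ici.2 zero_le_one) hz.2⟩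
  have hgx := mem_Icc hg hx
  have hhy := mem_Icc hh hy
  rcases lt_trichotomy (mobius g 0) (mobius h 0) with hlt | heq0 | hlt
  · linarith [hg.mobius_one_lt_mobius_zero hh hlt, hgx.2, hhy.1]
  · exact hg.eq_of_mobius_zero_eq hh heq0
  · linarith [hh.mobius_one_lt_mobius_zero hg hlt, hhy.2, hgx.1]

end IsDigit

section Words

variable {Y : ℕ} {B : Finset (Matrix (Fin 2) (Fin 2) ℕ)} (hB : ∀ g ∈ B, IsDigit Y g)
include hB

theorem isAdmissible_of_mem_pow {k : ℕ} {G : Matrix (Fin 2) (Fin 2) ℕ} (hG : G ∈ B ^ k) :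
    IsAdmissible G := by
  induction k generalizing G with
  | zero =>
    rw [pow_zero, Finset.mem_one] at hG
    exact hG ▸ .one
  | succ k ih =>
    obtain ⟨H, hH, g, hg, rfl⟩ := Finset.mem_mul.1 (pow_succ B k ▸ hG)
    exact (hB g hg).isAdmissible_mul (ih hH)

theorem d_mul_le {G g : Matrix (Fin 2) (Fin 2) ℕ} (hG : IsAdmissible G) (hg : g ∈ B) :
    (G * g) 1 1 ≤ 6 * Y * G 1 1 := by
  have := hG.c_le_d
  have := (hB g hg).b_lt_d.le
  have := (hB g hg).d_le
  calc (G * g) 1 1 = G 1 0 * g 0 1 + G 1 1 * g 1 1 := by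
        simp only [Matrix.mul_apply, Fin.sum_univ_two]
    _ ≤ G 1 1 * (3 * Y) + G 1 1 * (3 * Y) := by gcongr; omega
    _ = 6 * Y * G 1 1 := by ring

theorem d_le_pow {k : ℕ} {G : Matrix (Fin 2) (Fin 2) ℕ} (hG : G ∈ B ^ k) :
    G 1 1 ≤ (6 * Y) ^ k := by
  induction k generalizing G with
  | zero =>
    rw [pow_zero, Finset.mem_one] at hG
    simp [hG]
  | succ k ih =>
    obtain ⟨H, hH, g, hg, rfl⟩ := Finset.mem_mul.1 (pow_succ B k ▸ hG)
    calc (H * g) 1 1 ≤ 6 * Y * H 1 1 := d_mul_le hB (isAdmissible_of_mem_pow hB hH) hg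
      _ ≤ 6 * Y * (6 * Y) ^ k := by gcongr; exact ih hH
      _ = (6 * Y) ^ (k + 1) := (pow_succ' _ _).symm

theorem pow_le_d {k : ℕ} {G : Matrix (Fin 2) (Fin 2) ℕ} (hG : G ∈ B ^ k) :
    (2 * Y) ^ k ≤ G 1 1 := by
  induction k generalizing G with
  | zero =>
    rw [pow_zero, Finset.mem_one] at hG
    simp [hG]
  | succ k ih =>
    obtain ⟨H, hH, g, hg, rfl⟩ := Finset.mem_mul.1 (pow_succ B k ▸ hG)
    have := ih hH
    have := (hB g hg).lt_d.le
    calc (2 * Y) ^ (k + 1) = (2 * Y) ^ k * (2 * Y) := pow_succ _ _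
      _ ≤ H 1 1 * g 1 1 := by gcongr
      _ ≤ (H * g) 1 1 := by simp only [Matrix.mul_apply, Fin.sum_univ_two, Nat.le_add_left]

theorem eq_of_mobius_eq_of_mem_pow {k : ℕ} {G H : Matrix (Fin 2) (Fin 2) ℕ} (hG : G ∈ B ^ k)
    (hH : H ∈ B ^ k) {x y : ℝ} (hx : x ∈ Set.Icc (0 : ℝ) 1) (hy : y ∈ Set.Icc (0 : ℝ) 1)
    (heq : mobius G x = mobius H y) : G = H := by
  induction k generalizing G H x y with
  | zero =>
    rw [pow_zero, Finset.mem_one] at hG hH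
    rw [hG, hH]
  | succ k ih =>
    rw [pow_succ, Finset.mem_mul] at hG hH
    obtain ⟨G, hG, g, hg, rfl⟩ := hG
    obtain ⟨H, hH, h, hh, rfl⟩ := hH
    have adm_G := isAdmissible_of_mem_pow hB hG
    have hgx := (hB g hg).isAdmissible.mapsTo_mobius hx
    have hhy := (hB h hh).isAdmissible.mapsTo_mobius hy
    rw [adm_G.mobius_mul (hB g hg).isAdmissible hx,
      (isAdmissible_of_mem_pow hB hH).mobius_mul (hB h hh).isAdmissible hy] at heq
    obtain rfl := ih hG hH hgx hhy heq
    rw [(hB g hg).eq_of_mobius_eq (hB h hh) hx hy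
      (adm_G.strictMonoOn_mobius.injOn hgx.1 hhy.1 heq)]

theorem injOn_mul_pow_prod (k : ℕ) :
    Set.InjOn (fun p : Matrix (Fin 2) (Fin 2) ℕ × Matrix (Fin 2) (Fin 2) ℕ ↦ p.1 * p.2)
      (↑(B ^ k) ×ˢ ↑B) := by
  rintro ⟨G, g⟩ ⟨hG, hg⟩ ⟨H, h⟩ ⟨hH, hh⟩ heq
  have zero_mem : (0 : ℝ) ∈ Set.Icc (0 : ℝ) 1 := by simp
  have adm_G := isAdmissible_of_mem_pow hB hG
  have adm_H := isAdmissible_of_mem_pow hB hH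
  have hg0 := (hB g hg).isAdmissible.mapsTo_mobius zero_mem
  have hh0 := (hB h hh).isAdmissible.mapsTo_mobius zero_mem
  have hmob : mobius G (mobius g 0) = mobius H (mobius h 0) := by
    rw [← adm_G.mobius_mul (hB g hg).isAdmissible zero_mem,
      ← adm_H.mobius_mul (hB h hh).isAdmissible zero_mem]
    exact congrArg (mobius · 0) heq
  obtain rfl : G = H := eq_of_mobius_eq_of_mem_pow hB hG hH hg0 hh0 hmob
  obtain rfl : g = h := (hB g hg).eq_of_mobius_eq (hB h hh) zero_mem zero_mem
    (adm_G.strictMonoOn_mobius.injOn hg0.1 hh0.1 hmob)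
  rfl

theorem card_pow (k : ℕ) : (B ^ k).card = B.card ^ k := by
  induction k with
  | zero => simp
  | succ k ih => rw [pow_succ, Finset.card_mul_iff.2 (injOn_mul_pow_prod hB k), ih, pow_succ]

theorem sum_pow_succ {M : Type*} [AddCommMonoid M] (k : ℕ)
    (φ : Matrix (Fin 2) (Fin 2) ℕ → M) :
    ∑ G ∈ B ^ (k + 1), φ G = ∑ G ∈ B ^ k, ∑ g ∈ B, φ (G * g) := by
  rw [pow_succ, Finset.mul_def, Finset.sum_image (by simpa using injOn_mul_pow_prod hB k),
    Finset.sum_product]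

end Words

theorem exists_isDigit {Y c d : ℕ} (hc : c ∈ Finset.Ioc Y (2 * Y))
    (hd : d ∈ Finset.Ioc (2 * Y) (3 * Y)) (coprime : c.Coprime d) :
    ∃ g, IsDigit Y g ∧ g 1 0 = c ∧ g 1 1 = d := by
  rw [Finset.mem_Ioc] at hc hd
  obtain ⟨m, -, hm⟩ := Nat.exists_mul_mod_eq_one_of_coprime coprime.symm (by omega)
  have mod_eq : d * (m % c) % c = 1 := by rw [Nat.mul_mod_mod, hm]
  have det : m % c * d = d * (m % c) / c * c + 1 := by
    rw [mul_comm, ← mod_eq, Nat.div_add_mod']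
  have b_lt_d : d * (m % c) / c < d := by
    rw [Nat.div_lt_iff_lt_mul (by omega)]
    exact Nat.mul_lt_mul_of_pos_left (Nat.mod_lt _ (by omega)) (by omega)
  exact ⟨!![m % c, d * (m % c) / c; c, d], ⟨det, hc.1, hc.2, hd.1, hd.2, b_lt_d⟩, rfl, rfl⟩

theorem card_filter_dvd_Ioc_le (s n : ℕ) {r : ℕ} (hr : 0 < r) :
    (((Finset.Ioc s (s + n)).filter (r ∣ ·)).card : ℝ) ≤ n / r + 1 := by
  suffices (((Finset.Ioc s (s + n)).filter (r ∣ ·)).card : ℚ) ≤ n / r + 1 by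
    simpa using (Rat.cast_le (K := ℝ)).2 this
  have count := Nat.Ioc_filter_modEq_card s (s + n) hr 0
  simp only [Nat.modEq_zero_iff_dvd, Nat.cast_zero, sub_zero, Nat.cast_add, add_div] at count
  have floor_sub_le := Int.le_floor_add_floor ((s : ℚ) / r) (n / r)
  have card_le : (((Finset.Ioc s (s + n)).filter (r ∣ ·)).card : ℤ) ≤ ⌊(n : ℚ) / r⌋ + 1 := by
    rw [count, max_le_iff]
    exact ⟨by linarith, by positivity⟩
  calc (((Finset.Ioc s (s + n)).filter (r ∣ ·)).card : ℚ) ≤ ⌊(n : ℚ) / r⌋ + 1 :=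
        mod_cast card_le
    _ ≤ n / r + 1 := by gcongr; exact Int.floor_le _

theorem sum_Icc_one_div_sq_le (n : ℕ) :
    ∑ d ∈ Finset.Icc 2 n, (1 : ℝ) / (d : ℝ) ^ 2 ≤ 3 / 4 := by
  rcases lt_or_ge n 2 with hn | hn
  · rw [Finset.Icc_eq_empty (by omega), Finset.sum_empty]
    norm_num
  have tail := sum_Ioc_inv_sq_le_sub (α := ℝ) two_ne_zero hn
  have : (0 : ℝ) ≤ (n : ℝ)⁻¹ := by positivity
  rw [← Finset.add_sum_Ioc_eq_sum_Icc hn]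
  simp only [one_div]
  push_cast at tail ⊢
  linarith

theorem not_coprime_subset_biUnion_dvd (Y : ℕ) :
    (Finset.Ioc Y (2 * Y) ×ˢ Finset.Ioc (2 * Y) (3 * Y)).filter (fun p ↦ ¬ p.1.Coprime p.2) ⊆
      (Finset.Icc 2 (2 * Y)).biUnion fun r ↦ (Finset.Ioc Y (Y + Y)).filter (r ∣ ·) ×ˢ
        (Finset.Ioc (2 * Y) (2 * Y + Y)).filter (r ∣ ·) := by
  rintro ⟨c, d⟩ hp
  simp only [Finset.mem_filter, Finset.mem_product, Finset.mem_Ioc, Finset.mem_biUnion,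
    Finset.mem_Icc] at hp ⊢
  obtain ⟨⟨hc, hd⟩, not_coprime⟩ := hp
  have gcd_dvd := Nat.gcd_dvd c d
  have := Nat.le_of_dvd (by omega) gcd_dvd.1
  have := Nat.gcd_pos_of_pos_left d (show 0 < c by omega)
  have : c.gcd d ≠ 1 := not_coprime
  exact ⟨c.gcd d, by omega, ⟨by omega, gcd_dvd.1⟩, by omega, gcd_dvd.2⟩

theorem card_not_coprime_le (Y : ℕ) :
    (((Finset.Ioc Y (2 * Y) ×ˢ Finset.Ioc (2 * Y) (3 * Y)).filter
      (fun p ↦ ¬ p.1.Coprime p.2)).card : ℝ) ≤ 13 / 16 * Y ^ 2 + 26 * Y := by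
  have young (r : ℕ) : ((Y : ℝ) / r + 1) ^ 2 ≤ 13 / 12 * Y ^ 2 * (1 / (r : ℝ) ^ 2) + 13 := by
    have : 13 / 12 * (Y : ℝ) ^ 2 * (1 / (r : ℝ) ^ 2) = 13 / 12 * (Y / r) ^ 2 := by
      rw [div_pow]; ring
    nlinarith [sq_nonneg ((Y : ℝ) / r - 12)]
  have card_le : ((Finset.Icc 2 (2 * Y)).card : ℝ) ≤ 2 * Y := by
    rw [Nat.card_Icc]
    exact_mod_cast (by omega : 2 * Y + 1 - 2 ≤ 2 * Y)
  calc (((Finset.Ioc Y (2 * Y) ×ˢ Finset.Ioc (2 * Y) (3 * Y)).filter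
        (fun p ↦ ¬ p.1.Coprime p.2)).card : ℝ)
      ≤ ∑ r ∈ Finset.Icc 2 (2 * Y), (((Finset.Ioc Y (Y + Y)).filter (r ∣ ·) ×ˢ
          (Finset.Ioc (2 * Y) (2 * Y + Y)).filter (r ∣ ·)).card : ℝ) := mod_cast
        (Finset.card_le_card (not_coprime_subset_biUnion_dvd Y)).trans Finset.card_biUnion_le
    _ ≤ ∑ r ∈ Finset.Icc 2 (2 * Y), ((Y : ℝ) / r + 1) ^ 2 := by
      refine Finset.sum_le_sum fun r hr ↦ ?_
      have r_pos : 0 < r := by linarith [(Finset.mem_Icc.1 hr).1]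
      rw [Finset.card_product, Nat.cast_mul, sq]
      gcongr <;> exact card_filter_dvd_Ioc_le _ _ r_pos
    _ ≤ ∑ r ∈ Finset.Icc 2 (2 * Y), (13 / 12 * (Y : ℝ) ^ 2 * (1 / (r : ℝ) ^ 2) + 13) :=
      Finset.sum_le_sum fun r _ ↦ young r
    _ = 13 / 12 * Y ^ 2 * ∑ r ∈ Finset.Icc 2 (2 * Y), (1 : ℝ) / (r : ℝ) ^ 2
          + (Finset.Icc 2 (2 * Y)).card * 13 := by
      rw [Finset.sum_add_distrib, ← Finset.mul_sum, Finset.sum_const, nsmul_eq_mul]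
    _ ≤ 13 / 12 * Y ^ 2 * (3 / 4) + 2 * Y * 13 := by
      gcongr
      exact sum_Icc_one_div_sq_le _
    _ = 13 / 16 * Y ^ 2 + 26 * Y := by ring

theorem le_card_coprime {Y : ℕ} (hY : 416 ≤ Y) :
    (Y : ℝ) ^ 2 / 8 ≤ ((Finset.Ioc Y (2 * Y) ×ˢ Finset.Ioc (2 * Y) (3 * Y)).filter
      (fun p ↦ p.1.Coprime p.2)).card := by
  have split := Finset.card_filter_add_card_filter_not
    (s := Finset.Ioc Y (2 * Y) ×ˢ Finset.Ioc (2 * Y) (3 * Y)) (fun p ↦ p.1.Coprime p.2)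
  rw [Finset.card_product, Nat.card_Ioc, Nat.card_Ioc, show 2 * Y - Y = Y by omega,
    show 3 * Y - 2 * Y = Y by omega] at split
  have split_real := congrArg (Nat.cast (R := ℝ)) split
  push_cast at split_real
  have : (416 : ℝ) ≤ Y := mod_cast hY
  nlinarith [card_not_coprime_le Y]

theorem exists_finset_isDigit {Y : ℕ} (hY : 416 ≤ Y) :
    ∃ B : Finset (Matrix (Fin 2) (Fin 2) ℕ),
      (∀ g ∈ B, IsDigit Y g) ∧ (Y : ℝ) ^ 2 / 8 ≤ B.card := by
  set P := (Finset.Ioc Y (2 * Y) ×ˢ Finset.Ioc (2 * Y) (3 * Y)).filter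
    (fun p ↦ p.1.Coprime p.2) with hP
  have exists_digit (p : P) : ∃ g, IsDigit Y g ∧ g 1 0 = p.1.1 ∧ g 1 1 = p.1.2 := by
    obtain ⟨p, hp⟩ := p
    rw [hP, Finset.mem_filter, Finset.mem_product] at hp
    exact exists_isDigit hp.1.1 hp.1.2 hp.2
  choose digit isDigit c_eq d_eq using exists_digit
  have digit_injective : digit.Injective := fun p q heq ↦
    Subtype.ext (Prod.ext (by rw [← c_eq, ← c_eq, heq]) (by rw [← d_eq, ← d_eq, heq]))
  refine ⟨Finset.univ.image digit, Finset.forall_mem_image.2 fun p _ ↦ isDigit p, ?_⟩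
  rw [Finset.card_image_of_injective _ digit_injective, Finset.card_univ, Fintype.card_coe]
  exact le_card_coprime hY

/-! ### Stationary measures of digit systems -/

open scoped ENNReal in
/-- The arithmetic mean of a finite family of measures; it is the zero measure when the family is
empty. -/
noncomputable def averageMeasure {X ι : Type*} [MeasurableSpace X] (s : Finset ι)
    (m : ι → Measure X) : Measure X := (s.card : ℝ≥0∞)⁻¹ • ∑ i ∈ s, m i

section AverageMeasure

variable {X ι : Type*} [MeasurableSpace X] {s : Finset ι} {m : ι → Measure X}

theorem averageMeasure_apply (A : Set X) :
    averageMeasure s m A = (s.card : ENNReal)⁻¹ * ∑ i ∈ s, m i A := by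
  rw [averageMeasure, Measure.smul_apply, Measure.finsetSum_apply, smul_eq_mul]

theorem isProbabilityMeasure_averageMeasure (hs : s.Nonempty)
    (hm : ∀ i ∈ s, IsProbabilityMeasure (m i)) : IsProbabilityMeasure (averageMeasure s m) where
  measure_univ := by
    rw [averageMeasure_apply, Finset.sum_congr rfl fun i hi ↦ (hm i hi).measure_univ,
      Finset.sum_const, nsmul_one, ENNReal.inv_mul_cancel (by simpa using hs.ne_empty) (by simp)]

theorem integral_averageMeasure {E : Type*} [NormedAddCommGroup E] [NormedSpace ℝ E] {f : X → E}
    (hf : ∀ i ∈ s, Integrable f (m i)) :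
    ∫ x, f x ∂averageMeasure s m = (s.card : ℝ)⁻¹ • ∑ i ∈ s, ∫ x, f x ∂m i := by
  rw [averageMeasure, integral_smul_measure, integral_finsetSum_measure hf, ENNReal.toReal_inv,
    ENNReal.toReal_natCast]

end AverageMeasure

section StationaryMeasure

open BoundedContinuousFunction

variable {X ι : Type*} [MeasurableSpace X] [TopologicalSpace X] [BorelSpace X]

theorem integral_averageMeasure_map (s : Finset ι) (f : ι → C(X, X)) (φ : X →ᵇ ℝ)
    (μ : Measure X) [IsFiniteMeasure μ] :
    ∫ x, φ x ∂averageMeasure s (fun i ↦ μ.map (f i)) =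
      ∫ x, ((s.card : ℝ)⁻¹ • ∑ i ∈ s, φ.compContinuous (f i)) x ∂μ := by
  simp only [BoundedContinuousFunction.coe_smul, BoundedContinuousFunction.sum_apply]
  rw [integral_averageMeasure fun i _ ↦ φ.integrable _, integral_smul,
    integral_finsetSum _ fun i _ ↦ (φ.compContinuous (f i)).integrable μ]
  refine congrArg _ (Finset.sum_congr rfl fun i _ ↦ ?_)
  exact integral_map (f i).continuous.aemeasurable φ.continuous.aestronglyMeasurable

theorem tendsto_integral_averageMeasure_range_sub {orbit : ℕ → Measure X}
    [∀ k, IsProbabilityMeasure (orbit k)] {φ ψ : X →ᵇ ℝ}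
    (step : ∀ k, ∫ x, φ x ∂orbit (k + 1) = ∫ x, ψ x ∂orbit k) :
    Tendsto (fun n : ℕ ↦ ∫ x, ψ x ∂averageMeasure (Finset.range (n + 1)) orbit -
      ∫ x, φ x ∂averageMeasure (Finset.range (n + 1)) orbit) atTop (nhds 0) := by
  have telescope (n : ℕ) : ∫ x, ψ x ∂averageMeasure (Finset.range (n + 1)) orbit -
      ∫ x, φ x ∂averageMeasure (Finset.range (n + 1)) orbit =
      1 / ((n : ℝ) + 1) * (∫ x, φ x ∂orbit (n + 1) - ∫ x, φ x ∂orbit 0) := by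
    rw [integral_averageMeasure fun k _ ↦ ψ.integrable _,
      integral_averageMeasure fun k _ ↦ φ.integrable _, ← smul_sub, ← Finset.sum_sub_distrib,
      ← Finset.sum_range_sub fun k ↦ ∫ x, φ x ∂orbit k, Finset.card_range, Nat.cast_succ,
      smul_eq_mul, one_div]
    simp only [step]
  simp_rw [telescope]
  refine tendsto_one_div_add_atTop_nhds_zero_nat.zero_mul_isBoundedUnder_le
    (isBoundedUnder_of ⟨‖φ‖ + ‖φ‖, fun n ↦ ?_⟩)
  refine (norm_sub_le _ _).trans (add_le_add ?_ ?_) <;>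
    exact φ.norm_integral_le_norm _

/-- Krylov–Bogoliubov: a limit point of the Cesàro means of an orbit is stationary. -/
theorem exists_eq_averageMeasure_map [CompactSpace X] [T2Space X] [HasOuterApproxClosed X]
    [Nonempty X] {s : Finset ι} (hs : s.Nonempty) (f : ι → C(X, X)) :
    ∃ μ : Measure X, IsProbabilityMeasure μ ∧ μ = averageMeasure s (fun i ↦ μ.map (f i)) := by
  have average_prob (μ : Measure X) (_ : IsProbabilityMeasure μ) :
      IsProbabilityMeasure (averageMeasure s fun i ↦ μ.map (f i)) :=
    isProbabilityMeasure_averageMeasure hs fun i _ ↦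
      Measure.isProbabilityMeasure_map (f i).continuous.aemeasurable
  let orbit (k : ℕ) : Measure X :=
    (fun μ ↦ averageMeasure s fun i ↦ μ.map (f i))^[k] (Measure.dirac (Classical.arbitrary X))
  have orbit_succ (k : ℕ) : orbit (k + 1) = averageMeasure s fun i ↦ (orbit k).map (f i) :=
    Function.iterate_succ_apply' ..
  have orbit_prob (k : ℕ) : IsProbabilityMeasure (orbit k) := by
    induction k with
    | zero => exact Measure.dirac.isProbabilityMeasure
    | succ k ih => exact orbit_succ k ▸ average_prob _ ih
  let cesaro (n : ℕ) : ProbabilityMeasure X := ⟨averageMeasure (Finset.range (n + 1)) orbit,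
    isProbabilityMeasure_averageMeasure (by simp) fun k _ ↦ orbit_prob k⟩
  obtain ⟨μ, hμ⟩ : ∃ μ, Tendsto cesaro (hyperfilter ℕ : Filter ℕ) (nhds μ) :=
    ⟨_, ((hyperfilter ℕ).map cesaro).le_nhds_lim⟩
  have lim := ProbabilityMeasure.tendsto_iff_forall_integral_tendsto.1 hμ
  have := average_prob μ inferInstance
  refine ⟨μ, inferInstance, ext_of_forall_integral_eq_of_IsFiniteMeasure fun φ ↦ ?_⟩
  have step (k : ℕ) := (congrArg (fun μ : Measure X ↦ ∫ x, φ x ∂μ) (orbit_succ k)).trans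
    (integral_averageMeasure_map s f φ (orbit k))
  have diff_lim := (tendsto_integral_averageMeasure_range_sub step).mono_left
    (Nat.cofinite_eq_atTop ▸ hyperfilter_le_cofinite)
  rw [integral_averageMeasure_map, eq_comm, ← sub_eq_zero]
  exact tendsto_nhds_unique ((lim _).sub (lim φ)) diff_lim

end StationaryMeasure

section AverageMeasure

variable {X Z ι : Type*} [MeasurableSpace X] [MeasurableSpace Z] {s : Finset ι}
  {m : ι → Measure X}

theorem averageMeasure_congr {m' : ι → Measure X} (h : ∀ i ∈ s, m i = m' i) :
    averageMeasure s m = averageMeasure s m' := by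
  rw [averageMeasure, Finset.sum_congr rfl h, averageMeasure]

theorem averageMeasure_attach :
    averageMeasure s.attach (fun i ↦ m i) = averageMeasure s m := by
  rw [averageMeasure, averageMeasure, Finset.card_attach, Finset.sum_attach]

theorem map_averageMeasure {f : X → Z} (hf : Measurable f) :
    (averageMeasure s m).map f = averageMeasure s fun i ↦ (m i).map f := by
  ext A hA
  rw [Measure.map_apply hf hA, averageMeasure_apply, averageMeasure_apply]
  simp only [Measure.map_apply hf hA]

end AverageMeasure

theorem averageMeasure_pow_succ {X : Type*} [MeasurableSpace X] {Y : ℕ}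
    {B : Finset (Matrix (Fin 2) (Fin 2) ℕ)} (hB : ∀ g ∈ B, IsDigit Y g) (k : ℕ)
    (m : Matrix (Fin 2) (Fin 2) ℕ → Measure X) :
    averageMeasure (B ^ (k + 1)) m =
      averageMeasure (B ^ k) fun G ↦ averageMeasure B fun g ↦ m (G * g) := by
  simp only [averageMeasure]
  rw [← Finset.smul_sum, smul_smul, sum_pow_succ hB, card_pow hB, card_pow hB, pow_succ,
    Nat.cast_mul, ENNReal.mul_inv (.inr (ENNReal.natCast_ne_top _))
      (.inl (ENNReal.natCast_ne_top _))]

/-- A probability measure on `[0, 1]` that is stationary for the iterated function system of the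
Möbius maps of a nonempty set `B` of digits at scale `Y`. -/
structure IsDigitMeasure (Y : ℕ) (B : Finset (Matrix (Fin 2) (Fin 2) ℕ)) (ν : Measure ℝ) :
    Prop where
  isDigit : ∀ g ∈ B, IsDigit Y g
  nonempty : B.Nonempty
  isProbabilityMeasure : IsProbabilityMeasure ν
  ae_mem_Icc : ∀ᵐ x ∂ν, x ∈ Set.Icc (0 : ℝ) 1
  eq_averageMeasure : ν = averageMeasure B fun g ↦ ν.map (mobius g)

section Digits

variable {Y : ℕ} {B : Finset (Matrix (Fin 2) (Fin 2) ℕ)} {ν : Measure ℝ} {x : ℝ}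

theorem exists_isDigitMeasure (hB : ∀ g ∈ B, IsDigit Y g) (hne : B.Nonempty) :
    ∃ ν, IsDigitMeasure Y B ν := by
  let f (g : B) : C(unitInterval, unitInterval) :=
    ⟨(hB g g.2).isAdmissible.mapsTo_mobius.restrict,
      (hB g g.2).isAdmissible.continuousOn_mobius.mapsToRestrict _⟩
  obtain ⟨μ, μ_prob, hμ⟩ := exists_eq_averageMeasure_map hne.attach f
  have map_comm (g : B) : (μ.map (f g)).map Subtype.val = (μ.map Subtype.val).map (mobius g) := by
    rw [Measure.map_map measurable_subtype_coe (f g).measurable,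
      Measure.map_map (measurable_mobius g) measurable_subtype_coe]
    rfl
  refine ⟨μ.map Subtype.val, hB, hne,
    Measure.isProbabilityMeasure_map measurable_subtype_coe.aemeasurable, ?_, ?_⟩
  · refine (ae_map_iff measurable_subtype_coe.aemeasurable measurableSet_Icc).2 ?_
    exact .of_forall fun x ↦ x.2
  · conv_lhs => rw [hμ, map_averageMeasure measurable_subtype_coe]
    simp only [map_comm]
    exact averageMeasure_attach (m := fun g ↦ (μ.map Subtype.val).map (mobius g))

theorem one_div_le_mobius_one_sub_mobius_zero {G : Matrix (Fin 2) (Fin 2) ℕ}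
    (hG : IsAdmissible G) : 1 / (2 * (G 1 1 : ℝ) ^ 2) ≤ mobius G 1 - mobius G 0 := by
  have denom_zero : mobiusDenom G 0 = G 1 1 := by simp [mobiusDenom]
  have denom_pos : 0 < mobiusDenom G 1 := hG.mobiusDenom_pos zero_le_one
  have d_pos : (0 : ℝ) < G 1 1 := mod_cast hG.d_pos
  rw [hG.mobius_sub zero_le_one le_rfl, sub_zero, denom_zero]
  refine one_div_le_one_div_of_le (by positivity) ?_
  nlinarith [hG.mobiusDenom_le le_rfl]

theorem mobius_lt_mobius_of_ne (hB : ∀ g ∈ B, IsDigit Y g) {k : ℕ}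
    {G H : Matrix (Fin 2) (Fin 2) ℕ} (hG : G ∈ B ^ k) (hH : H ∈ B ^ k) (hne : G ≠ H)
    (hle : mobius G 0 ≤ mobius H 0) {y : ℝ} (hx : x ∈ Set.Icc (0 : ℝ) 1)
    (hy : y ∈ Set.Icc (0 : ℝ) 1) : mobius G x < mobius H y := by
  by_contra! hlt
  have adm_G := isAdmissible_of_mem_pow hB hG
  have mono_G := adm_G.strictMonoOn_mobius.monotoneOn
  have mono_H := (isAdmissible_of_mem_pow hB hH).strictMonoOn_mobius.monotoneOn
  have mem_Icc : mobius H 0 ∈ Set.Icc (mobius G 0) (mobius G 1) :=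
    ⟨hle, (mono_H Set.self_mem_Ici hy.1 hy.1).trans <| hlt.trans <|
      mono_G hx.1 (Set.mem_Ici.2 zero_le_one) hx.2⟩
  obtain ⟨θ, hθ, heq⟩ := intermediate_value_Icc zero_le_one adm_G.continuousOn_mobius mem_Icc
  exact hne (eq_of_mobius_eq_of_mem_pow hB hG hH hθ (by simp) heq)

theorem card_le_two_of_inter_nonempty (hB : ∀ g ∈ B, IsDigit Y g) {k : ℕ}
    {S : Set ℝ} {r : ℝ} (hS : ∀ x ∈ S, ∀ y ∈ S, x - y ≤ r) (hr : 2 * r * (36 * Y ^ 2) ^ k ≤ 1)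
    {T : Finset (Matrix (Fin 2) (Fin 2) ℕ)} (hT : T ⊆ B ^ k)
    (meets : ∀ G ∈ T, ∃ θ ∈ Set.Icc (0 : ℝ) 1, mobius G θ ∈ S) : T.card ≤ 2 := by
  rcases T.eq_empty_or_nonempty with rfl | hT_ne
  · simp
  obtain ⟨L, hL, L_le⟩ := T.exists_min_image (mobius · 0) hT_ne
  obtain ⟨R, hR, le_R⟩ := T.exists_max_image (mobius · 0) hT_ne
  suffices T ⊆ {L, R} from (Finset.card_le_card this).trans Finset.card_le_two
  intro G hG
  by_contra hne
  simp only [Finset.mem_insert, Finset.mem_singleton, not_or] at hne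
  obtain ⟨a, ha, haS⟩ := meets L hL
  obtain ⟨b, hb, hbS⟩ := meets R hR
  have adm_G := isAdmissible_of_mem_pow hB (hT hG)
  have left_lt : mobius L a < mobius G 0 :=
    mobius_lt_mobius_of_ne hB (hT hL) (hT hG) (Ne.symm hne.1) (L_le G hG) ha (by simp)
  have lt_right : mobius G 1 < mobius R b :=
    mobius_lt_mobius_of_ne hB (hT hG) (hT hR) hne.2 (le_R G hG) (by simp) hb
  have gap : r ≤ mobius G 1 - mobius G 0 := by
    have d_pos : (0 : ℝ) < G 1 1 := mod_cast adm_G.d_pos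
    have d_le : (G 1 1 : ℝ) ^ 2 ≤ (36 * (Y : ℝ) ^ 2) ^ k := by
      have : (G 1 1 : ℝ) ≤ (6 * (Y : ℝ)) ^ k := mod_cast d_le_pow hB (hT hG)
      calc (G 1 1 : ℝ) ^ 2 ≤ ((6 * (Y : ℝ)) ^ k) ^ 2 := by gcongr
        _ = (36 * (Y : ℝ) ^ 2) ^ k := by rw [← pow_mul, mul_comm k 2, pow_mul]; ring
    have : r ≤ 1 / (2 * (G 1 1 : ℝ) ^ 2) := by
      rw [le_div_iff₀ (by positivity)]
      rcases le_or_gt r 0 with r_nonpos | r_pos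
      · exact (mul_nonpos_of_nonpos_of_nonneg r_nonpos (by positivity)).trans zero_le_one
      · calc r * (2 * (G 1 1 : ℝ) ^ 2) = 2 * r * (G 1 1 : ℝ) ^ 2 := by ring
          _ ≤ 2 * r * (36 * (Y : ℝ) ^ 2) ^ k := by gcongr
          _ ≤ 1 := hr
    exact this.trans (one_div_le_mobius_one_sub_mobius_zero adm_G)
  linarith [hS _ hbS _ haS]

namespace IsDigitMeasure

theorem eq_averageMeasure_pow (hν : IsDigitMeasure Y B ν) (k : ℕ) :
    ν = averageMeasure (B ^ k) fun G ↦ ν.map (mobius G) := by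
  induction k with
  | zero =>
    have mobius_one_eq_id : mobius 1 = id := by
      ext x
      simp [mobius, mobiusDenom]
    rw [pow_zero, ← Finset.singleton_one, averageMeasure, Finset.card_singleton,
      Finset.sum_singleton, mobius_one_eq_id, Measure.map_id]
    simp
  | succ k ih =>
    rw [averageMeasure_pow_succ hν.isDigit]
    refine ih.trans (averageMeasure_congr fun G hG ↦ ?_)
    conv_lhs => rw [hν.eq_averageMeasure, map_averageMeasure (measurable_mobius G)]
    refine averageMeasure_congr fun g hg ↦ ?_
    rw [Measure.map_map (measurable_mobius G) (measurable_mobius g)]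
    refine Measure.map_congr ?_
    filter_upwards [hν.ae_mem_Icc] with x hx
    exact ((isAdmissible_of_mem_pow hν.isDigit hG).mobius_mul
      (hν.isDigit g hg).isAdmissible hx).symm

theorem integral_eq_sum (hν : IsDigitMeasure Y B ν) (k : ℕ) {f : ℝ → ℂ} (hf : Measurable f)
    {C : ℝ} (hC : ∀ x, ‖f x‖ ≤ C) :
    ∫ x, f x ∂ν = ((B.card : ℝ) ^ k)⁻¹ • ∑ G ∈ B ^ k, ∫ x, f (mobius G x) ∂ν := by
  have := hν.isProbabilityMeasure
  conv_lhs => rw [hν.eq_averageMeasure_pow k]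
  rw [integral_averageMeasure fun G _ ↦
    (Integrable.of_bound hf.aestronglyMeasurable C (.of_forall hC)), card_pow hν.isDigit,
    Nat.cast_pow]
  refine congrArg _ (Finset.sum_congr rfl fun G _ ↦ ?_)
  exact integral_map (measurable_mobius G).aemeasurable hf.aestronglyMeasurable

theorem measure_le_two_mul (hν : IsDigitMeasure Y B ν) {S : Set ℝ} (hSm : MeasurableSet S)
    {r : ℝ} (hS : ∀ x ∈ S, ∀ y ∈ S, x - y ≤ r) {k : ℕ} (hr : 2 * r * (36 * Y ^ 2) ^ k ≤ 1) :
    ν S ≤ ((B.card : ENNReal) ^ k)⁻¹ * 2 := by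
  classical
  have := hν.isProbabilityMeasure
  have preimage_null {G} (hG : ¬ ∃ θ ∈ Set.Icc (0 : ℝ) 1, mobius G θ ∈ S) :
      ν (mobius G ⁻¹' S) = 0 :=
    measure_mono_null (fun x hxS hx ↦ hG ⟨x, hx, hxS⟩) (ae_iff.1 hν.ae_mem_Icc)
  conv_lhs => rw [hν.eq_averageMeasure_pow k]
  rw [averageMeasure_apply, card_pow hν.isDigit, Nat.cast_pow]
  gcongr
  calc ∑ G ∈ B ^ k, ν.map (mobius G) S = ∑ G ∈ B ^ k, ν (mobius G ⁻¹' S) :=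
        Finset.sum_congr rfl fun G _ ↦ Measure.map_apply (measurable_mobius G) hSm
    _ ≤ ∑ G ∈ B ^ k, if ∃ θ ∈ Set.Icc (0 : ℝ) 1, mobius G θ ∈ S then 1 else 0 := by
      refine Finset.sum_le_sum fun G _ ↦ ?_
      split_ifs with hG
      exacts [prob_le_one, (preimage_null hG).le]
    _ = (((B ^ k).filter fun G ↦ ∃ θ ∈ Set.Icc (0 : ℝ) 1, mobius G θ ∈ S).card : ENNReal) := by
      rw [Finset.sum_boole]
    _ ≤ 2 := mod_cast card_le_two_of_inter_nonempty hν.isDigit hS hr (Finset.filter_subset _ _)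
      fun G hG ↦ (Finset.mem_filter.1 hG).2

theorem measure_le_rpow (hν : IsDigitMeasure Y B ν) (hY : 1 ≤ Y) {t : ℝ} (ht : 0 ≤ t)
    (hcard : (36 * (Y : ℝ) ^ 2) ^ t ≤ B.card) {S : Set ℝ} (hSm : MeasurableSet S) {r : ℝ}
    (hr : 0 < r) (hS : ∀ x ∈ S, ∀ y ∈ S, x - y ≤ r) :
    ν S ≤ ENNReal.ofReal (2 * B.card * (2 * r) ^ t) := by
  have := hν.isProbabilityMeasure
  have one_le_card : (1 : ℝ) ≤ B.card := mod_cast hν.nonempty.card_pos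
  have one_le_Y : (1 : ℝ) ≤ Y := mod_cast hY
  rcases le_or_gt 1 (2 * r) with hr_large | hr_small
  · refine prob_le_one.trans (ENNReal.one_le_ofReal.2 ?_)
    nlinarith [one_le_rpow hr_large ht]
  obtain ⟨k, hk, hk'⟩ := exists_nat_pow_near (one_le_one_div (by positivity) hr_small.le)
    (show 1 < 36 * (Y : ℝ) ^ 2 by nlinarith)
  rw [le_div_iff₀' (by positivity)] at hk
  rw [div_lt_iff₀ (by positivity)] at hk'
  have card_inv_le : ((B.card : ℝ) ^ (k + 1))⁻¹ ≤ (2 * r) ^ t := by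
    rw [inv_le_iff_one_le_mul₀ (by positivity)]
    calc 1 ≤ ((36 * (Y : ℝ) ^ 2) ^ (k + 1) * (2 * r)) ^ t := one_le_rpow hk'.le ht
      _ = ((36 * (Y : ℝ) ^ 2) ^ t) ^ (k + 1) * (2 * r) ^ t := by
        rw [mul_rpow (by positivity) (by positivity), rpow_pow_comm (by positivity)]
      _ ≤ (2 * r) ^ t * B.card ^ (k + 1) := by rw [mul_comm]; gcongr
  calc ν S ≤ ((B.card : ENNReal) ^ k)⁻¹ * 2 := hν.measure_le_two_mul hSm hS hk
    _ = ENNReal.ofReal (((B.card : ℝ) ^ k)⁻¹ * 2) := by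
      rw [ENNReal.ofReal_mul (by positivity), ENNReal.ofReal_inv_of_pos (by positivity),
        ENNReal.ofReal_pow (by positivity), ENNReal.ofReal_natCast, ENNReal.ofReal_ofNat]
    _ = ENNReal.ofReal (2 * B.card * ((B.card : ℝ) ^ (k + 1))⁻¹) := by
      congr 1
      rw [pow_succ]
      field_simp
    _ ≤ ENNReal.ofReal (2 * B.card * (2 * r) ^ t) := by gcongr

theorem ae_forall_exists_mem_pow (hν : IsDigitMeasure Y B ν) :
    ∀ᵐ x ∂ν, ∀ k, ∃ G ∈ B ^ k, x ∈ mobius G '' Set.Icc 0 1 := by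
  have := hν.isProbabilityMeasure
  refine ae_all_iff.2 fun k ↦ ?_
  rw [hν.eq_averageMeasure_pow k]
  refine Measure.ae_smul_measure ?_ _
  rw [ae_iff, Measure.finsetSum_apply, Finset.sum_eq_zero]
  intro G hG
  have image_closed : IsClosed (mobius G '' Set.Icc 0 1) :=
    (isCompact_Icc.image_of_continuousOn
      (isAdmissible_of_mem_pow hν.isDigit hG).continuousOn_mobius).isClosed
  have image_full : ∀ᵐ x ∂ν.map (mobius G), x ∈ mobius G '' Set.Icc 0 1 := by
    refine (ae_map_iff (measurable_mobius G).aemeasurable image_closed.measurableSet).2 ?_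
    filter_upwards [hν.ae_mem_Icc] with x hx using Set.mem_image_of_mem _ hx
  exact measure_mono_null (fun x hx hmem ↦ hx ⟨G, hG, hmem⟩) image_full

end IsDigitMeasure

theorem one_div_le_abs_mul_mobius_sub {G : Matrix (Fin 2) (Fin 2) ℕ} (hG : IsAdmissible G)
    (hx : x ∈ Set.Icc (0 : ℝ) 1) {q p : ℤ} (hq : 0 < q) (hqc : q < G 1 0) :
    1 / (2 * (G 1 1 : ℝ)) ≤ |q * mobius G x - p| := by
  have denom_pos := hG.mobiusDenom_pos hx.1
  set u : ℤ := G 1 1 * p - G 0 1 * q with hu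
  set v : ℤ := G 0 0 * q - G 1 0 * p with hv
  have sub_eq : q * mobius G x - p = (x * v - u) / mobiusDenom G x := by
    rw [hu, hv, eq_div_iff denom_pos.ne', mobius, sub_mul, mul_assoc,
      div_mul_cancel₀ _ denom_pos.ne', mobiusDenom]
    push_cast
    ring
  have q_eq : q = G 1 0 * u + G 1 1 * v := by
    have det := hG.det
    zify at det
    rw [hu, hv]
    linear_combination (-q) * det
  have c_le_d : (G 1 0 : ℤ) ≤ G 1 1 := mod_cast hG.c_le_d
  have one_le : (1 : ℝ) ≤ |x * v - u| := by
    rcases lt_trichotomy u 0 with hu0 | hu0 | hu0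
    · have hv0 : 0 < v := by
        by_contra! hv0
        nlinarith
      have : (u : ℝ) ≤ -1 := mod_cast (by omega : u ≤ -1)
      have : 0 ≤ x * v := mul_nonneg hx.1 (by exact_mod_cast hv0.le)
      exact le_abs.2 (.inl (by linarith))
    · have hv0 : 0 < v := by
        by_contra! hv0
        nlinarith
      nlinarith
    · have hv0 : v < 0 := by
        by_contra! hv0
        nlinarith
      have : (1 : ℝ) ≤ u := mod_cast hu0
      have : x * v ≤ 0 := mul_nonpos_of_nonneg_of_nonpos hx.1 (by exact_mod_cast hv0.le)
      exact le_abs.2 (.inr (by linarith))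
  rw [sub_eq, abs_div, abs_of_pos denom_pos]
  gcongr
  exact hG.mobiusDenom_le hx.2

theorem exists_mem_image_mobius_mul (hB : ∀ g ∈ B, IsDigit Y g)
    (hx : ∀ k, ∃ G ∈ B ^ k, x ∈ mobius G '' Set.Icc 0 1) {k : ℕ}
    {G : Matrix (Fin 2) (Fin 2) ℕ} (hG : G ∈ B ^ k) (hxG : x ∈ mobius G '' Set.Icc 0 1) :
    ∃ g ∈ B, x ∈ mobius (G * g) '' Set.Icc 0 1 := by
  obtain ⟨H, hH, θ, hθ, rfl⟩ := hx (k + 1)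
  obtain ⟨θ', hθ', heq⟩ := hxG
  rw [pow_succ, Finset.mem_mul] at hH
  obtain ⟨G', hG', g, hg, rfl⟩ := hH
  have adm_g := (hB g hg).isAdmissible
  obtain rfl : G = G' := eq_of_mobius_eq_of_mem_pow hB hG hG' hθ' (adm_g.mapsTo_mobius hθ)
    (heq.trans ((isAdmissible_of_mem_pow hB hG').mobius_mul adm_g hθ))
  exact ⟨g, hg, θ, hθ, rfl⟩

theorem exists_d_le_lt_d_mul (hB : ∀ g ∈ B, IsDigit Y g) (hY : 1 ≤ Y)
    (hx : ∀ k, ∃ G ∈ B ^ k, x ∈ mobius G '' Set.Icc 0 1) {q : ℕ} (hq : 0 < q) :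
    ∃ k, ∃ G ∈ B ^ k, ∃ g ∈ B, x ∈ mobius (G * g) '' Set.Icc 0 1 ∧
      G 1 1 ≤ q ∧ q < (G * g) 1 1 := by
  by_contra! no_crossing
  have small (k : ℕ) : ∃ G ∈ B ^ k, x ∈ mobius G '' Set.Icc 0 1 ∧ G 1 1 ≤ q := by
    induction k with
    | zero =>
      obtain ⟨G, hG, hxG⟩ := hx 0
      exact ⟨G, hG, hxG, (d_le_pow hB hG).trans (by rwa [pow_zero])⟩
    | succ k ih =>
      obtain ⟨G, hG, hxG, hGq⟩ := ih
      obtain ⟨g, hg, hxg⟩ := exists_mem_image_mobius_mul hB hx hG hxG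
      exact ⟨G * g, pow_succ B k ▸ Finset.mul_mem_mul hG hg, hxg,
        no_crossing k G hG g hg hxg hGq⟩
  obtain ⟨G, hG, -, hGq⟩ := small q
  have : q < G 1 1 := calc
    q < 2 ^ q := Nat.lt_two_pow_self
    _ ≤ (2 * Y) ^ q := by gcongr; omega
    _ ≤ G 1 1 := pow_le_d hB hG
  omega

theorem one_div_le_abs_mul_sub_of_forall_mem_image (hB : ∀ g ∈ B, IsDigit Y g) (hY : 1 ≤ Y)
    (hx : ∀ k, ∃ G ∈ B ^ k, x ∈ mobius G '' Set.Icc 0 1) {q : ℕ} (hq : 0 < q) (p : ℤ) :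
    1 / (72 * (Y : ℝ) ^ 2 * q) ≤ |q * x - p| := by
  obtain ⟨k, G, hG, g, hg, hxg, hGq, hqg⟩ := exists_d_le_lt_d_mul hB hY hx hq
  have hGg : G * g ∈ B ^ (k + 1) := pow_succ B k ▸ Finset.mul_mem_mul hG hg
  have adm_Gg := isAdmissible_of_mem_pow hB hGg
  obtain ⟨h, hh, θ, hθ, rfl⟩ := exists_mem_image_mobius_mul hB hx hGg hxg
  have adm := (hB h hh).isAdmissible_mul adm_Gg
  have q_lt_c : (q : ℤ) < (G * g * h) 1 0 := by
    have : 1 ≤ h 1 1 := (hB h hh).d_pos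
    have := (hB h hh).lt_c
    have : q < (G * g) 1 0 * h 0 0 + (G * g) 1 1 * h 1 0 := by nlinarith
    rw [Matrix.mul_apply, Fin.sum_univ_two]
    exact_mod_cast this
  have d_le : ((G * g * h) 1 1 : ℝ) ≤ 36 * Y ^ 2 * q := by
    have : (G * g * h) 1 1 ≤ 36 * Y ^ 2 * q := calc
      (G * g * h) 1 1 ≤ 6 * Y * (G * g) 1 1 := d_mul_le hB adm_Gg hh
      _ ≤ 6 * Y * (6 * Y * q) := by
        gcongr
        exact (d_mul_le hB (isAdmissible_of_mem_pow hB hG) hg).trans (by gcongr)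
      _ = 36 * Y ^ 2 * q := by ring
    exact_mod_cast this
  have d_pos : (0 : ℝ) < (G * g * h) 1 1 := mod_cast adm.d_pos
  refine le_trans ?_ (one_div_le_abs_mul_mobius_sub adm hθ (q := q) (p := p)
    (mod_cast hq) q_lt_c)
  exact one_div_le_one_div_of_le (by positivity) (by linarith)

end Digits

/-! ### The first-derivative test for oscillatory integrals -/

theorem hasDerivAt_fourierChar_comp {φ : ℝ → ℝ} {φ' x : ℝ} (hφ : HasDerivAt φ φ' x) :
    HasDerivAt (fun y ↦ (𝐞 (φ y) : ℂ)) (2 * π * Complex.I * φ' * 𝐞 (φ x)) x := by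
  refine ((Real.hasDerivAt_fourierChar (φ x)).scomp x hφ).congr_deriv ?_
  rw [Complex.real_smul]
  ring

theorem two_pi_I_mul_integral_fourierChar_eq {a b : ℝ} {φ φ' φ'' : ℝ → ℝ}
    (hφ : ∀ x ∈ Set.uIcc a b, HasDerivAt φ (φ' x) x)
    (hφ' : ∀ x ∈ Set.uIcc a b, HasDerivAt φ' (φ'' x) x) (hcont : ContinuousOn φ'' (Set.uIcc a b))
    (ne_zero : ∀ x ∈ Set.uIcc a b, φ' x ≠ 0) :
    2 * π * Complex.I * ∫ x in a..b, (𝐞 (φ x) : ℂ) =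
      ((φ' b)⁻¹ : ℝ) * 𝐞 (φ b) - ((φ' a)⁻¹ : ℝ) * 𝐞 (φ a) -
        ∫ x in a..b, ((-φ'' x / φ' x ^ 2 : ℝ) : ℂ) * 𝐞 (φ x) := by
  have φ_cont : ContinuousOn φ (Set.uIcc a b) :=
    fun x hx ↦ (hφ x hx).continuousAt.continuousWithinAt
  have φ'_cont : ContinuousOn φ' (Set.uIcc a b) :=
    fun x hx ↦ (hφ' x hx).continuousAt.continuousWithinAt
  have char_cont : ContinuousOn (fun x ↦ (𝐞 (φ x) : ℂ)) (Set.uIcc a b) :=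
    (continuous_subtype_val.comp Real.continuous_fourierChar).comp_continuousOn φ_cont
  rw [← intervalIntegral.integral_const_mul, ← intervalIntegral.integral_mul_deriv_eq_deriv_mul
    (u := fun x ↦ (((φ' x)⁻¹ : ℝ) : ℂ)) (v' := fun x ↦ 2 * π * Complex.I * φ' x * 𝐞 (φ x))
    (fun x hx ↦ ((hφ' x hx).inv (ne_zero x hx)).ofReal_comp)
    (fun x hx ↦ hasDerivAt_fourierChar_comp (hφ x hx))
    (ContinuousOn.intervalIntegrable <| Complex.continuous_ofReal.comp_continuousOn <|
      hcont.neg.div (φ'_cont.pow 2) fun x hx ↦ pow_ne_zero _ (ne_zero x hx))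
    (ContinuousOn.intervalIntegrable <| (continuousOn_const.mul <|
      Complex.continuous_ofReal.comp_continuousOn φ'_cont).mul char_cont)]
  refine intervalIntegral.integral_congr fun x hx ↦ ?_
  have : (φ' x : ℂ) ≠ 0 := mod_cast ne_zero x hx
  push_cast
  field_simp

theorem norm_integral_fourierChar_le {a b : ℝ} (hab : a ≤ b) {φ φ' φ'' : ℝ → ℝ} {l L : ℝ}
    (hl : 0 < l) (hφ : ∀ x ∈ Set.Icc a b, HasDerivAt φ (φ' x) x)
    (hφ' : ∀ x ∈ Set.Icc a b, HasDerivAt φ' (φ'' x) x) (hcont : ContinuousOn φ'' (Set.Icc a b))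
    (le_deriv : ∀ x ∈ Set.Icc a b, l ≤ |φ' x|) (deriv2_le : ∀ x ∈ Set.Icc a b, |φ'' x| ≤ L) :
    ‖∫ x in a..b, (𝐞 (φ x) : ℂ)‖ ≤ (2 / l + (b - a) * (L / l ^ 2)) / (2 * π) := by
  have boundary : ∀ x ∈ Set.Icc a b, ‖(((φ' x)⁻¹ : ℝ) : ℂ) * 𝐞 (φ x)‖ ≤ 1 / l := fun x hx ↦ by
    rw [norm_mul, Circle.norm_coe, mul_one, Complex.norm_real, norm_inv, ← one_div]
    exact one_div_le_one_div_of_le hl (le_deriv x hx)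
  have remainder : ‖∫ x in a..b, ((-φ'' x / φ' x ^ 2 : ℝ) : ℂ) * 𝐞 (φ x)‖ ≤
      (b - a) * (L / l ^ 2) := by
    rw [mul_comm (b - a), ← abs_of_nonneg (sub_nonneg.2 hab)]
    refine intervalIntegral.norm_integral_le_of_norm_le_const fun x hx ↦ ?_
    have hx : x ∈ Set.Icc a b := Set.Ioc_subset_Icc_self (Set.uIoc_of_le hab ▸ hx)
    rw [norm_mul, Circle.norm_coe, mul_one, Complex.norm_real, norm_div, norm_neg, norm_pow]
    exact div_le_div₀ ((abs_nonneg _).trans (deriv2_le x hx)) (deriv2_le x hx) (by positivity)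
      (pow_le_pow_left₀ hl.le (le_deriv x hx) 2)
  rw [← Set.uIcc_of_le hab] at hφ hφ' hcont
  have norm_eq := congr_arg norm <| two_pi_I_mul_integral_fourierChar_eq hφ hφ' hcont fun x hx ↦
    abs_pos.1 (hl.trans_le (le_deriv x (Set.uIcc_of_le hab ▸ hx)))
  rw [norm_mul, norm_mul, norm_mul, Complex.norm_I, Complex.norm_real, Complex.norm_ofNat, mul_one,
    Real.norm_of_nonneg pi_pos.le] at norm_eq
  rw [le_div_iff₀' (by positivity), norm_eq]
  refine (norm_sub_le _ _).trans (add_le_add ((norm_sub_le _ _).trans ?_) remainder)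
  linarith [boundary a (Set.left_mem_Icc.2 hab), boundary b (Set.right_mem_Icc.2 hab),
    show 2 / l = 1 / l + 1 / l by ring]

theorem hasDerivAt_mobiusDenom (G : Matrix (Fin 2) (Fin 2) ℕ) (x : ℝ) :
    HasDerivAt (mobiusDenom G) (G 1 0) x :=
  (((hasDerivAt_id x).const_mul (G 1 0 : ℝ)).add_const (G 1 1 : ℝ)).congr_deriv (mul_one _)

namespace IsAdmissible

variable {G H : Matrix (Fin 2) (Fin 2) ℕ} {x : ℝ}

theorem hasDerivAt_mobius (hG : IsAdmissible G) (hx : 0 ≤ x) :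
    HasDerivAt (mobius G) (1 / mobiusDenom G x ^ 2) x := by
  have det : (G 0 0 : ℝ) * G 1 1 = G 0 1 * G 1 0 + 1 := mod_cast hG.det
  have num : HasDerivAt (fun y : ℝ ↦ G 0 0 * y + G 0 1) (G 0 0 : ℝ) x :=
    (((hasDerivAt_id x).const_mul (G 0 0 : ℝ)).add_const (G 0 1 : ℝ)).congr_deriv (mul_one _)
  refine (num.div (hasDerivAt_mobiusDenom G x) (hG.mobiusDenom_pos hx).ne').congr_deriv ?_
  congr 1
  unfold mobiusDenom
  linear_combination det

theorem hasDerivAt_one_div_mobiusDenom_sq (hG : IsAdmissible G) (hx : 0 ≤ x) :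
    HasDerivAt (fun y ↦ 1 / mobiusDenom G y ^ 2) (-(2 * G 1 0 / mobiusDenom G x ^ 3)) x := by
  have denom_ne := (hG.mobiusDenom_pos hx).ne'
  simp only [one_div]
  refine (((hasDerivAt_mobiusDenom G x).pow 2).inv (pow_ne_zero 2 denom_ne)).congr_deriv ?_
  simp only [Pi.pow_apply]
  push_cast
  field_simp

theorem le_abs_one_div_mobiusDenom_sq_sub (hG : IsAdmissible G) (hH : IsAdmissible H)
    (hx : x ∈ Set.Icc (0 : ℝ) 1) {D : ℝ} (hGD : G 1 1 ≤ D) (hHD : H 1 1 ≤ D) :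
    |mobiusDenom H x - mobiusDenom G x| / (8 * D ^ 3) ≤
      |1 / mobiusDenom G x ^ 2 - 1 / mobiusDenom H x ^ 2| := by
  have G_le : mobiusDenom G x ≤ 2 * D := (hG.mobiusDenom_le hx.2).trans (by linarith)
  have H_le : mobiusDenom H x ≤ 2 * D := (hH.mobiusDenom_le hx.2).trans (by linarith)
  have G_pos := hG.mobiusDenom_pos hx.1
  have H_pos := hH.mobiusDenom_pos hx.1
  set u := mobiusDenom G x
  set v := mobiusDenom H x
  have D_pos : 0 < D := by linarith
  have factor : 1 / u ^ 2 - 1 / v ^ 2 = (v - u) * ((u + v) / (u ^ 2 * v ^ 2)) := by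
    field_simp
    ring
  have le_factor : 1 / (8 * D ^ 3) ≤ (u + v) / (u ^ 2 * v ^ 2) := calc
    1 / (8 * D ^ 3) = 1 / ((2 * D) * (2 * D) ^ 2) := by ring
    _ ≤ 1 / (u * v ^ 2) := by gcongr
    _ = u / (u ^ 2 * v ^ 2) := by field_simp
    _ ≤ (u + v) / (u ^ 2 * v ^ 2) := by gcongr; linarith
  rw [factor, abs_mul, abs_of_pos (by positivity : 0 < (u + v) / (u ^ 2 * v ^ 2)),
    ← mul_one_div]
  gcongr

theorem two_mul_c_div_le (hG : IsAdmissible G) (hx : 0 ≤ x) {D : ℝ} (hD : 0 < D)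
    (hDG : D ≤ G 1 1) : 2 * G 1 0 / mobiusDenom G x ^ 3 ≤ 2 / D ^ 2 := by
  have denom_pos := hG.mobiusDenom_pos hx
  have d_le : (G 1 1 : ℝ) ≤ mobiusDenom G x := le_mobiusDenom hx
  have c_le : (G 1 0 : ℝ) ≤ mobiusDenom G x := (Nat.cast_le.2 hG.c_le_d).trans d_le
  calc 2 * G 1 0 / mobiusDenom G x ^ 3
      ≤ 2 * mobiusDenom G x / mobiusDenom G x ^ 3 := by gcongr
    _ = 2 / mobiusDenom G x ^ 2 := by field_simp
    _ ≤ 2 / D ^ 2 := by gcongr; exact hDG.trans d_le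

theorem abs_neg_two_mul_c_div_sub_le (hG : IsAdmissible G) (hH : IsAdmissible H) (hx : 0 ≤ x)
    {D : ℝ} (hD : 0 < D) (hDG : D ≤ G 1 1) (hDH : D ≤ H 1 1) :
    |-(2 * G 1 0 / mobiusDenom G x ^ 3 : ℝ) - -(2 * H 1 0 / mobiusDenom H x ^ 3)| ≤ 2 / D ^ 2 := by
  have nonneg {K : Matrix (Fin 2) (Fin 2) ℕ} (hK : IsAdmissible K) :
      0 ≤ (2 * K 1 0 / mobiusDenom K x ^ 3 : ℝ) := by
    have := hK.mobiusDenom_pos hx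
    positivity
  have G_le := two_mul_c_div_le hG hx hD hDG
  have H_le := two_mul_c_div_le hH hx hD hDH
  rw [neg_sub_neg]
  exact abs_sub_le_of_nonneg_of_le (nonneg hH) H_le (nonneg hG) G_le

theorem continuousOn_neg_two_mul_c_div (hG : IsAdmissible G) :
    ContinuousOn (fun x ↦ -(2 * G 1 0 / mobiusDenom G x ^ 3 : ℝ)) (Set.Icc 0 1) :=
  (continuousOn_const.div (by unfold mobiusDenom; fun_prop) fun _ hx ↦
    pow_ne_zero 3 (hG.mobiusDenom_pos hx.1).ne').neg

theorem norm_integral_fourierChar_mobius_sub_le (hG : IsAdmissible G) (hH : IsAdmissible H)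
    {n D₀ D₁ η : ℝ} (hn : 0 < n) (hD₀ : 0 < D₀) (hη : 0 < η)
    (hGD₀ : D₀ ≤ G 1 1) (hHD₀ : D₀ ≤ H 1 1) (hGD₁ : G 1 1 ≤ D₁) (hHD₁ : H 1 1 ≤ D₁)
    (hGH : ∀ x ∈ Set.Icc (0 : ℝ) 1, η ≤ |mobiusDenom H x - mobiusDenom G x|) :
    ‖∫ x in (0 : ℝ)..1, (𝐞 (n * mobius G x - n * mobius H x) : ℂ)‖ ≤
      (8 * D₁ ^ 3 / η + 64 * D₁ ^ 6 / (D₀ ^ 2 * η ^ 2)) / n := by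
  have D₁_pos : 0 < D₁ := by linarith
  have le_deriv : ∀ x ∈ Set.Icc (0 : ℝ) 1, n * (η / (8 * D₁ ^ 3)) ≤
      |n * (1 / mobiusDenom G x ^ 2) - n * (1 / mobiusDenom H x ^ 2)| := fun x hx ↦ by
    rw [← mul_sub, abs_mul, abs_of_pos hn]
    refine mul_le_mul_of_nonneg_left (le_trans ?_
      (le_abs_one_div_mobiusDenom_sq_sub hG hH hx hGD₁ hHD₁)) hn.le
    have := hGH x hx
    gcongr
  have deriv2_le : ∀ x ∈ Set.Icc (0 : ℝ) 1, |n * -(2 * G 1 0 / mobiusDenom G x ^ 3) -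
      n * -(2 * H 1 0 / mobiusDenom H x ^ 3)| ≤ n * (2 / D₀ ^ 2) := fun x hx ↦ by
    rw [← mul_sub, abs_mul, abs_of_pos hn]
    exact mul_le_mul_of_nonneg_left
      (abs_neg_two_mul_c_div_sub_le hG hH hx.1 hD₀ hGD₀ hHD₀) hn.le
  refine (norm_integral_fourierChar_le zero_le_one (by positivity)
    (fun x hx ↦ ((hG.hasDerivAt_mobius hx.1).const_mul n).sub
      ((hH.hasDerivAt_mobius hx.1).const_mul n))
    (fun x hx ↦ ((hG.hasDerivAt_one_div_mobiusDenom_sq hx.1).const_mul n).sub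
      ((hH.hasDerivAt_one_div_mobiusDenom_sq hx.1).const_mul n))
    ((hG.continuousOn_neg_two_mul_c_div.const_mul n).sub
      (hH.continuousOn_neg_two_mul_c_div.const_mul n))
    le_deriv deriv2_le).trans ?_
  have two_le : (2 : ℝ) ≤ 2 * π := by linarith [pi_gt_three]
  calc (2 / (n * (η / (8 * D₁ ^ 3))) + (1 - 0) * (n * (2 / D₀ ^ 2) /
        (n * (η / (8 * D₁ ^ 3))) ^ 2)) / (2 * π)
      ≤ (2 / (n * (η / (8 * D₁ ^ 3))) + (1 - 0) * (n * (2 / D₀ ^ 2) /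
        (n * (η / (8 * D₁ ^ 3))) ^ 2)) / 2 := by gcongr
    _ = (8 * D₁ ^ 3 / η + 64 * D₁ ^ 6 / (D₀ ^ 2 * η ^ 2)) / n := by
      field_simp
      ring

end IsAdmissible

/-! ### Fourier decay of a digit measure -/

section General

theorem continuous_coe_fourierChar : Continuous fun x : ℝ ↦ (𝐞 x : ℂ) :=
  continuous_subtype_val.comp Real.continuous_fourierChar

theorem measurable_coe_fourierChar : Measurable fun x : ℝ ↦ (𝐞 x : ℂ) :=
  continuous_coe_fourierChar.measurable

variable {X : Type*} [MeasurableSpace X] (μ : Measure X)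

theorem integrable_fourierChar_comp [IsFiniteMeasure μ] {φ : X → ℝ} (hφ : Measurable φ) :
    Integrable (fun x ↦ (𝐞 (φ x) : ℂ)) μ :=
  .of_bound (measurable_coe_fourierChar.comp hφ).aestronglyMeasurable 1 <|
    .of_forall fun _ ↦ (Circle.norm_coe _).le

theorem norm_integral_fourierChar_comp_le_one [IsProbabilityMeasure μ] (φ : X → ℝ) :
    ‖∫ x, (𝐞 (φ x) : ℂ) ∂μ‖ ≤ 1 := by
  simpa using norm_integral_le_of_norm_le_const (μ := μ) (C := 1)
    (.of_forall fun x ↦ (Circle.norm_coe (𝐞 (φ x))).le)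

theorem integral_norm_sq_sum_fourierChar_le [IsFiniteMeasure μ] {ι : Type*} (T : Finset ι)
    {φ : ι → X → ℝ} (hφ : ∀ i, Measurable (φ i)) :
    ∫ x, ‖∑ i ∈ T, (𝐞 (φ i x) : ℂ)‖ ^ 2 ∂μ ≤
      ∑ i ∈ T, ∑ j ∈ T, ‖∫ x, (𝐞 (φ i x - φ j x) : ℂ) ∂μ‖ := by
  have integrable i j : Integrable (fun x ↦ (𝐞 (φ i x - φ j x) : ℂ)) μ :=
    integrable_fourierChar_comp μ ((hφ i).sub (hφ j))
  have expand x : ((‖∑ i ∈ T, (𝐞 (φ i x) : ℂ)‖ ^ 2 : ℝ) : ℂ) =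
      ∑ i ∈ T, ∑ j ∈ T, (𝐞 (φ i x - φ j x) : ℂ) := by
    simpa using ofReal_norm_sq_sum_mul_fourierChar T 1 (φ · x)
  calc ∫ x, ‖∑ i ∈ T, (𝐞 (φ i x) : ℂ)‖ ^ 2 ∂μ
      = ‖∫ x, ((‖∑ i ∈ T, (𝐞 (φ i x) : ℂ)‖ ^ 2 : ℝ) : ℂ) ∂μ‖ := by
        exact ((congrArg norm integral_ofReal).trans <| (Complex.norm_real _).trans <|
          Real.norm_of_nonneg <| integral_nonneg fun _ ↦ by positivity).symm
    _ = ‖∑ i ∈ T, ∑ j ∈ T, ∫ x, (𝐞 (φ i x - φ j x) : ℂ) ∂μ‖ := by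
        simp_rw [expand]
        rw [integral_finsetSum _ fun i _ ↦ integrable_finsetSum _ fun j _ ↦ integrable i j]
        simp_rw [integral_finsetSum _ fun j _ ↦ integrable _ j]
    _ ≤ _ := norm_sum_le_of_le _ fun i _ ↦ norm_sum_le _ _

theorem norm_sq_le_of_norm_sub_le {E : Type*} [NormedAddCommGroup E] {F : ℝ → E} {a b K x : ℝ}
    (hab : a < b) (hF : ContinuousOn F (Set.Icc a b))
    (hK : ∀ y ∈ Set.Icc a b, ‖F x - F y‖ ≤ K) :
    ‖F x‖ ^ 2 ≤ 2 / (b - a) * (∫ y in Set.Icc a b, ‖F y‖ ^ 2) + 2 * K ^ 2 := by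
  have integrable : IntegrableOn (fun y ↦ ‖F y‖ ^ 2) (Set.Icc a b) :=
    (hF.norm.pow 2).integrableOn_Icc
  have const_integrable (c : ℝ) : IntegrableOn (fun _ ↦ c) (Set.Icc a b) :=
    continuousOn_const.integrableOn_Icc
  have pointwise : ∀ y ∈ Set.Icc a b, ‖F x‖ ^ 2 ≤ 2 * ‖F y‖ ^ 2 + 2 * K ^ 2 := fun y hy ↦ by
    have : ‖F x‖ ≤ ‖F y‖ + K := by
      linarith [norm_le_norm_add_norm_sub' (F x) (F y), hK y hy]
    calc ‖F x‖ ^ 2 ≤ (‖F y‖ + K) ^ 2 := by gcongr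
      _ ≤ 2 * ‖F y‖ ^ 2 + 2 * K ^ 2 := by nlinarith [sq_nonneg (‖F y‖ - K)]
  have integrated : ∫ _ in Set.Icc a b, ‖F x‖ ^ 2 ≤
      ∫ y in Set.Icc a b, (2 * ‖F y‖ ^ 2 + 2 * K ^ 2) := setIntegral_mono_on (const_integrable _)
    ((integrable.const_mul 2).add (const_integrable _)) measurableSet_Icc pointwise
  have length_pos : 0 < b - a := sub_pos.2 hab
  rw [integral_add (integrable.const_mul 2) (const_integrable _), integral_const_mul,
    setIntegral_const, setIntegral_const, Real.volume_real_Icc_of_le hab.le, smul_eq_mul,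
    smul_eq_mul] at integrated
  refine le_of_mul_le_mul_left (integrated.trans (le_of_eq ?_)) length_pos
  field_simp

end General

section Cylinders

variable {Y : ℕ} {B : Finset (Matrix (Fin 2) (Fin 2) ℕ)} {ν : Measure ℝ} {k : ℕ}
  {G : Matrix (Fin 2) (Fin 2) ℕ}

theorem one_div_le_mobius_one_sub_mobius_zero_of_mem_pow (hB : ∀ g ∈ B, IsDigit Y g)
    (hG : G ∈ B ^ k) : 1 / (2 * ((6 * Y : ℝ) ^ k) ^ 2) ≤ mobius G 1 - mobius G 0 := by
  have adm := isAdmissible_of_mem_pow hB hG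
  have d_pos : (0 : ℝ) < G 1 1 := mod_cast adm.d_pos
  have d_le : (G 1 1 : ℝ) ≤ (6 * Y) ^ k := mod_cast d_le_pow hB hG
  exact le_trans (by gcongr) (one_div_le_mobius_one_sub_mobius_zero adm)

theorem abs_mobius_sub_le_of_mem_pow (hB : ∀ g ∈ B, IsDigit Y g) (hY : 1 ≤ Y) (hG : G ∈ B ^ k)
    {x y : ℝ} (hx : 0 ≤ x) (hy : 0 ≤ y) :
    |mobius G x - mobius G y| ≤ |x - y| / ((2 * Y : ℝ) ^ k) ^ 2 := by
  have adm := isAdmissible_of_mem_pow hB hG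
  have d_ge : (2 * Y : ℝ) ^ k ≤ G 1 1 := mod_cast pow_le_d hB hG
  have denom_pos := adm.mobiusDenom_pos hx
  have denom_pos' := adm.mobiusDenom_pos hy
  have : (0 : ℝ) < Y := mod_cast hY
  rw [adm.mobius_sub hx hy, abs_div, abs_of_pos (mul_pos denom_pos denom_pos'), sq]
  gcongr
  · exact d_ge.trans (IsAdmissible.le_mobiusDenom hx)
  · exact d_ge.trans (IsAdmissible.le_mobiusDenom hy)

theorem Icc_mobius_subset (hG : IsAdmissible G) :
    Set.Icc (mobius G 0) (mobius G 1) ⊆ Set.Icc 0 1 :=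
  Set.Icc_subset_Icc (hG.mapsTo_mobius (Set.left_mem_Icc.2 zero_le_one)).1
    (hG.mapsTo_mobius (Set.right_mem_Icc.2 zero_le_one)).2

theorem pairwiseDisjoint_Icc_mobius (hB : ∀ g ∈ B, IsDigit Y g) (k : ℕ) :
    (↑(B ^ k) : Set (Matrix (Fin 2) (Fin 2) ℕ)).PairwiseDisjoint
      fun G ↦ Set.Icc (mobius G 0) (mobius G 1) := by
  intro G hG H hH hne
  rw [Function.onFun, Set.disjoint_left]
  intro y hyG hyH
  rcases le_total (mobius G 0) (mobius H 0) with hle | hle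
  · exact (mobius_lt_mobius_of_ne hB hG hH hne hle (x := 1) (y := 0) (by simp)
      (by simp)).not_ge (hyH.1.trans hyG.2)
  · exact (mobius_lt_mobius_of_ne hB hH hG hne.symm hle (x := 1) (y := 0) (by simp)
      (by simp)).not_ge (hyG.1.trans hyH.2)

theorem sum_setIntegral_Icc_mobius_le (hB : ∀ g ∈ B, IsDigit Y g) (k : ℕ) {f : ℝ → ℝ}
    (hf : IntegrableOn f (Set.Icc 0 1)) (f_nonneg : ∀ x, 0 ≤ f x) :
    ∑ G ∈ B ^ k, ∫ x in Set.Icc (mobius G 0) (mobius G 1), f x ≤ ∫ x in Set.Icc 0 1, f x := by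
  have subset : ∀ G ∈ B ^ k, Set.Icc (mobius G 0) (mobius G 1) ⊆ Set.Icc 0 1 := fun G hG ↦
    Icc_mobius_subset (isAdmissible_of_mem_pow hB hG)
  rw [← integral_biUnion_finset _ (fun _ _ ↦ measurableSet_Icc) (pairwiseDisjoint_Icc_mobius hB k)
    fun G hG ↦ hf.mono_set (subset G hG)]
  exact setIntegral_mono_set hf (.of_forall f_nonneg) (Set.iUnion₂_subset subset).eventuallyLE

namespace IsDigitMeasure

theorem norm_sq_integral_comp_mobius_le (hν : IsDigitMeasure Y B ν) (hY : 1 ≤ Y)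
    (hG : G ∈ B ^ k) {F : ℝ → ℂ} {L : NNReal} (hF : LipschitzOnWith L F (Set.Icc 0 1)) :
    ‖∫ x, F (mobius G x) ∂ν‖ ^ 2 ≤
      4 * ((6 * Y : ℝ) ^ k) ^ 2 * (∫ x in Set.Icc (mobius G 0) (mobius G 1), ‖F x‖ ^ 2) +
        2 * (L / ((2 * Y : ℝ) ^ k) ^ 2) ^ 2 := by
  have := hν.isProbabilityMeasure
  have : (0 : ℝ) < Y := mod_cast hY
  have adm := isAdmissible_of_mem_pow hν.isDigit hG
  have mono := adm.strictMonoOn_mobius.monotoneOn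
  have length_ge := one_div_le_mobius_one_sub_mobius_zero_of_mem_pow hν.isDigit hG
  have length_le : mobius G 1 - mobius G 0 ≤ 1 / ((2 * Y : ℝ) ^ k) ^ 2 :=
    (le_abs_self _).trans <| by
      simpa using abs_mobius_sub_le_of_mem_pow hν.isDigit hY hG zero_le_one le_rfl
  have length_pos : mobius G 0 < mobius G 1 :=
    sub_pos.1 (lt_of_lt_of_le (by positivity) length_ge)
  have subset := Icc_mobius_subset adm
  set I := ∫ x in Set.Icc (mobius G 0) (mobius G 1), ‖F x‖ ^ 2
  have I_nonneg : 0 ≤ I := by positivity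
  have pointwise : ∀ x ∈ Set.Icc (0 : ℝ) 1, ‖F (mobius G x)‖ ^ 2 ≤
      4 * ((6 * Y : ℝ) ^ k) ^ 2 * I + 2 * (L / ((2 * Y : ℝ) ^ k) ^ 2) ^ 2 := fun x hx ↦ by
    have mem : mobius G x ∈ Set.Icc (mobius G 0) (mobius G 1) :=
      ⟨mono Set.self_mem_Ici hx.1 hx.1, mono hx.1 (Set.mem_Ici.2 zero_le_one) hx.2⟩
    refine (norm_sq_le_of_norm_sub_le length_pos (hF.continuousOn.mono subset)
      (K := L * (1 / ((2 * Y : ℝ) ^ k) ^ 2)) fun y hy ↦ ?_).trans ?_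
    · refine (hF.norm_sub_le (subset mem) (subset hy)).trans ?_
      gcongr
      exact (abs_sub_le_of_le_of_le mem.1 mem.2 hy.1 hy.2).trans length_le
    · rw [mul_one_div]
      gcongr
      rw [div_le_iff₀ (sub_pos.2 length_pos)]
      rw [div_le_iff₀ (by positivity)] at length_ge
      linarith
  rw [← Real.le_sqrt (norm_nonneg _) (by positivity)]
  simpa using norm_integral_le_of_norm_le_const
    (hν.ae_mem_Icc.mono fun x hx ↦ Real.le_sqrt_of_sq_le (pointwise x hx))

theorem norm_sq_integral_le (hν : IsDigitMeasure Y B ν) (hY : 1 ≤ Y) (k : ℕ) {F : ℝ → ℂ}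
    (hF : Measurable F) {C : ℝ} (hC : ∀ x, ‖F x‖ ≤ C) {L : NNReal}
    (hL : LipschitzOnWith L F (Set.Icc 0 1)) :
    ‖∫ x, F x ∂ν‖ ^ 2 ≤
      4 * ((6 * Y : ℝ) ^ k) ^ 2 / (B.card : ℝ) ^ k * (∫ x in Set.Icc 0 1, ‖F x‖ ^ 2) +
        2 * (L / ((2 * Y : ℝ) ^ k) ^ 2) ^ 2 := by
  have card_pos : (0 : ℝ) < B.card := mod_cast hν.nonempty.card_pos
  have card_eq : ((B ^ k).card : ℝ) = (B.card : ℝ) ^ k := mod_cast card_pow hν.isDigit k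
  set I := ∫ x in Set.Icc 0 1, ‖F x‖ ^ 2
  set m := (B.card : ℝ) ^ k
  have m_pos : 0 < m := by positivity
  have sum_le : ∑ G ∈ B ^ k, ‖∫ x, F (mobius G x) ∂ν‖ ^ 2 ≤
      4 * ((6 * Y : ℝ) ^ k) ^ 2 * I + m * (2 * (L / ((2 * Y : ℝ) ^ k) ^ 2) ^ 2) := by
    refine (Finset.sum_le_sum fun G hG ↦ hν.norm_sq_integral_comp_mobius_le hY hG hL).trans ?_
    rw [Finset.sum_add_distrib, Finset.sum_const, nsmul_eq_mul, card_eq, ← Finset.mul_sum]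
    gcongr
    exact sum_setIntegral_Icc_mobius_le hν.isDigit k
      (hL.continuousOn.norm.pow 2).integrableOn_Icc fun x ↦ by positivity
  rw [hν.integral_eq_sum k hF hC, norm_smul, mul_pow, Real.norm_of_nonneg (by positivity)]
  calc m⁻¹ ^ 2 * ‖∑ G ∈ B ^ k, ∫ x, F (mobius G x) ∂ν‖ ^ 2
      ≤ m⁻¹ ^ 2 * (∑ G ∈ B ^ k, ‖∫ x, F (mobius G x) ∂ν‖) ^ 2 := by gcongr; exact norm_sum_le _ _
    _ ≤ m⁻¹ ^ 2 * (m * ∑ G ∈ B ^ k, ‖∫ x, F (mobius G x) ∂ν‖ ^ 2) := by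
      rw [← card_eq]
      gcongr
      exact sq_sum_le_card_mul_sum_sq
    _ ≤ m⁻¹ ^ 2 * (m * (4 * ((6 * Y : ℝ) ^ k) ^ 2 * I +
        m * (2 * (L / ((2 * Y : ℝ) ^ k) ^ 2) ^ 2))) := by gcongr
    _ = _ := by field_simp

end IsDigitMeasure

end Cylinders

theorem norm_inv_card_smul_sum_le {ι E : Type*} [NormedAddCommGroup E] [NormedSpace ℝ E]
    {T : Finset ι} {f : ι → E} {C : ℝ} (hC : 0 ≤ C) (hf : ∀ i ∈ T, ‖f i‖ ≤ C) :
    ‖(T.card : ℝ)⁻¹ • ∑ i ∈ T, f i‖ ≤ C := by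
  rw [norm_smul, norm_inv, Real.norm_natCast]
  refine inv_mul_le_of_le_mul₀ (Nat.cast_nonneg _) hC ?_
  simpa using norm_sum_le_of_le T hf

/-- The average of `𝐞 (n * mobius (G * h) x)` over the words `G` of length `s` in `B`: the words of
length `2 * s` ending with the word `h` contribute this function to the Fourier transform at `n` of
a digit measure. -/
noncomputable def wordAverage (B : Finset (Matrix (Fin 2) (Fin 2) ℕ)) (s : ℕ)
    (h : Matrix (Fin 2) (Fin 2) ℕ) (n x : ℝ) : ℂ :=
  ((B ^ s).card : ℝ)⁻¹ • ∑ G ∈ B ^ s, (𝐞 (n * mobius (G * h) x) : ℂ)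

section WordAverage

variable {Y : ℕ} {B : Finset (Matrix (Fin 2) (Fin 2) ℕ)} {ν : Measure ℝ} {s : ℕ}
  {G H h : Matrix (Fin 2) (Fin 2) ℕ} {n : ℝ}

theorem measurable_fourierChar_mobius (n : ℝ) (G : Matrix (Fin 2) (Fin 2) ℕ) :
    Measurable fun x ↦ (𝐞 (n * mobius G x) : ℂ) :=
  measurable_coe_fourierChar.comp ((measurable_mobius G).const_mul n)

theorem measurable_wordAverage (B : Finset (Matrix (Fin 2) (Fin 2) ℕ)) (s : ℕ)
    (h : Matrix (Fin 2) (Fin 2) ℕ) (n : ℝ) : Measurable (wordAverage B s h n) :=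
  .fun_const_smul (Finset.measurable_fun_sum _ fun G _ ↦ measurable_fourierChar_mobius n (G * h)) _

theorem norm_wordAverage_le_one (B : Finset (Matrix (Fin 2) (Fin 2) ℕ)) (s : ℕ)
    (h : Matrix (Fin 2) (Fin 2) ℕ) (n x : ℝ) : ‖wordAverage B s h n x‖ ≤ 1 :=
  norm_inv_card_smul_sum_le zero_le_one fun _ _ ↦ (Circle.norm_coe _).le

theorem mul_mem_pow_add {k l : ℕ} (hG : G ∈ B ^ k) (hh : h ∈ B ^ l) : G * h ∈ B ^ (k + l) := by
  rw [pow_add]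
  exact Finset.mul_mem_mul hG hh

theorem lipschitzOnWith_wordAverage (hB : ∀ g ∈ B, IsDigit Y g) (hY : 1 ≤ Y) (hh : h ∈ B ^ s)
    (hn : 0 ≤ n) :
    LipschitzOnWith (2 * π * n / ((2 * Y : ℝ) ^ s) ^ 4).toNNReal (wordAverage B s h n)
      (Set.Icc 0 1) := by
  have : (0 : ℝ) < Y := mod_cast hY
  refine LipschitzOnWith.of_dist_le' fun x hx y hy ↦ ?_
  rw [dist_eq_norm, wordAverage, wordAverage, ← smul_sub, ← Finset.sum_sub_distrib, Real.dist_eq]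
  refine norm_inv_card_smul_sum_le (by positivity) fun G hG ↦ (norm_fourierChar_sub_le _ _).trans ?_
  have contract := abs_mobius_sub_le_of_mem_pow hB hY (mul_mem_pow_add hG hh) hx.1 hy.1
  calc 2 * π * |n * mobius (G * h) x - n * mobius (G * h) y|
      = 2 * π * n * |mobius (G * h) x - mobius (G * h) y| := by
        rw [← mul_sub, abs_mul, abs_of_nonneg hn, mul_assoc _ n]
    _ ≤ 2 * π * n * (|x - y| / ((2 * Y : ℝ) ^ (s + s)) ^ 2) := by gcongr
    _ = 2 * π * n / ((2 * Y : ℝ) ^ s) ^ 4 * |x - y| := by rw [pow_add]; field_simp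

theorem card_filter_abs_mobiusDenom_sub_lt_one_le (hB : ∀ g ∈ B, IsDigit Y g) (hY : 1 ≤ Y) (k : ℕ)
    (y D : ℝ) : ((B ^ k).filter fun G ↦ |mobiusDenom G y - D| < 1).card ≤ 4 * (6 * Y) ^ k := by
  have d_mem {G : Matrix (Fin 2) (Fin 2) ℕ} (near : |mobiusDenom G y - D| < 1) :
      ⌊D - G 1 0 * y⌋ ≤ G 1 1 ∧ (G 1 1 : ℤ) < ⌊D - G 1 0 * y⌋ + 2 := by
    rw [mobiusDenom, abs_lt] at near
    have floor_le := Int.floor_le (D - G 1 0 * y)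
    have lt_floor := Int.lt_floor_add_one (D - G 1 0 * y)
    rw [← Int.sub_one_lt_iff]
    constructor
    · exact_mod_cast (by push_cast; linarith : ((⌊D - G 1 0 * y⌋ - 1 : ℤ) : ℝ) < (G 1 1 : ℤ))
    · exact_mod_cast (by push_cast; linarith : ((G 1 1 : ℤ) : ℝ) < (⌊D - G 1 0 * y⌋ + 2 : ℤ))
  have card_le : ((B ^ k).filter fun G ↦ |mobiusDenom G y - D| < 1).card ≤
      (Finset.range ((6 * Y) ^ k + 1) ×ˢ Finset.range 2).card := by
    refine Finset.card_le_card_of_injOn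
      (fun G ↦ (G 1 0, ((G 1 1 : ℤ) - ⌊D - G 1 0 * y⌋).toNat)) ?_ ?_
    · intro G hG
      obtain ⟨mem, near⟩ := Finset.mem_filter.1 (Finset.mem_coe.1 hG)
      have c_le : G 1 0 ≤ (6 * Y) ^ k :=
        (isAdmissible_of_mem_pow hB mem).c_le_d.trans (d_le_pow hB mem)
      have := d_mem near
      simp only [Finset.coe_product, Set.mem_prod, Finset.coe_range, Set.mem_Iio]
      omega
    · intro G hG H hH heq
      obtain ⟨mem_G, near_G⟩ := Finset.mem_filter.1 (Finset.mem_coe.1 hG)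
      obtain ⟨mem_H, near_H⟩ := Finset.mem_filter.1 (Finset.mem_coe.1 hH)
      obtain ⟨c_eq, d_eq⟩ := Prod.mk.inj heq
      have floor_le_G := (d_mem near_G).1
      have floor_le_H := (d_mem near_H).1
      rw [c_eq] at d_eq floor_le_G
      have adm_G := isAdmissible_of_mem_pow hB mem_G
      have adm_H := isAdmissible_of_mem_pow hB mem_H
      exact eq_of_bottom_row_eq adm_G.det adm_H.det adm_G.b_lt_d adm_H.b_lt_d c_eq (by omega)
  have : 1 ≤ (6 * Y) ^ k := Nat.one_le_pow _ _ (by omega)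
  rw [Finset.card_product, Finset.card_range, Finset.card_range] at card_le
  omega

theorem le_abs_mobiusDenom_mul_sub (hB : ∀ g ∈ B, IsDigit Y g) (hY : 1 ≤ Y)
    (hs : 2 * (6 * Y : ℝ) ^ s ≤ ((2 * Y : ℝ) ^ s) ^ 2) (hG : G ∈ B ^ s) (hH : H ∈ B ^ s)
    (hh : h ∈ B ^ s) (hGH : 1 ≤ |mobiusDenom H (mobius h 0) - mobiusDenom G (mobius h 0)|)
    {x : ℝ} (hx : x ∈ Set.Icc (0 : ℝ) 1) :
    (2 * Y : ℝ) ^ s / 2 ≤ |mobiusDenom (H * h) x - mobiusDenom (G * h) x| := by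
  have adm := isAdmissible_of_mem_pow hB hh
  have : (0 : ℝ) < Y := mod_cast hY
  have d_ge : (2 * Y : ℝ) ^ s ≤ h 1 1 := mod_cast pow_le_d hB hh
  have denom_ge : (2 * Y : ℝ) ^ s ≤ mobiusDenom h x :=
    d_ge.trans (IsAdmissible.le_mobiusDenom hx.1)
  have c_le {K : Matrix (Fin 2) (Fin 2) ℕ} (hK : K ∈ B ^ s) : (K 1 0 : ℝ) ≤ (6 * Y) ^ s :=
    mod_cast (isAdmissible_of_mem_pow hB hK).c_le_d.trans (d_le_pow hB hK)
  have c_sub_le : |(H 1 0 : ℝ) - G 1 0| ≤ (6 * Y) ^ s :=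
    abs_sub_le_of_nonneg_of_le (Nat.cast_nonneg _) (c_le hH) (Nat.cast_nonneg _) (c_le hG)
  have mobius_sub_le : |mobius h x - mobius h 0| ≤ 1 / ((2 * Y : ℝ) ^ s) ^ 2 :=
    (abs_mobius_sub_le_of_mem_pow hB hY hh hx.1 le_rfl).trans <| by
      rw [sub_zero, abs_of_nonneg hx.1]
      gcongr
      exact hx.2
  have variation_le : |((H 1 0 : ℝ) - G 1 0) * (mobius h 0 - mobius h x)| ≤ 1 / 2 := by
    rw [abs_mul, abs_sub_comm (mobius h 0)]
    calc |(H 1 0 : ℝ) - G 1 0| * |mobius h x - mobius h 0|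
        ≤ (6 * Y) ^ s * (1 / ((2 * Y : ℝ) ^ s) ^ 2) := by gcongr
      _ ≤ 1 / 2 := by
        rw [mul_one_div, div_le_div_iff₀ (by positivity) two_pos]
        linarith
  have half_le : 1 / 2 ≤ |mobiusDenom H (mobius h x) - mobiusDenom G (mobius h x)| := by
    have split : mobiusDenom H (mobius h 0) - mobiusDenom G (mobius h 0) =
        (mobiusDenom H (mobius h x) - mobiusDenom G (mobius h x)) +
          ((H 1 0 : ℝ) - G 1 0) * (mobius h 0 - mobius h x) := by
      unfold mobiusDenom
      ring
    rw [split] at hGH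
    linarith [hGH.trans (abs_add_le _ _)]
  rw [IsAdmissible.mobiusDenom_mul adm hx.1, IsAdmissible.mobiusDenom_mul adm hx.1, ← sub_mul,
    abs_mul, abs_of_pos (adm.mobiusDenom_pos hx.1), div_eq_mul_one_div, mul_comm]
  gcongr

theorem norm_integral_fourierChar_mobius_mul_sub_le (hB : ∀ g ∈ B, IsDigit Y g) (hY : 1 ≤ Y)
    (hs : 2 * (6 * Y : ℝ) ^ s ≤ ((2 * Y : ℝ) ^ s) ^ 2) (hn : 0 < n) (hG : G ∈ B ^ s)
    (hH : H ∈ B ^ s) (hh : h ∈ B ^ s)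
    (hGH : 1 ≤ |mobiusDenom H (mobius h 0) - mobiusDenom G (mobius h 0)|) :
    ‖∫ x in Set.Icc (0 : ℝ) 1, (𝐞 (n * mobius (G * h) x - n * mobius (H * h) x) : ℂ)‖ ≤
      (16 * ((6 * Y : ℝ) ^ s) ^ 6 / (2 * Y : ℝ) ^ s +
        256 * ((6 * Y : ℝ) ^ s) ^ 12 / ((2 * Y : ℝ) ^ s) ^ 6) / n := by
  have : (0 : ℝ) < Y := mod_cast hY
  have d_ge {K : Matrix (Fin 2) (Fin 2) ℕ} (hK : K ∈ B ^ s) :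
      ((2 * Y : ℝ) ^ s) ^ 2 ≤ (K * h) 1 1 := by
    rw [sq, ← pow_add]
    exact_mod_cast pow_le_d hB (mul_mem_pow_add hK hh)
  have d_le {K : Matrix (Fin 2) (Fin 2) ℕ} (hK : K ∈ B ^ s) :
      ((K * h) 1 1 : ℝ) ≤ ((6 * Y : ℝ) ^ s) ^ 2 := by
    rw [sq, ← pow_add]
    exact_mod_cast d_le_pow hB (mul_mem_pow_add hK hh)
  rw [integral_Icc_eq_integral_Ioc, ← intervalIntegral.integral_of_le zero_le_one]
  refine (IsAdmissible.norm_integral_fourierChar_mobius_sub_le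
    (isAdmissible_of_mem_pow hB (mul_mem_pow_add hG hh))
    (isAdmissible_of_mem_pow hB (mul_mem_pow_add hH hh)) hn (by positivity)
    (by positivity : 0 < (2 * Y : ℝ) ^ s / 2) (d_ge hG) (d_ge hH) (d_le hG) (d_le hH)
    fun x hx ↦ le_abs_mobiusDenom_mul_sub hB hY hs hG hH hh hGH hx).trans_eq ?_
  field_simp
  ring

theorem integral_norm_sq_wordAverage_le (hB : ∀ g ∈ B, IsDigit Y g) (hY : 1 ≤ Y)
    (hne : B.Nonempty) (hs : 2 * (6 * Y : ℝ) ^ s ≤ ((2 * Y : ℝ) ^ s) ^ 2) (hn : 0 < n)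
    (hh : h ∈ B ^ s) :
    ∫ x in Set.Icc (0 : ℝ) 1, ‖wordAverage B s h n x‖ ^ 2 ≤
      4 * (6 * Y : ℝ) ^ s / (B.card : ℝ) ^ s + (16 * ((6 * Y : ℝ) ^ s) ^ 6 / (2 * Y : ℝ) ^ s +
        256 * ((6 * Y : ℝ) ^ s) ^ 12 / ((2 * Y : ℝ) ^ s) ^ 6) / n := by
  have prob : IsProbabilityMeasure (volume.restrict (Set.Icc (0 : ℝ) 1)) := ⟨by simp⟩
  have : (0 : ℝ) < B.card := mod_cast hne.card_pos
  have card_eq : ((B ^ s).card : ℝ) = (B.card : ℝ) ^ s := mod_cast card_pow hB s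
  set gap := (16 * ((6 * Y : ℝ) ^ s) ^ 6 / (2 * Y : ℝ) ^ s +
    256 * ((6 * Y : ℝ) ^ s) ^ 12 / ((2 * Y : ℝ) ^ s) ^ 6) / n
  have near_card_le (D : ℝ) :
      (((B ^ s).filter fun H ↦ |mobiusDenom H (mobius h 0) - D| < 1).card : ℝ) ≤
        4 * (6 * Y : ℝ) ^ s := mod_cast card_filter_abs_mobiusDenom_sub_lt_one_le hB hY s _ D
  set P := (6 * Y : ℝ) ^ s
  have gap_nonneg : 0 ≤ gap := by positivity
  have pair_le : ∀ G ∈ B ^ s, ∀ H ∈ B ^ s,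
      ‖∫ x in Set.Icc (0 : ℝ) 1, (𝐞 (n * mobius (G * h) x - n * mobius (H * h) x) : ℂ)‖ ≤
        (if |mobiusDenom H (mobius h 0) - mobiusDenom G (mobius h 0)| < 1 then 1 else 0) +
          gap := fun G hG H hH ↦ by
    split_ifs with near
    · exact (norm_integral_fourierChar_comp_le_one _ _).trans (le_add_of_nonneg_right gap_nonneg)
    · rw [zero_add]
      exact norm_integral_fourierChar_mobius_mul_sub_le hB hY hs hn hG hH hh (not_lt.1 near)
  have row_le : ∀ G ∈ B ^ s, ∑ H ∈ B ^ s,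
      ‖∫ x in Set.Icc (0 : ℝ) 1, (𝐞 (n * mobius (G * h) x - n * mobius (H * h) x) : ℂ)‖ ≤
        4 * P + (B.card : ℝ) ^ s * gap := fun G hG ↦ by
    refine (Finset.sum_le_sum (pair_le G hG)).trans ?_
    rw [Finset.sum_add_distrib, Finset.sum_const, nsmul_eq_mul, card_eq, ← Finset.sum_filter,
      Finset.sum_const, nsmul_one]
    gcongr
    exact near_card_le _
  have sum_le := (integral_norm_sq_sum_fourierChar_le (volume.restrict (Set.Icc (0 : ℝ) 1)) (B ^ s)
    (φ := fun G x ↦ n * mobius (G * h) x) fun G ↦ (measurable_mobius _).const_mul n).trans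
    (Finset.sum_le_sum row_le)
  rw [Finset.sum_const, nsmul_eq_mul, card_eq] at sum_le
  simp only [wordAverage, norm_smul, norm_inv, mul_pow, card_eq]
  rw [integral_const_mul, Real.norm_of_nonneg (by positivity : 0 ≤ (B.card : ℝ) ^ s)]
  refine (mul_le_mul_of_nonneg_left sum_le (by positivity)).trans_eq ?_
  field_simp

end WordAverage

theorem oscillation_gap_le {A T n : ℝ} (hT : 1 ≤ T) (hTA : T ^ 12 ≤ A) (hn : A ^ 8 ≤ n) :
    (16 * (T * A) ^ 6 / A + 256 * (T * A) ^ 12 / A ^ 6) / n ≤ 272 / A := by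
  have one_le_A : 1 ≤ A := (one_le_pow₀ hT).trans hTA
  have A_pos : 0 < A := by positivity
  have cancel : 16 * (T * A) ^ 6 / A + 256 * (T * A) ^ 12 / A ^ 6 =
      16 * T ^ 6 * A ^ 5 + 256 * T ^ 12 * A ^ 6 := by field_simp
  rw [cancel, div_le_div_iff₀ (lt_of_lt_of_le (by positivity) hn) A_pos]
  calc (16 * T ^ 6 * A ^ 5 + 256 * T ^ 12 * A ^ 6) * A
      ≤ (16 * T ^ 12 * A ^ 6 + 256 * T ^ 12 * A ^ 6) * A := by gcongr <;> norm_num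
    _ = 272 * T ^ 12 * A ^ 7 := by ring
    _ ≤ 272 * A * A ^ 7 := by gcongr
    _ = 272 * A ^ 8 := by ring
    _ ≤ 272 * n := by gcongr

theorem six_mul_pow_eq (x : ℝ) (s : ℕ) : (6 * x) ^ s = 3 ^ s * (2 * x) ^ s := by
  rw [← mul_pow]
  ring

theorem two_mul_six_mul_pow_le {x : ℝ} (hx : 3 ≤ x) {s : ℕ} (hs : s ≠ 0) :
    2 * (6 * x) ^ s ≤ ((2 * x) ^ s) ^ 2 :=
  calc 2 * (6 * x) ^ s ≤ 2 ^ s * (6 * x) ^ s := by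
        gcongr
        exact le_self_pow₀ one_le_two hs
    _ = (2 * (6 * x)) ^ s := (mul_pow _ _ _).symm
    _ ≤ ((2 * x) ^ 2) ^ s := by
        gcongr
        nlinarith
    _ = ((2 * x) ^ s) ^ 2 := pow_right_comm _ _ _

theorem four_mul_six_mul_pow_div_le {x b : ℝ} (hx : 0 < x) (hb : 0 < b)
    (h : (6 * x) ^ 2 ≤ 288 * b) (s : ℕ) :
    4 * (6 * x) ^ s / b ^ s ≤ 4 * 288 ^ s / (2 * x) ^ s := by
  rw [div_le_div_iff₀ (by positivity) (by positivity)]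
  calc 4 * (6 * x) ^ s * (2 * x) ^ s ≤ 4 * (6 * x) ^ s * (6 * x) ^ s := by gcongr; norm_num
    _ = 4 * ((6 * x) ^ 2) ^ s := by rw [mul_assoc, ← sq, pow_right_comm]
    _ ≤ 4 * (288 * b) ^ s := by gcongr
    _ = 4 * 288 ^ s * b ^ s := by rw [mul_pow, mul_assoc]

theorem two_mul_oscillation_sq_le {A Z n q : ℝ} (hA : 1 ≤ A) (hZ : 0 < Z) (hq : 1 ≤ q)
    (hn₀ : 0 ≤ n) (hn : n ≤ A ^ 8 * Z) :
    2 * (2 * π * n / A ^ 4 / (A ^ 6 * Z)) ^ 2 ≤ 80 * q / A := by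
  have : 0 < A := by positivity
  have oscillation_le : 2 * π * n / A ^ 4 / (A ^ 6 * Z) ≤ 2 * π / A ^ 2 := by
    rw [div_div, div_le_div_iff₀ (by positivity) (by positivity)]
    calc 2 * π * n * A ^ 2 ≤ 2 * π * (A ^ 8 * Z) * A ^ 2 := by gcongr
      _ = 2 * π * (A ^ 4 * (A ^ 6 * Z)) := by ring
  calc 2 * (2 * π * n / A ^ 4 / (A ^ 6 * Z)) ^ 2 ≤ 2 * (2 * π / A ^ 2) ^ 2 := by gcongr
    _ = 8 * π ^ 2 / A ^ 4 := by ring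
    _ ≤ 8 * 10 / A := by
      gcongr
      · nlinarith [pi_lt_d2, pi_pos]
      · exact le_self_pow₀ hA (by norm_num)
    _ = 80 * 1 / A := by norm_num
    _ ≤ 80 * q / A := by gcongr

namespace IsDigitMeasure

variable {Y : ℕ} {B : Finset (Matrix (Fin 2) (Fin 2) ℕ)} {ν : Measure ℝ} {s : ℕ}
  {h : Matrix (Fin 2) (Fin 2) ℕ} {n : ℝ}

theorem norm_integral_fourierChar_le_of_wordAverage (hν : IsDigitMeasure Y B ν) (s : ℕ) (n : ℝ)
    {C : ℝ} (hC : 0 ≤ C) (bound : ∀ h ∈ B ^ s, ‖∫ x, wordAverage B s h n x ∂ν‖ ≤ C) :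
    ‖∫ x, (𝐞 (n * x) : ℂ) ∂ν‖ ≤ C := by
  have := hν.isProbabilityMeasure
  have card_eq : ((B ^ s).card : ℝ) = (B.card : ℝ) ^ s := mod_cast card_pow hν.isDigit s
  have measurable : Measurable fun x : ℝ ↦ (𝐞 (n * x) : ℂ) :=
    measurable_coe_fourierChar.comp (measurable_const_mul n)
  have expand : ∀ G ∈ B ^ s, ∫ x, (𝐞 (n * mobius G x) : ℂ) ∂ν =
      ((B.card : ℝ) ^ s)⁻¹ • ∑ h ∈ B ^ s, ∫ x, (𝐞 (n * mobius (G * h) x) : ℂ) ∂ν := fun G hG ↦ by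
    rw [hν.integral_eq_sum s (measurable_fourierChar_mobius n G) fun x ↦ (Circle.norm_coe _).le]
    congr 1
    refine Finset.sum_congr rfl fun h hh ↦ integral_congr_ae ?_
    filter_upwards [hν.ae_mem_Icc] with x hx
    rw [(isAdmissible_of_mem_pow hν.isDigit hG).mobius_mul
      (isAdmissible_of_mem_pow hν.isDigit hh) hx]
  have average_eq : ∫ x, (𝐞 (n * x) : ℂ) ∂ν =
      ((B ^ s).card : ℝ)⁻¹ • ∑ h ∈ B ^ s, ∫ x, wordAverage B s h n x ∂ν := by
    rw [hν.integral_eq_sum s measurable fun x ↦ (Circle.norm_coe _).le, Finset.sum_congr rfl expand,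
      ← Finset.smul_sum, Finset.sum_comm, card_eq, Finset.smul_sum]
    congr 1
    refine Finset.sum_congr rfl fun h _ ↦ ?_
    simp only [wordAverage]
    rw [integral_smul, integral_finsetSum _ fun G _ ↦
      integrable_fourierChar_comp ν ((measurable_mobius (G * h)).const_mul n), card_eq]
  rw [average_eq]
  exact norm_inv_card_smul_sum_le hC bound

theorem integral_norm_sq_wordAverage_le (hν : IsDigitMeasure Y B ν) (hY : (288 : ℝ) ^ 8 ≤ 2 * Y)
    (hcard : (6 * Y : ℝ) ^ 2 ≤ 288 * B.card) (hs : s ≠ 0) (hn : ((2 * Y : ℝ) ^ s) ^ 8 ≤ n)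
    (hh : h ∈ B ^ s) :
    ∫ x in Set.Icc (0 : ℝ) 1, ‖wordAverage B s h n x‖ ^ 2 ≤ 276 * 288 ^ s / (2 * Y : ℝ) ^ s := by
  have Y_pos : (0 : ℝ) < Y := by linarith [show (0 : ℝ) < 288 ^ 8 by positivity]
  have card_pos : (0 : ℝ) < B.card := mod_cast hν.nonempty.card_pos
  have three_pow_le : ((3 : ℝ) ^ s) ^ 12 ≤ (2 * Y) ^ s := by
    rw [pow_right_comm]
    gcongr
    exact le_trans (by norm_num) hY
  have n_pos : 0 < n := lt_of_lt_of_le (by positivity) hn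
  have one_le_288_pow : (1 : ℝ) ≤ 288 ^ s := one_le_pow₀ (by norm_num)
  refine (_root_.integral_norm_sq_wordAverage_le hν.isDigit (mod_cast Y_pos) hν.nonempty
    (two_mul_six_mul_pow_le (by linarith) hs) n_pos hh).trans ?_
  calc 4 * (6 * Y : ℝ) ^ s / (B.card : ℝ) ^ s + (16 * ((6 * Y : ℝ) ^ s) ^ 6 / (2 * Y) ^ s +
        256 * ((6 * Y : ℝ) ^ s) ^ 12 / ((2 * Y) ^ s) ^ 6) / n
      ≤ 4 * 288 ^ s / (2 * Y) ^ s + 272 / (2 * Y) ^ s := by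
        refine add_le_add (four_mul_six_mul_pow_div_le Y_pos card_pos hcard s) ?_
        rw [six_mul_pow_eq]
        exact oscillation_gap_le (one_le_pow₀ (by norm_num)) three_pow_le hn
    _ ≤ 4 * 288 ^ s / (2 * Y) ^ s + 272 * 288 ^ s / (2 * Y) ^ s := by
        gcongr
        exact le_mul_of_one_le_right (by norm_num) one_le_288_pow
    _ = 276 * 288 ^ s / (2 * Y) ^ s := by ring

theorem norm_sq_integral_wordAverage_le (hν : IsDigitMeasure Y B ν) (hY : (288 : ℝ) ^ 8 ≤ 2 * Y)
    (hcard : (6 * Y : ℝ) ^ 2 ≤ 288 * B.card) (hs : s ≠ 0) (hn : ((2 * Y : ℝ) ^ s) ^ 8 ≤ n)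
    (hn' : n ≤ ((2 * Y : ℝ) ^ s) ^ 8 * (2 * Y) ^ 8) (hh : h ∈ B ^ s) :
    ‖∫ x, wordAverage B s h n x ∂ν‖ ^ 2 ≤
      (1104 * 288 ^ 4 + 80) * (288 ^ s) ^ 4 / (2 * Y : ℝ) ^ s := by
  have two_Y_pos : (0 : ℝ) < 2 * Y := lt_of_lt_of_le (by positivity) hY
  have one_le_Y : 1 ≤ Y := by exact_mod_cast (pos_of_mul_pos_right two_Y_pos zero_le_two)
  have card_pos : (0 : ℝ) < B.card := mod_cast hν.nonempty.card_pos
  have n_nonneg : 0 ≤ n := le_trans (by positivity) hn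
  have average_le := hν.norm_sq_integral_le one_le_Y (3 * s + 4) (measurable_wordAverage B s h n)
    (norm_wordAverage_le_one B s h n)
    (lipschitzOnWith_wordAverage hν.isDigit one_le_Y hh n_nonneg)
  rw [Real.coe_toNNReal _ (by positivity)] at average_le
  have energy_le := hν.integral_norm_sq_wordAverage_le hY hcard hs hn hh
  have overlap_le : 4 * ((6 * Y : ℝ) ^ (3 * s + 4)) ^ 2 / (B.card : ℝ) ^ (3 * s + 4) ≤
      4 * ((288 ^ s) ^ 3 * 288 ^ 4) := by
    rw [div_le_iff₀ (by positivity), ← pow_mul 288, mul_comm s 3, ← pow_add, mul_assoc, ← mul_pow,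
      pow_right_comm]
    gcongr
  have one_le_A : 1 ≤ (2 * Y : ℝ) ^ s := one_le_pow₀ (le_trans (by norm_num) hY)
  have pow_eq : ((2 * Y : ℝ) ^ (3 * s + 4)) ^ 2 = ((2 * Y : ℝ) ^ s) ^ 6 * (2 * Y) ^ 8 := by ring
  rw [pow_eq] at average_le
  set A := (2 * Y : ℝ) ^ s
  have : 0 < A := by positivity
  have error_le : 2 * (2 * π * n / A ^ 4 / (A ^ 6 * (2 * Y) ^ 8)) ^ 2 ≤ 80 * (288 ^ s) ^ 4 / A :=
    two_mul_oscillation_sq_le one_le_A (by positivity) (one_le_pow₀ (one_le_pow₀ (by norm_num)))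
      n_nonneg hn'
  calc ‖∫ x, wordAverage B s h n x ∂ν‖ ^ 2
      ≤ 4 * ((288 ^ s) ^ 3 * 288 ^ 4) * (276 * 288 ^ s / A) + 80 * (288 ^ s) ^ 4 / A :=
        average_le.trans (by gcongr)
    _ = (1104 * 288 ^ 4 + 80) * (288 ^ s) ^ 4 / A := by ring

theorem norm_integral_fourierChar_pow_mul_le (hν : IsDigitMeasure Y B ν)
    (hY : (288 : ℝ) ^ 8 ≤ 2 * Y) (hcard : (6 * Y : ℝ) ^ 2 ≤ 288 * B.card) (hs : s ≠ 0)
    (hn : ((2 * Y : ℝ) ^ s) ^ 8 ≤ n) (hn' : n ≤ ((2 * Y : ℝ) ^ s) ^ 8 * (2 * Y) ^ 8) :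
    ‖∫ x, (𝐞 (n * x) : ℂ) ∂ν‖ ^ 32 * n ≤ (1104 * 288 ^ 4 + 80) ^ 16 * (2 * Y) ^ 8 := by
  have : (0 : ℝ) < 2 * Y := lt_of_lt_of_le (by positivity) hY
  have absorb : ((288 : ℝ) ^ s) ^ 8 ≤ (2 * Y) ^ s := by
    rw [pow_right_comm]
    gcongr
  have norm_le := hν.norm_integral_fourierChar_le_of_wordAverage s n (Real.sqrt_nonneg _)
    fun h hh ↦ Real.le_sqrt_of_sq_le
      (hν.norm_sq_integral_wordAverage_le hY hcard hs hn hn' hh)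
  set A := (2 * Y : ℝ) ^ s
  set C : ℝ := 1104 * 288 ^ 4 + 80
  have : 0 < A := by positivity
  have : 0 < C := by positivity
  have : 0 ≤ n := le_trans (by positivity) hn
  have pow_le : ‖∫ x, (𝐞 (n * x) : ℂ) ∂ν‖ ^ 32 ≤ C ^ 16 / A ^ 8 :=
    calc ‖∫ x, (𝐞 (n * x) : ℂ) ∂ν‖ ^ 32 ≤ √(C * (288 ^ s) ^ 4 / A) ^ (2 * 16) := by gcongr
      _ = (C * (288 ^ s) ^ 4 / A) ^ 16 := by rw [pow_mul, Real.sq_sqrt (by positivity)]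
      _ = C ^ 16 * ((288 ^ s) ^ 8) ^ 8 / A ^ 16 := by ring
      _ ≤ C ^ 16 * A ^ 8 / A ^ 16 := by gcongr
      _ = C ^ 16 / A ^ 8 := by field_simp
  calc ‖∫ x, (𝐞 (n * x) : ℂ) ∂ν‖ ^ 32 * n ≤ C ^ 16 / A ^ 8 * (A ^ 8 * (2 * Y) ^ 8) := by gcongr
    _ = C ^ 16 * (2 * Y) ^ 8 := by field_simp

theorem exists_norm_integral_fourierChar_le_rpow (hν : IsDigitMeasure Y B ν)
    (hY : (288 : ℝ) ^ 8 ≤ 2 * Y) (hcard : (6 * Y : ℝ) ^ 2 ≤ 288 * B.card) :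
    ∃ D : ℝ, ∀ n : ℕ, 1 ≤ n →
      ‖∫ x, (𝐞 (n * x) : ℂ) ∂ν‖ ≤ D * (n : ℝ) ^ (-(1 / 32) : ℝ) := by
  have := hν.isProbabilityMeasure
  set K : ℝ := (1104 * 288 ^ 4 + 80) ^ 16 * (2 * Y) ^ 8
  have one_lt : (1 : ℝ) < 2 * Y := lt_of_lt_of_le (by norm_num) hY
  have one_lt_base : 1 < (2 * Y) ^ 8 := Nat.one_lt_pow (by norm_num) (mod_cast one_lt)
  have pow_mul_le (n : ℕ) (hn : 1 ≤ n) : ‖∫ x, (𝐞 (n * x) : ℂ) ∂ν‖ ^ 32 * n ≤ K := by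
    set s := Nat.log ((2 * Y) ^ 8) n
    have le_n : ((2 * Y) ^ 8) ^ s ≤ n := Nat.pow_log_le_self _ (by omega)
    have n_lt : n < ((2 * Y) ^ 8) ^ (s + 1) := Nat.lt_pow_succ_log_self one_lt_base n
    rw [pow_right_comm] at le_n
    rw [pow_succ, pow_right_comm] at n_lt
    rcases eq_or_ne s 0 with s_eq | hs
    · have n_le : (n : ℝ) ≤ (2 * Y) ^ 8 := by
        rw [s_eq, pow_zero, one_pow, one_mul] at n_lt
        exact_mod_cast n_lt.le
      have norm_le := norm_integral_fourierChar_comp_le_one ν fun x ↦ n * x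
      calc ‖∫ x, (𝐞 (n * x) : ℂ) ∂ν‖ ^ 32 * n ≤ 1 * (2 * Y) ^ 8 := by
            gcongr
            exact pow_le_one₀ (norm_nonneg _) norm_le
        _ ≤ (1104 * 288 ^ 4 + 80) ^ 16 * (2 * Y : ℝ) ^ 8 := by
          gcongr
          norm_num
    · exact hν.norm_integral_fourierChar_pow_mul_le hY hcard hs (mod_cast le_n)
        (mod_cast n_lt.le)
  refine ⟨K ^ (1 / 32 : ℝ), fun n hn ↦ ?_⟩
  have n_pos : (0 : ℝ) < n := mod_cast hn
  calc ‖∫ x, (𝐞 (n * x) : ℂ) ∂ν‖ = (‖∫ x, (𝐞 (n * x) : ℂ) ∂ν‖ ^ 32) ^ (1 / 32 : ℝ) := by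
        rw [← Real.rpow_natCast_mul (norm_nonneg _)]
        norm_num
    _ ≤ (K / n) ^ (1 / 32 : ℝ) := by
        gcongr
        exact (le_div_iff₀ n_pos).2 (pow_mul_le n hn)
    _ = K ^ (1 / 32 : ℝ) * (n : ℝ) ^ (-(1 / 32) : ℝ) := by
        rw [Real.div_rpow (by positivity) n_pos.le, Real.rpow_neg n_pos.le, div_eq_mul_inv]

end IsDigitMeasure

/-! ### Lacunary sequences hit shrinking targets -/

theorem sum_natDist_le {V : ℕ → ℝ} (hV : ∀ k, 0 ≤ V k) {T K : Finset ℕ} {s : ℕ}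
    (hK : ∀ u ∈ T, s.dist u ∈ K) : ∑ u ∈ T, V (s.dist u) ≤ 2 * ∑ k ∈ K, V k := by
  rw [← Finset.sum_fiberwise_of_maps_to hK, Finset.mul_sum]
  gcongr with k
  calc ∑ u ∈ T with s.dist u = k, V (s.dist u) = ({u ∈ T | s.dist u = k}.card : ℝ) * V k := by
        rw [← nsmul_eq_mul]
        exact Finset.sum_eq_card_nsmul fun u hu ↦ by rw [(Finset.mem_filter.1 hu).2]
    _ ≤ 2 * V k := by
        gcongr
        · exact hV k
        · have subset : {u ∈ T | s.dist u = k} ⊆ {s + k, s - k} := fun u hu ↦ by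
            have := (Finset.mem_filter.1 hu).2
            simp only [Nat.dist, Finset.mem_insert, Finset.mem_singleton] at this ⊢
            omega
          exact_mod_cast (Finset.card_le_card subset).trans Finset.card_le_two

theorem two_pow_add_le_of_lacunary {n : ℕ → ℕ} (h0 : 1 ≤ n 0) (hn : ∀ s, 2 * n s ≤ n (s + 1))
    (s k : ℕ) : 2 ^ k + n s ≤ n (s + k + 1) := by
  induction k with
  | zero =>
    have one_le : 1 ≤ n s := h0.trans <| monotone_nat_of_le_succ (fun s ↦ by grind) s.zero_le
    grind
  | succ k ih => grind

section LacunarySum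

variable {μ : Measure ℝ} {D η : ℝ} {n : ℕ → ℕ}

theorem norm_integral_fourierChar_neg {X : Type*} [MeasurableSpace X] (μ : Measure X) (φ : X → ℝ) :
    ‖∫ x, (𝐞 (-φ x) : ℂ) ∂μ‖ = ‖∫ x, (𝐞 (φ x) : ℂ) ∂μ‖ := by
  simp_rw [AddChar.map_neg_eq_inv, Circle.coe_inv_eq_conj]
  rw [integral_conj, RCLike.norm_conj]

theorem norm_integral_fourierChar_sub_le_of_lacunary [IsProbabilityMeasure μ] (hη : 0 ≤ η)
    (hμ : ∀ m : ℕ, 1 ≤ m → ‖∫ x, (𝐞 (m * x) : ℂ) ∂μ‖ ≤ D * (m : ℝ) ^ (-η))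
    (h0 : 1 ≤ n 0) (hn : ∀ s, 2 * n s ≤ n (s + 1)) (s u : ℕ) :
    ‖∫ x, (𝐞 (n s * x - n u * x) : ℂ) ∂μ‖ ≤ (D * 2 ^ η + 1) * ((2 : ℝ) ^ (-η)) ^ s.dist u := by
  wlog hus : u ≤ s generalizing s u
  · rw [← norm_integral_fourierChar_neg, Nat.dist_comm]
    simpa only [neg_sub] using this u s (le_of_not_ge hus)
  have D_nonneg : 0 ≤ D := by simpa using (norm_nonneg _).trans (hμ 1 le_rfl)
  rcases hus.eq_or_lt with rfl | hus
  · simp only [sub_self, AddChar.map_zero_eq_one, Circle.coe_one, Nat.dist_self, pow_zero]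
    simp only [integral_const, probReal_univ, one_smul, norm_one, mul_one, le_add_iff_nonneg_left]
    positivity
  obtain ⟨k, rfl⟩ := Nat.exists_eq_add_of_lt hus
  have gap : 2 ^ k + n u ≤ n (u + k + 1) := two_pow_add_le_of_lacunary h0 hn u k
  have two_pow_le : (2 : ℝ) ^ k ≤ (n (u + k + 1) - n u : ℕ) := mod_cast Nat.le_sub_of_add_le gap
  have cast_sub : ((n (u + k + 1) - n u : ℕ) : ℝ) = n (u + k + 1) - n u :=
    Nat.cast_sub (le_of_add_le_right gap)
  have dist_eq : (u + k + 1).dist u = k + 1 := by simp only [Nat.dist]; omega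
  have decay := hμ (n (u + k + 1) - n u) (Nat.one_le_two_pow.trans (Nat.le_sub_of_add_le gap))
  simp_rw [← sub_mul, ← cast_sub, dist_eq]
  calc _ ≤ D * ((n (u + k + 1) - n u : ℕ) : ℝ) ^ (-η) := decay
    _ ≤ D * ((2 : ℝ) ^ k) ^ (-η) := by
      gcongr ?_ * ?_
      exact Real.rpow_le_rpow_of_nonpos (by positivity) two_pow_le (neg_nonpos.2 hη)
    _ = D * 2 ^ η * ((2 : ℝ) ^ (-η)) ^ (k + 1) := by
      rw [← Real.rpow_pow_comm zero_le_two, pow_succ, mul_mul_mul_comm, mul_comm D, ← mul_assoc,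
        mul_assoc _ (2 ^ η) (2 ^ (-η)), ← Real.rpow_add two_pos, add_neg_cancel, Real.rpow_zero,
        mul_one, mul_comm]
    _ ≤ _ := by gcongr; exact le_add_of_nonneg_right zero_le_one

theorem integral_norm_sq_sum_fourierChar_le_of_lacunary [IsProbabilityMeasure μ] (hη : 0 < η)
    (hμ : ∀ m : ℕ, 1 ≤ m → ‖∫ x, (𝐞 (m * x) : ℂ) ∂μ‖ ≤ D * (m : ℝ) ^ (-η))
    (h0 : 1 ≤ n 0) (hn : ∀ s, 2 * n s ≤ n (s + 1)) (T : Finset ℕ) :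
    ∫ x, ‖∑ s ∈ T, (𝐞 (n s * x) : ℂ)‖ ^ 2 ∂μ ≤
      (D * 2 ^ η + 1) * (2 * (1 - 2 ^ (-η))⁻¹) * T.card := by
  have D_nonneg : 0 ≤ D := by simpa using (norm_nonneg _).trans (hμ 1 le_rfl)
  set ρ : ℝ := 2 ^ (-η)
  have ρ_nonneg : 0 ≤ ρ := by positivity
  have ρ_lt_one : ρ < 1 := Real.rpow_lt_one_of_one_lt_of_neg one_lt_two (neg_neg_of_pos hη)
  have row_le (s : ℕ) : ∑ u ∈ T, ρ ^ s.dist u ≤ 2 * (1 - ρ)⁻¹ := by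
    refine (sum_natDist_le (fun k ↦ pow_nonneg ρ_nonneg k)
      fun u hu ↦ Finset.mem_image_of_mem (Nat.dist s) hu).trans ?_
    rw [← tsum_geometric_of_lt_one ρ_nonneg ρ_lt_one]
    gcongr
    exact (summable_geometric_of_lt_one ρ_nonneg ρ_lt_one).sum_le_tsum _ fun k _ ↦
      pow_nonneg ρ_nonneg k
  calc ∫ x, ‖∑ s ∈ T, (𝐞 (n s * x) : ℂ)‖ ^ 2 ∂μ
      ≤ ∑ s ∈ T, ∑ u ∈ T, ‖∫ x, (𝐞 (n s * x - n u * x) : ℂ) ∂μ‖ :=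
        integral_norm_sq_sum_fourierChar_le μ T fun s ↦ measurable_const_mul _
    _ ≤ ∑ s ∈ T, ∑ u ∈ T, (D * 2 ^ η + 1) * ρ ^ s.dist u := by
        gcongr with s _ u _
        exact norm_integral_fourierChar_sub_le_of_lacunary hη.le hμ h0 hn s u
    _ ≤ ∑ s ∈ T, (D * 2 ^ η + 1) * (2 * (1 - ρ)⁻¹) := by
        refine Finset.sum_le_sum fun s _ ↦ ?_
        rw [← Finset.mul_sum]
        gcongr
        exact row_le s
    _ = _ := by rw [Finset.sum_const, nsmul_eq_mul, mul_comm]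

end LacunarySum

section Tent

theorem norm_sum_fourierChar_mul_sub_mul {ι : Type*} (T : Finset ι) (x : ι → ℝ) (i j : ℕ) :
    ‖∑ s ∈ T, (𝐞 (i * x s - j * x s) : ℂ)‖ = ‖∑ s ∈ T, (𝐞 ((i.dist j : ℕ) * x s) : ℂ)‖ := by
  wlog hji : j ≤ i generalizing i j
  · rw [Nat.dist_comm, ← this j i (le_of_not_ge hji), ← RCLike.norm_conj, map_sum]
    simp_rw [← Circle.coe_inv_eq_conj, ← AddChar.map_neg_eq_inv, neg_sub]
  · simp only [Nat.dist_eq_sub_of_le_right hji, Nat.cast_sub hji, sub_mul]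

theorem abs_sum_norm_sq_sub_card_mul_le {ι : Type*} (T : Finset ι) (x : ι → ℝ) (N : ℕ)
    {c : ℕ → ℝ} {m : ℝ} (hc : ∀ j, |c j| ≤ m) :
    |∑ s ∈ T, ‖∑ j ∈ Finset.range N, (c j : ℂ) * 𝐞 (j * x s)‖ ^ 2 -
        T.card * ∑ j ∈ Finset.range N, c j ^ 2| ≤
      m ^ 2 * N * (2 * ∑ k ∈ Finset.Icc 1 N, ‖∑ s ∈ T, (𝐞 (k * x s) : ℂ)‖) := by
  set V : ℕ → ℝ := fun k ↦ ‖∑ s ∈ T, (𝐞 (k * x s) : ℂ)‖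
  have m_nonneg : 0 ≤ m := (abs_nonneg _).trans (hc 0)
  have diagonal (i : ℕ) (hi : i ∈ Finset.range N) :
      ∑ j ∈ Finset.range N, (c i * c j : ℂ) * ∑ s ∈ T, (𝐞 (i * x s - j * x s) : ℂ) =
        T.card * (c i : ℂ) ^ 2 + ∑ j ∈ (Finset.range N).erase i,
          (c i * c j : ℂ) * ∑ s ∈ T, (𝐞 (i * x s - j * x s) : ℂ) := by
    rw [← Finset.add_sum_erase _ _ hi]
    simp only [sub_self, AddChar.map_zero_eq_one, Circle.coe_one, Finset.sum_const, nsmul_eq_mul]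
    ring
  have expand : ((∑ s ∈ T, ‖∑ j ∈ Finset.range N, (c j : ℂ) * 𝐞 (j * x s)‖ ^ 2 -
        T.card * ∑ j ∈ Finset.range N, c j ^ 2 : ℝ) : ℂ) =
      ∑ i ∈ Finset.range N, ∑ j ∈ (Finset.range N).erase i,
        (c i * c j : ℂ) * ∑ s ∈ T, (𝐞 (i * x s - j * x s) : ℂ) := by
    simp_rw [Complex.ofReal_sub, Complex.ofReal_sum, ofReal_norm_sq_sum_mul_fourierChar]
    rw [Finset.sum_comm, sub_eq_iff_eq_add', Complex.ofReal_mul, Complex.ofReal_sum,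
      Finset.mul_sum, ← Finset.sum_add_distrib]
    refine Finset.sum_congr rfl fun i hi ↦ ?_
    rw [Finset.sum_comm]
    simpa only [Finset.mul_sum, Complex.ofReal_natCast, Complex.ofReal_pow] using diagonal i hi
  have row_le (i : ℕ) (hi : i ∈ Finset.range N) :
      ∑ j ∈ (Finset.range N).erase i, V (i.dist j) ≤ 2 * ∑ k ∈ Finset.Icc 1 N, V k :=
    sum_natDist_le (V := V) (fun k ↦ norm_nonneg _) fun j hj ↦ by grind [Nat.dist]
  rw [← Real.norm_eq_abs, ← Complex.norm_real, expand]
  calc ‖∑ i ∈ Finset.range N, ∑ j ∈ (Finset.range N).erase i,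
          (c i * c j : ℂ) * ∑ s ∈ T, (𝐞 (i * x s - j * x s) : ℂ)‖
      ≤ ∑ i ∈ Finset.range N, ∑ j ∈ (Finset.range N).erase i, m ^ 2 * V (i.dist j) := by
        refine norm_sum_le_of_le _ fun i _ ↦ norm_sum_le_of_le _ fun j _ ↦ ?_
        rw [norm_mul, norm_sum_fourierChar_mul_sub_mul, norm_mul, Complex.norm_real,
          Complex.norm_real, sq]
        gcongr
        exacts [hc i, hc j]
    _ ≤ ∑ i ∈ Finset.range N, m ^ 2 * (2 * ∑ k ∈ Finset.Icc 1 N, V k) := by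
        refine Finset.sum_le_sum fun i hi ↦ ?_
        rw [← Finset.mul_sum]
        gcongr
        exact row_le i hi
    _ = _ := by rw [Finset.sum_const, Finset.card_range, nsmul_eq_mul]; ring

theorem norm_one_sub_fourierChar_mul_sum {a : ℕ → ℝ} {N : ℕ} (h0 : a 0 = 0) (hN : a N = 0)
    (y : ℝ) :
    ‖1 - (𝐞 y : ℂ)‖ * ‖∑ j ∈ Finset.range N, (a j : ℂ) * 𝐞 (j * y)‖ =
      ‖∑ j ∈ Finset.range N, ((a (j + 1) - a j : ℝ) : ℂ) * 𝐞 (j * y)‖ := by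
  have telescope :
      ∑ j ∈ Finset.range N, ((a (j + 1) : ℂ) * 𝐞 ((j + 1 : ℕ) * y) - a j * 𝐞 (j * y)) = 0 := by
    rw [Finset.sum_range_sub fun j : ℕ ↦ (a j : ℂ) * 𝐞 (j * y), h0, hN]
    simp only [Complex.ofReal_zero, zero_mul, sub_zero]
  have summation_by_parts : (1 - (𝐞 y : ℂ)) * ∑ j ∈ Finset.range N, (a j : ℂ) * 𝐞 (j * y) =
      𝐞 y * ∑ j ∈ Finset.range N, ((a (j + 1) - a j : ℝ) : ℂ) * 𝐞 (j * y) := by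
    rw [← sub_eq_zero, ← neg_eq_zero, ← telescope, Finset.mul_sum, Finset.mul_sum,
      ← Finset.sum_sub_distrib, ← Finset.sum_neg_distrib]
    refine Finset.sum_congr rfl fun j _ ↦ ?_
    rw [Nat.cast_succ, add_one_mul, AddChar.map_add_eq_mul, Circle.coe_mul, Complex.ofReal_sub]
    ring
  rw [← norm_mul, summation_by_parts, norm_mul, Circle.norm_coe, one_mul]

/-- The piecewise linear weight rising from `0` to `M` and falling back to `0` at `2 * M`: the
coefficients of the test polynomial in `card_le_sum_norm_sum_of_le_dni`. -/
def tent (M j : ℕ) : ℕ := min j (2 * M - j)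

theorem tent_le (M j : ℕ) : tent M j ≤ M := by
  rw [tent]
  omega

theorem abs_tent_succ_sub_le_one (M j : ℕ) : |(tent M (j + 1) - tent M j : ℝ)| ≤ 1 := by
  have le_add : tent M (j + 1) ≤ tent M j + 1 ∧ tent M j ≤ tent M (j + 1) + 1 := by
    simp only [tent]
    omega
  rw [abs_le]
  constructor
  · linarith [show (tent M j : ℝ) ≤ tent M (j + 1) + 1 by exact_mod_cast le_add.2]
  · linarith [show (tent M (j + 1) : ℝ) ≤ tent M j + 1 by exact_mod_cast le_add.1]

theorem cube_div_three_le_sum_range_sq (M : ℕ) :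
    (M : ℝ) ^ 3 / 3 ≤ ∑ j ∈ Finset.range (M + 1), (j : ℝ) ^ 2 := by
  induction M with
  | zero => simp
  | succ M ih =>
    rw [Finset.sum_range_succ]
    push_cast at ih ⊢
    nlinarith [(Nat.cast_nonneg M : (0 : ℝ) ≤ M)]

theorem cube_div_three_le_sum_tent_sq {M : ℕ} (hM : 1 ≤ M) :
    (M : ℝ) ^ 3 / 3 ≤ ∑ j ∈ Finset.range (2 * M), (tent M j : ℝ) ^ 2 :=
  calc (M : ℝ) ^ 3 / 3 ≤ ∑ j ∈ Finset.range (M + 1), (j : ℝ) ^ 2 :=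
        cube_div_three_le_sum_range_sq M
    _ = ∑ j ∈ Finset.range (M + 1), (tent M j : ℝ) ^ 2 :=
        Finset.sum_congr rfl fun j hj ↦ by
          rw [tent, min_eq_left (by grind)]
    _ ≤ _ := by
        gcongr
        omega

section TestPolynomial

variable {ι : Type*} (T : Finset ι) (x : ι → ℝ)

theorem card_mul_le_sum_norm_sq_sum_tent {M : ℕ} (hM : 1 ≤ M) :
    T.card * ((M : ℝ) ^ 3 / 3) -
        4 * M ^ 3 * ∑ k ∈ Finset.Icc 1 (2 * M), ‖∑ s ∈ T, (𝐞 (k * x s) : ℂ)‖ ≤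
      ∑ s ∈ T, ‖∑ j ∈ Finset.range (2 * M), ((tent M j : ℝ) : ℂ) * 𝐞 (j * x s)‖ ^ 2 := by
  have deviation := (abs_le.1 (abs_sum_norm_sq_sub_card_mul_le T x (2 * M)
    (c := fun j ↦ tent M j) (m := M) fun j ↦ by
      rw [Nat.abs_cast]
      exact_mod_cast tent_le M j)).1
  have := mul_le_mul_of_nonneg_left (cube_div_three_le_sum_tent_sq hM) T.card.cast_nonneg (α := ℝ)
  rw [Nat.cast_mul, Nat.cast_two] at deviation
  linarith

theorem sum_norm_sq_sum_tent_slope_le (M : ℕ) :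
    ∑ s ∈ T, ‖∑ j ∈ Finset.range (2 * M),
        ((tent M (j + 1) - tent M j : ℝ) : ℂ) * 𝐞 (j * x s)‖ ^ 2 ≤
      T.card * (2 * M) +
        4 * M * ∑ k ∈ Finset.Icc 1 (2 * M), ‖∑ s ∈ T, (𝐞 (k * x s) : ℂ)‖ := by
  have deviation := (abs_le.1 (abs_sum_norm_sq_sub_card_mul_le T x (2 * M)
    (abs_tent_succ_sub_le_one M))).2
  have slope_sq_le : ∑ j ∈ Finset.range (2 * M), (tent M (j + 1) - tent M j : ℝ) ^ 2 ≤ 2 * M := by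
    refine (Finset.sum_le_card_nsmul _ _ 1 fun j _ ↦ ?_).trans (by simp)
    exact (sq_le_one_iff_abs_le_one _).2 (abs_tent_succ_sub_le_one M j)
  have := mul_le_mul_of_nonneg_left slope_sq_le T.card.cast_nonneg (α := ℝ)
  rw [Nat.cast_mul, Nat.cast_two] at deviation
  linarith

variable {T x}

theorem card_le_sum_norm_sum_of_le_dni {M : ℕ} (hM : 1 ≤ M) (hx : ∀ s ∈ T, 2 / M ≤ dni (x s)) :
    (T.card : ℝ) ≤ 14 * ∑ k ∈ Finset.Icc 1 (2 * M), ‖∑ s ∈ T, (𝐞 (k * x s) : ℂ)‖ := by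
  have M_pos : (0 : ℝ) < M := mod_cast hM
  have tent_le_slope : ∀ s ∈ T,
      64 / (M : ℝ) ^ 2 * ‖∑ j ∈ Finset.range (2 * M), ((tent M j : ℝ) : ℂ) * 𝐞 (j * x s)‖ ^ 2 ≤
        ‖∑ j ∈ Finset.range (2 * M), ((tent M (j + 1) - tent M j : ℝ) : ℂ) * 𝐞 (j * x s)‖ ^ 2 := by
    intro s hs
    rw [← norm_one_sub_fourierChar_mul_sum (a := fun j ↦ tent M j) (by simp [tent])
      (by simp [tent]), mul_pow]
    gcongr
    calc 64 / (M : ℝ) ^ 2 = (4 * (2 / M)) ^ 2 := by ring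
      _ ≤ ‖1 - (𝐞 (x s) : ℂ)‖ ^ 2 := by
        gcongr
        linarith [hx s hs, four_mul_dni_le_norm_one_sub_fourierChar (x s)]
  have energy_le := (Finset.sum_le_sum tent_le_slope).trans (sum_norm_sq_sum_tent_slope_le T x M)
  rw [← Finset.mul_sum] at energy_le
  have le_energy := card_mul_le_sum_norm_sq_sum_tent T x hM
  set V := ∑ k ∈ Finset.Icc 1 (2 * M), ‖∑ s ∈ T, (𝐞 (k * x s) : ℂ)‖
  have combined : 64 * (T.card / 3 - 4 * V) * M ≤ (2 * T.card + 4 * V) * M :=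
    calc 64 * (T.card / 3 - 4 * V) * M
        = 64 / (M : ℝ) ^ 2 * (T.card * ((M : ℝ) ^ 3 / 3) - 4 * M ^ 3 * V) := by field_simp
      _ ≤ T.card * (2 * M) + 4 * M * V := le_trans (by gcongr) energy_le
      _ = (2 * T.card + 4 * V) * M := by ring
  have V_nonneg : 0 ≤ V := Finset.sum_nonneg fun _ _ ↦ norm_nonneg _
  linarith [le_of_mul_le_mul_right combined M_pos]

theorem card_sq_le_sum_norm_sq_of_le_dni_sub {M : ℕ} (hM : 1 ≤ M) {δ : ℝ}
    (hx : ∀ s ∈ T, 2 / M ≤ dni (x s - δ)) :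
    (T.card : ℝ) ^ 2 ≤
      14 ^ 2 * (2 * M) * ∑ k ∈ Finset.Icc 1 (2 * M), ‖∑ s ∈ T, (𝐞 (k * x s) : ℂ)‖ ^ 2 := by
  have shift (k : ℕ) :
      ‖∑ s ∈ T, (𝐞 (k * (x s - δ)) : ℂ)‖ = ‖∑ s ∈ T, (𝐞 (k * x s) : ℂ)‖ := by
    simp_rw [mul_sub, sub_eq_add_neg, AddChar.map_add_eq_mul, Circle.coe_mul]
    rw [← Finset.sum_mul, norm_mul, Circle.norm_coe, mul_one]
  have card_le := card_le_sum_norm_sum_of_le_dni hM hx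
  simp_rw [shift] at card_le
  calc (T.card : ℝ) ^ 2
      ≤ (14 * ∑ k ∈ Finset.Icc 1 (2 * M), ‖∑ s ∈ T, (𝐞 (k * x s) : ℂ)‖) ^ 2 := by gcongr
    _ = 14 ^ 2 * (∑ k ∈ Finset.Icc 1 (2 * M), ‖∑ s ∈ T, (𝐞 (k * x s) : ℂ)‖) ^ 2 := by ring
    _ ≤ 14 ^ 2 * ((Finset.Icc 1 (2 * M)).card *
          ∑ k ∈ Finset.Icc 1 (2 * M), ‖∑ s ∈ T, (𝐞 (k * x s) : ℂ)‖ ^ 2) := by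
        gcongr
        exact sq_sum_le_card_mul_sum_sq
    _ = _ := by
        rw [Nat.card_Icc, Nat.add_sub_cancel, Nat.cast_mul, Nat.cast_two, ← mul_assoc]

end TestPolynomial

end Tent

theorem measure_exists_forall_le_dni_le {X : Type*} [MeasurableSpace X] (μ : Measure X)
    [IsFiniteMeasure μ] {ι : Type*} {T : Finset ι} (hT : T.Nonempty) {φ : ι → X → ℝ}
    (hφ : ∀ s, Measurable (φ s)) {C : ℝ}
    (hC : ∀ k : ℕ, 1 ≤ k → ∫ x, ‖∑ s ∈ T, (𝐞 (k * φ s x) : ℂ)‖ ^ 2 ∂μ ≤ C * T.card)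
    {M : ℕ} (hM : 1 ≤ M) :
    μ {x | ∃ δ, ∀ s ∈ T, 2 / M ≤ dni (φ s x - δ)} ≤
      ENNReal.ofReal (28 ^ 2 * C * M ^ 2 / T.card) := by
  set f : X → ℝ := fun x ↦ ∑ k ∈ Finset.Icc 1 (2 * M), ‖∑ s ∈ T, (𝐞 (k * φ s x) : ℂ)‖ ^ 2
  have card_pos : (0 : ℝ) < T.card := mod_cast hT.card_pos
  have : (0 : ℝ) < M := mod_cast hM
  have integrable (k : ℕ) : Integrable (fun x ↦ ‖∑ s ∈ T, (𝐞 (k * φ s x) : ℂ)‖ ^ 2) μ := by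
    refine .of_bound (Measurable.aestronglyMeasurable ?_) ((T.card : ℝ) ^ 2) (.of_forall fun x ↦ ?_)
    · exact ((T.measurable_fun_sum fun s _ ↦
        measurable_coe_fourierChar.comp ((hφ s).const_mul _)).norm).pow_const 2
    · rw [norm_pow, norm_norm]
      gcongr
      exact (norm_sum_le _ _).trans (by simp only [Circle.norm_coe, Finset.sum_const, nsmul_one,
        le_refl])
  have subset : {x | ∃ δ, ∀ s ∈ T, 2 / M ≤ dni (φ s x - δ)} ⊆
      {x | (T.card : ℝ) ^ 2 / (14 ^ 2 * (2 * M)) ≤ f x} := by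
    rintro x ⟨δ, hδ⟩
    rw [Set.mem_ofPred_eq, div_le_iff₀' (by positivity)]
    exact card_sq_le_sum_norm_sq_of_le_dni_sub hM hδ
  have integral_le : ∫ x, f x ∂μ ≤ 2 * M * (C * T.card) := by
    rw [integral_finsetSum _ fun k _ ↦ integrable k]
    refine (Finset.sum_le_card_nsmul _ _ _ fun k hk ↦ hC k (Finset.mem_Icc.1 hk).1).trans ?_
    simp
  have markov := mul_meas_ge_le_integral_of_nonneg
    (.of_forall fun x ↦ Finset.sum_nonneg fun _ _ ↦ by positivity)
    (integrable_finsetSum _ fun k _ ↦ integrable k) ((T.card : ℝ) ^ 2 / (14 ^ 2 * (2 * M))) |>.trans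
      integral_le
  refine (measure_mono subset).trans ?_
  rw [← ofReal_measureReal]
  refine ENNReal.ofReal_le_ofReal ?_
  rw [div_mul_eq_mul_div, div_le_iff₀ (by positivity)] at markov
  rw [le_div_iff₀ card_pos]
  refine le_of_mul_le_mul_right ?_ card_pos
  linarith

/-! ### Inhomogeneous approximation along continued fraction denominators -/

theorem exists_mul_dni_sub_le_of_abs_sub_div_le {a : ℝ} {p : ℤ} {q : ℕ} (hq : 1 ≤ q)
    (hpq : IsCoprime p (q : ℤ)) (ha : |a - p / q| ≤ 1 / (q : ℝ) ^ 2) (g : ℝ) :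
    ∃ n : ℕ, q ≤ n ∧ n < 2 * q ∧ n * dni (n * a - g) ≤ 5 := by
  obtain ⟨u, v, bezout⟩ := hpq
  have : (0 : ℝ) < q := by exact_mod_cast hq
  have q_ne_zero : (q : ℤ) ≠ 0 := by exact_mod_cast Nat.one_le_iff_ne_zero.1 hq
  set k : ℤ := round (q * g)
  obtain ⟨m, hm⟩ := Int.eq_ofNat_of_zero_le (Int.emod_nonneg (u * k) q_ne_zero)
  have m_lt : m < q := by
    have := Int.emod_lt_of_pos (u * k) (show (0 : ℤ) < q by exact_mod_cast hq)
    lia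
  set j : ℤ := p - u * k / q * p - k * v
  have congruence : ((q + m : ℕ) : ℝ) * p - k = q * j := by
    have emod_add := Int.emod_add_mul_ediv (u * k) q
    rw [hm] at emod_add
    have : ((q + m : ℕ) : ℤ) * p - k = q * j := by
      push_cast
      linear_combination p * emod_add + k * bezout
    exact_mod_cast this
  have le_two_mul : ((q + m : ℕ) : ℝ) ≤ 2 * q := by exact_mod_cast (by lia : q + m ≤ 2 * q)
  refine ⟨q + m, by lia, by lia, ?_⟩
  generalize q + m = n at congruence le_two_mul
  have decompose : n * a - g - j = n * (a - p / q) + (k - q * g) / q := by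
    field_simp
    linear_combination congruence
  have dni_le : dni (n * a - g) ≤ 2 * q * (1 / (q : ℝ) ^ 2) + 1 / 2 / q := by
    refine (dni_le_abs_sub_intCast _ j).trans ?_
    rw [decompose]
    refine (abs_add_le _ _).trans (add_le_add ?_ ?_)
    · rw [abs_mul, Nat.abs_cast]
      gcongr
    · rw [abs_div, Nat.abs_cast, abs_sub_comm]
      gcongr
      exact abs_sub_round _
  calc n * dni (n * a - g) ≤ 2 * q * (2 * q * (1 / (q : ℝ) ^ 2) + 1 / 2 / q) :=
        mul_le_mul le_two_mul dni_le (dni_nonneg _) (by positivity)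
    _ = 5 := by field_simp; norm_num

section Convergents

open GenContFract

theorem exists_contsAux_eq_intCast (a : ℝ) (t : ℕ) :
    ∃ p q : ℤ, (GenContFract.of a).contsAux t = ⟨p, q⟩ := by
  induction t using Nat.twoStepInduction with
  | zero => exact ⟨1, 0, by simp [contsAux]⟩
  | one => exact ⟨⌊a⌋, 1, by simp [contsAux, of_h_eq_floor]⟩
  | more t ih ih' =>
    obtain ⟨p, q, hpq⟩ := ih
    obtain ⟨p', q', hpq'⟩ := ih'
    rcases hs : (GenContFract.of a).s.get? t with _ | ⟨b, c⟩
    · exact ⟨p', q', by rw [contsAux_stable_step_of_terminated hs, hpq']⟩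
    · obtain ⟨hb, z, hz⟩ := of_partNum_eq_one_and_exists_int_partDen_eq hs
      refine ⟨z * p' + p, z * q' + q, ?_⟩
      rw [contsAux_recurrence hs hpq hpq']
      simp only at hb hz
      simp [hb, hz]

theorem one_le_dens_of (a : ℝ) (t : ℕ) : 1 ≤ (GenContFract.of a).dens t :=
  zeroth_den_eq_one.symm.trans_le <|
    monotone_nat_of_le_succ (f := (GenContFract.of a).dens) (fun _ ↦ of_den_mono) t.zero_le

theorem exists_nums_eq_dens_eq (a : ℝ) (t : ℕ) :
    ∃ (p : ℤ) (q : ℕ), (GenContFract.of a).nums t = p ∧ (GenContFract.of a).dens t = q := by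
  obtain ⟨p, q, hpq⟩ := exists_contsAux_eq_intCast a (t + 1)
  have dens_eq : (GenContFract.of a).dens t = q := congr_arg Pair.b hpq
  have q_nonneg : 0 ≤ q := by
    exact_mod_cast dens_eq ▸ zero_le_one.trans (one_le_dens_of a t)
  lift q to ℕ using q_nonneg
  exact ⟨p, q, congr_arg Pair.a hpq, dens_eq⟩

variable {a : ℝ} (ha : Irrational a)

include ha

theorem not_terminatedAt_of_irrational (t : ℕ) : ¬(GenContFract.of a).TerminatedAt t := fun ht ↦ by
  obtain ⟨r, hr⟩ := (terminates_iff_rat a).1 ⟨t, ht⟩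
  exact ha ⟨r, hr.symm⟩

theorem isCoprime_of_nums_eq_of_dens_eq {t : ℕ} {p q : ℤ} (hp : (GenContFract.of a).nums t = p)
    (hq : (GenContFract.of a).dens t = q) : IsCoprime p q := by
  obtain ⟨p', q', hp', hq'⟩ := exists_nums_eq_dens_eq a (t + 1)
  have det := (SimpContFract.of a).determinant (not_terminatedAt_of_irrational ha t)
  simp only [SimpContFract.of, hp, hq, hp', hq'] at det
  have det_int : p * q' - q * p' = (-1) ^ (t + 1) := by exact_mod_cast det
  have sign_sq : ((-1 : ℤ) ^ (t + 1)) ^ 2 = 1 := by rw [← pow_mul, pow_mul', neg_one_sq, one_pow]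
  refine ⟨(-1) ^ (t + 1) * q', -((-1) ^ (t + 1) * p'), ?_⟩
  linear_combination (-1) ^ (t + 1) * det_int + sign_sq

theorem two_mul_dens_le (t : ℕ) :
    2 * (GenContFract.of a).dens t ≤ (GenContFract.of a).dens (t + 2) := by
  obtain ⟨gp, hgp⟩ := Option.ne_none_iff_exists'.1 (not_terminatedAt_of_irrational ha (t + 1))
  have one_le_b : 1 ≤ gp.b := of_one_le_get?_partDen (partDen_eq_s_b hgp)
  have mono : (GenContFract.of a).dens t ≤ (GenContFract.of a).dens (t + 1) := of_den_mono
  rw [dens_recurrence hgp rfl rfl, (of_partNum_eq_one_and_exists_int_partDen_eq hgp).1]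
  nlinarith [one_le_dens_of a (t + 1)]

theorem abs_sub_nums_div_dens_le (t : ℕ) :
    |a - (GenContFract.of a).nums t / (GenContFract.of a).dens t| ≤
      1 / (GenContFract.of a).dens t ^ 2 := by
  have dens_pos := one_pos.trans_le (one_le_dens_of a t)
  rw [← conv_eq_num_div_den]
  refine (abs_sub_convs_le (not_terminatedAt_of_irrational ha t)).trans ?_
  rw [sq]
  gcongr
  exact of_den_mono

end Convergents

/-- A sequence growing at least geometrically with ratio `2` of solutions of
`n * ‖n * a - g‖ ≤ 5`, as produced by Minkowski's argument. -/
structure IsLacunaryApproximation (a g : ℝ) (n : ℕ → ℕ) : Prop where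
  one_le_zero : 1 ≤ n 0
  two_mul_le (s : ℕ) : 2 * n s ≤ n (s + 1)
  mul_dni_le (s : ℕ) : n s * dni (n s * a - g) ≤ 5

theorem IsLacunaryApproximation.two_pow_le {a g : ℝ} {n : ℕ → ℕ}
    (hn : IsLacunaryApproximation a g n) (s : ℕ) : 2 ^ s ≤ n s := by
  induction s with
  | zero => exact hn.one_le_zero
  | succ s ih => grind [hn.two_mul_le s]

theorem IsLacunaryApproximation.tendsto_atTop {a g : ℝ} {n : ℕ → ℕ}
    (hn : IsLacunaryApproximation a g n) : Tendsto n atTop atTop :=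
  tendsto_atTop_mono hn.two_pow_le (tendsto_pow_atTop_atTop_of_one_lt one_lt_two)

theorem exists_isLacunaryApproximation_lt_qden {a : ℝ} (ha : Irrational a) (g : ℝ) :
    ∃ n, IsLacunaryApproximation a g n ∧ ∀ s, (n s : ℝ) < 2 * qden a (4 * s) := by
  have approx (t : ℕ) : ∃ n : ℕ, qden a t ≤ n ∧ (n : ℝ) < 2 * qden a t ∧
      n * dni (n * a - g) ≤ 5 := by
    obtain ⟨p, q, hp, hq⟩ := exists_nums_eq_dens_eq a t
    have one_le := one_le_dens_of a t
    have abs_sub_le := abs_sub_nums_div_dens_le ha t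
    rw [hp, hq] at abs_sub_le
    rw [hq] at one_le
    obtain ⟨n, hqn, hnq, hn⟩ := exists_mul_dni_sub_le_of_abs_sub_div_le (by exact_mod_cast one_le)
      (isCoprime_of_nums_eq_of_dens_eq ha hp (by exact_mod_cast hq)) abs_sub_le g
    rw [qden, hq]
    exact ⟨n, by exact_mod_cast hqn, by exact_mod_cast hnq, hn⟩
  choose n qden_le lt_qden mul_dni_le using fun s ↦ approx (4 * s)
  refine ⟨n, ⟨?_, fun s ↦ ?_, mul_dni_le⟩, lt_qden⟩
  · exact_mod_cast (one_le_dens_of a 0).trans (qden_le 0)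
  · have : (2 * n s : ℝ) ≤ n (s + 1) := by
      have := two_mul_dens_le ha (4 * s)
      have := two_mul_dens_le ha (4 * s + 2)
      have := lt_qden s
      have := qden_le (s + 1)
      rw [qden] at *
      rw [mul_add_one] at *
      linarith
    exact_mod_cast this

theorem exists_isLacunaryApproximation_log_le {a : ℝ} (ha : a ∈ KSet) (g : ℝ) :
    ∃ n, IsLacunaryApproximation a g n ∧ ∃ L > 0, ∀ s : ℕ, log (n s) ≤ L * (s + 1) := by
  obtain ⟨irrational, K, hK⟩ := ha
  obtain ⟨n, hn, lt_qden⟩ := exists_isLacunaryApproximation_lt_qden irrational g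
  have log_qden_le (s : ℕ) : log (qden a (4 * s)) ≤ 4 * |K| * s := by
    rcases s.eq_zero_or_pos with rfl | hs
    · simp [qden]
    · have := (div_le_iff₀ (by positivity)).1 (hK (4 * s) (by lia))
      push_cast at this
      nlinarith [le_abs_self K, (Nat.cast_nonneg s : (0 : ℝ) ≤ s)]
  refine ⟨n, hn, 4 * |K| + 1, by positivity, fun s ↦ ?_⟩
  have n_pos : (0 : ℝ) < n s := by exact_mod_cast (Nat.two_pow_pos s).trans_le (hn.two_pow_le s)
  calc log (n s) ≤ log (2 * qden a (4 * s)) := log_le_log n_pos (lt_qden s).le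
    _ = log 2 + log (qden a (4 * s)) :=
      log_mul two_ne_zero (one_pos.trans_le (one_le_dens_of a _)).ne'
    _ ≤ 1 + 4 * |K| * s := add_le_add (log_two_lt_d9.le.trans (by norm_num)) (log_qden_le s)
    _ ≤ (4 * |K| + 1) * (s + 1) := by nlinarith [abs_nonneg K, (Nat.cast_nonneg s : (0 : ℝ) ≤ s)]

theorem liminf_mul_dni_pos {a g c : ℝ} (ha : Irrational a) (hc : 0 < c)
    (h : ∀ n : ℕ, 1 ≤ n → c ≤ n * dni (n * a - g)) :
    0 < atTop.liminf fun n : ℕ ↦ n * dni (n * a - g) := by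
  obtain ⟨n, hn, -⟩ := exists_isLacunaryApproximation_lt_qden ha g
  have frequently_le : ∃ᶠ m : ℕ in atTop, m * dni (m * a - g) ≤ 5 :=
    hn.tendsto_atTop.frequently (Frequently.of_forall hn.mul_dni_le)
  exact hc.trans_le <| le_liminf_of_le (IsCoboundedUnder.of_frequently_le frequently_le)
    (eventually_ge_atTop 1 |>.mono h)

theorem mk_mem_BSet {b d c : ℝ} (hc : 0 < c) (hb : ∀ n : ℕ, 1 ≤ n → c ≤ n * dni (n * b))
    (hd : ∀ n : ℕ, 1 ≤ n → c ≤ n * dni (n * b - d)) : (b, d) ∈ BSet := by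
  have irrational : Irrational b := by
    rintro ⟨r, rfl⟩
    have dni_eq_zero : dni (r.den * r) = 0 := by
      rw [show (r.den * r : ℝ) = r.num by exact_mod_cast r.den_mul_eq_num, dni, round_intCast,
        sub_self, abs_zero]
    exact (hb r.den r.pos).not_gt (by rwa [dni_eq_zero, mul_zero])
  have liminf_pos := liminf_mul_dni_pos irrational hc (g := 0) (by simpa only [sub_zero] using hb)
  simp only [sub_zero] at liminf_pos
  exact ⟨liminf_pos, liminf_mul_dni_pos irrational hc hd⟩

theorem measure_exists_forall_div_sqrt_le_dni_le {μ : Measure ℝ} [IsProbabilityMeasure μ]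
    {φ : ℕ → ℝ → ℝ} (hφ : ∀ s, Measurable (φ s)) {C : ℝ} {K : ℕ} (hK : 1 ≤ K)
    (hC : ∀ k : ℕ, 1 ≤ k → ∫ x, ‖∑ s ∈ Finset.Ioc K (2 * K), (𝐞 (k * φ s x) : ℂ)‖ ^ 2 ∂μ ≤ C * K)
    {c : ℝ} (hc : 0 < c) (hcK : c ≤ 2 * √K) :
    μ {x | ∃ δ, ∀ s ∈ Finset.Ioc K (2 * K), c / √K ≤ dni (φ s x - δ)} ≤
      ENNReal.ofReal (28 ^ 2 * C * (16 / c ^ 2)) := by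
  have card_eq : (Finset.Ioc K (2 * K)).card = K := by simp [two_mul]
  have sqrt_pos : 0 < √(K : ℝ) := Real.sqrt_pos.2 (by exact_mod_cast hK)
  have C_nonneg : 0 ≤ C := by
    refine nonneg_of_mul_nonneg_left ((integral_nonneg fun x ↦ ?_).trans (hC 1 le_rfl))
      (by exact_mod_cast hK)
    positivity
  set M : ℕ := ⌈2 * √K / c⌉₊
  have one_le : 1 ≤ 2 * √K / c := (one_le_div hc).2 hcK
  have le_M : 2 * √K / c ≤ M := Nat.le_ceil _
  have M_le : M ≤ 2 * (2 * √K / c) := (Nat.ceil_lt_add_one (by positivity)).le.trans (by linarith)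
  have M_pos : (0 : ℝ) < M := one_pos.trans_le (one_le.trans le_M)
  have two_div_le : 2 / M ≤ c / √K := by
    rw [div_le_div_iff₀ M_pos sqrt_pos]
    rwa [div_le_iff₀' hc] at le_M
  have bound := measure_exists_forall_le_dni_le μ (T := Finset.Ioc K (2 * K)) (M := M) (C := C)
    (Finset.card_pos.1 (by rwa [card_eq])) hφ (by rwa [card_eq]) (by exact_mod_cast M_pos)
  rw [card_eq] at bound
  refine (measure_mono fun x ↦ ?_).trans (bound.trans (ENNReal.ofReal_le_ofReal ?_))
  · exact fun ⟨δ, hδ⟩ ↦ ⟨δ, fun s hs ↦ two_div_le.trans (hδ s hs)⟩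
  · rw [mul_div_assoc]
    refine mul_le_mul_of_nonneg_left ?_ (by positivity)
    calc (M : ℝ) ^ 2 / K ≤ (2 * (2 * √K / c)) ^ 2 / K := by gcongr
      _ = 16 / c ^ 2 := by
        rw [mul_pow, div_pow, mul_pow, Real.sq_sqrt K.cast_nonneg]
        field_simp
        norm_num

section

variable {a g L : ℝ} {n : ℕ → ℕ} {ψ : ℕ → ℝ}

theorem IsLacunaryApproximation.div_sqrt_le_dni (hn : IsLacunaryApproximation a g n)
    (hL₀ : 0 < L) (hL : ∀ s : ℕ, log (n s) ≤ L * (s + 1)) {A : ℝ} (hA : 0 ≤ A) {β δ : ℝ} {K s : ℕ}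
    (hs : s ∈ Finset.Ioc K (2 * K)) (hψ : A ≤ ψ (n s))
    (hδ : ψ (n s) / log (n s) ^ (1 / 2 : ℝ) ≤ n s * dni (n s * a - g) * dni (n s * β - δ)) :
    A / (5 * √(3 * L)) / √K ≤ dni (n s * β - δ) := by
  obtain ⟨K_lt, s_le⟩ := Finset.mem_Ioc.1 hs
  have one_lt : (1 : ℝ) < n s := by
    exact_mod_cast (Nat.one_lt_two_pow (by lia)).trans_le (hn.two_pow_le s)
  have log_pos : 0 < log (n s) := Real.log_pos one_lt
  have log_le : log (n s) ≤ 3 * L * K := by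
    have : (s : ℝ) + 1 ≤ 3 * K := by exact_mod_cast (by lia : s + 1 ≤ 3 * K)
    exact (hL s).trans (by nlinarith)
  have ψ_nonneg : 0 ≤ ψ (n s) := hA.trans hψ
  rw [div_div, mul_assoc, ← Real.sqrt_mul (by positivity)]
  calc A / (5 * √(3 * L * K)) ≤ ψ (n s) / (5 * √(log (n s))) := by gcongr
    _ = ψ (n s) / log (n s) ^ (1 / 2 : ℝ) / 5 := by rw [← Real.sqrt_eq_rpow]; ring
    _ ≤ dni (n s * β - δ) := by
      rw [div_le_iff₀' (by norm_num)]
      exact hδ.trans (mul_le_mul_of_nonneg_right (hn.mul_dni_le s) (dni_nonneg _))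

variable {μ : Measure ℝ} [IsProbabilityMeasure μ] {D η : ℝ}

theorem measure_exists_forall_div_sqrt_log_le_eq_zero (hη : 0 < η)
    (hμ : ∀ m : ℕ, 1 ≤ m → ‖∫ x, (𝐞 (m * x) : ℂ) ∂μ‖ ≤ D * (m : ℝ) ^ (-η))
    (hψ : Tendsto ψ atTop atTop) (ha : a ∈ KSet) (N : ℕ) :
    μ {β | ∃ δ, ∀ m ≥ N, ψ m / log m ^ (1 / 2 : ℝ) ≤ m * dni (m * a - g) * dni (m * β - δ)} =
      0 := by
  obtain ⟨n, hn, L, hL₀, hL⟩ := exists_isLacunaryApproximation_log_le ha g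
  set C := (D * 2 ^ η + 1) * (2 * (1 - 2 ^ (-η))⁻¹)
  have frequency_le (K k : ℕ) (hk : 1 ≤ k) :
      ∫ x, ‖∑ s ∈ Finset.Ioc K (2 * K), (𝐞 (k * (n s * x)) : ℂ)‖ ^ 2 ∂μ ≤ C * K := by
    have := integral_norm_sq_sum_fourierChar_le_of_lacunary (n := fun s ↦ k * n s) hη hμ
      (Right.one_le_mul hk hn.one_le_zero)
      (fun s ↦ by grind [Nat.mul_le_mul_left k (hn.two_mul_le s)]) (Finset.Ioc K (2 * K))
    simpa only [Nat.cast_mul, mul_assoc, Nat.card_Ioc, two_mul, Nat.add_sub_cancel, C] using this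
  have le_of_pos (c : ℝ) (hc : 0 < c) :
      μ {β | ∃ δ, ∀ m ≥ N, ψ m / log m ^ (1 / 2 : ℝ) ≤ m * dni (m * a - g) * dni (m * β - δ)} ≤
        ENNReal.ofReal (28 ^ 2 * C * (16 / c ^ 2)) := by
    have eventually_le : ∀ᶠ K in atTop, ∀ s ≥ K, c * (5 * √(3 * L)) ≤ ψ (n s) ∧ N ≤ n s :=
      eventually_forall_ge_atTop.2 <| ((hψ.comp hn.tendsto_atTop).eventually_ge_atTop _).and
        (hn.tendsto_atTop.eventually_ge_atTop N)
    have sqrt_large : ∀ᶠ K : ℕ in atTop, c ≤ 2 * √K :=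
      ((tendsto_sqrt_atTop.comp tendsto_natCast_atTop_atTop).const_mul_atTop
        two_pos).eventually_ge_atTop c
    obtain ⟨K, hK, hcK, one_le⟩ :=
      (eventually_le.and (sqrt_large.and (eventually_ge_atTop 1))).exists
    refine (measure_mono ?_).trans (measure_exists_forall_div_sqrt_le_dni_le
      (fun s ↦ measurable_const_mul _) one_le (frequency_le K) hc hcK)
    rintro β ⟨δ, hδ⟩
    refine ⟨δ, fun s hs ↦ ?_⟩
    obtain ⟨le_ψ, N_le⟩ := hK s (Finset.mem_Ioc.1 hs).1.le
    have := hn.div_sqrt_le_dni hL₀ hL (by positivity) hs le_ψ (hδ _ N_le)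
    rwa [mul_div_cancel_right₀ _ (by positivity)] at this
  have tendsto_zero : Tendsto (fun c : ℕ ↦ ENNReal.ofReal (28 ^ 2 * C * (16 / (c : ℝ) ^ 2))) atTop
      (nhds 0) := by
    have := ((tendsto_natCast_atTop_atTop (R := ℝ)).comp (tendsto_pow_atTop two_ne_zero))
    simpa [div_eq_mul_inv] using ENNReal.tendsto_ofReal
      ((this.inv_tendsto_atTop.const_mul (16 : ℝ)).const_mul (28 ^ 2 * C))
  exact le_antisymm (ge_of_tendsto tendsto_zero <|
    (eventually_gt_atTop 0).mono fun c hc ↦ le_of_pos c (Nat.cast_pos.2 hc)) bot_le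

theorem ae_forall_frequently_mul_dni_lt (hη : 0 < η)
    (hμ : ∀ m : ℕ, 1 ≤ m → ‖∫ x, (𝐞 (m * x) : ℂ) ∂μ‖ ≤ D * (m : ℝ) ^ (-η))
    (hψ : Tendsto ψ atTop atTop) (ha : a ∈ KSet) (g : ℝ) :
    ∀ᵐ β ∂μ, ∀ δ, ∃ᶠ m : ℕ in atTop,
      m * dni (m * a - g) * dni (m * β - δ) < ψ m / log m ^ (1 / 2 : ℝ) := by
  have ae_notMem (N : ℕ) := measure_eq_zero_iff_ae_notMem.1
    (measure_exists_forall_div_sqrt_log_le_eq_zero (g := g) hη hμ hψ ha N)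
  filter_upwards [ae_all_iff.2 ae_notMem] with β hβ δ
  refine frequently_atTop.2 fun N ↦ ?_
  by_contra! h
  exact hβ N ⟨δ, h⟩

end

/-! ### Inhomogeneously badly approximable shifts outside a thin cover -/

theorem card_le_succ_of_forall_le_add (S : Finset ℕ) (m : ℕ)
    (h : ∀ i ∈ S, ∀ j ∈ S, j ≤ i + m) : S.card ≤ m + 1 := by
  obtain rfl | hS := S.eq_empty_or_nonempty
  · simp
  have subset : S ⊆ Finset.Icc (S.min' hS) (S.min' hS + m) := fun j hj ↦
    Finset.mem_Icc.2 ⟨S.min'_le j hj, h _ (S.min'_mem hS) j hj⟩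
  have card_le := Finset.card_le_card subset
  rw [Nat.card_Icc] at card_le
  lia

section

variable {R i j m : ℕ} {a r x y : ℝ}

theorem Icc_add_mul_subset (hr : 0 ≤ r) (hi : i < R) :
    Set.Icc (a + i * r) (a + i * r + r) ⊆ Set.Icc a (a + R * r) := by
  have succ_le : ((i : ℝ) + 1) * r ≤ R * r := by
    gcongr
    exact_mod_cast hi
  have mul_nonneg : (0 : ℝ) ≤ i * r := by positivity
  exact Set.Icc_subset_Icc (by linarith) (by linarith)

theorem le_add_of_abs_sub_lt (hr : 0 < r) (hx : x ∈ Set.Icc (a + i * r) (a + i * r + r))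
    (hy : y ∈ Set.Icc (a + j * r) (a + j * r + r)) (hxy : |x - y| < m * r) : j ≤ i + m := by
  have mul_lt : ((j : ℝ) - i - 1) * r < m * r := by
    linarith [hx.2, hy.1, neg_abs_le (x - y)]
  have lt_succ : (j : ℝ) < i + m + 1 := by linarith [lt_of_mul_lt_mul_right mul_lt hr.le]
  exact Nat.lt_succ_iff.1 (by exact_mod_cast lt_succ)

end

/-- The `t`-dimensional weight of those members of the cover `V` that meet `J`, where `d n` bounds
the diameter of `V n`. -/
noncomputable def coverWeight (V : ℕ → Set ℝ) (d : ℕ → ℝ) (t : ℝ) (J : Set ℝ) : ENNReal :=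
  ∑' n, {n | (V n ∩ J).Nonempty}.indicator (fun n ↦ ENNReal.ofReal (d n ^ t)) n

section

variable {V : ℕ → Set ℝ} {d : ℕ → ℝ} {t : ℝ} {J J' : Set ℝ} {n R : ℕ} {a r : ℝ}

theorem coverWeight_mono (hJ : J ⊆ J') : coverWeight V d t J ≤ coverWeight V d t J' :=
  ENNReal.tsum_le_tsum fun n ↦ Set.indicator_le_indicator_of_subset
    (fun _ hn ↦ hn.mono (Set.inter_subset_inter_right _ hJ)) (fun _ ↦ zero_le) n

theorem lt_of_coverWeight_lt (ht : 0 < t) (hd : 0 ≤ d n) (hr : 0 ≤ r)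
    (hn : (V n ∩ J).Nonempty) (hJ : coverWeight V d t J < ENNReal.ofReal (r ^ t)) : d n < r := by
  have le_weight : ENNReal.ofReal (d n ^ t) ≤ coverWeight V d t J :=
    (Set.indicator_of_mem (show n ∈ {n | (V n ∩ J).Nonempty} from hn)
      fun n ↦ ENNReal.ofReal (d n ^ t)).symm.trans_le (ENNReal.le_tsum n)
  have ofReal_lt := le_weight.trans_lt hJ
  rw [ENNReal.ofReal_lt_ofReal_iff_of_nonneg (by positivity)] at ofReal_lt
  exact (Real.rpow_lt_rpow_iff hd hr ht).1 ofReal_lt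

theorem sum_indicator_inter_Icc_nonempty_le (hr : 0 < r)
    (hn : ∀ x ∈ V n, ∀ y ∈ V n, |x - y| < r) (w : ENNReal) :
    ∑ i ∈ Finset.range R,
        {n | (V n ∩ Set.Icc (a + i * r) (a + i * r + r)).Nonempty}.indicator (fun _ ↦ w) n ≤
      2 * w := by
  classical
  simp only [Set.indicator_apply, Set.mem_ofPred_eq]
  rw [← Finset.sum_filter, Finset.sum_const, nsmul_eq_mul]
  gcongr
  refine Nat.cast_le_ofNat.2 (card_le_succ_of_forall_le_add _ 1 fun i hi j hj ↦ ?_)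
  obtain ⟨x, hxV, hx⟩ := (Finset.mem_filter.1 hi).2
  obtain ⟨y, hyV, hy⟩ := (Finset.mem_filter.1 hj).2
  exact le_add_of_abs_sub_lt hr hx hy (by simpa using hn x hxV y hyV)

theorem sum_coverWeight_le (ht : 0 < t) (hd : ∀ n, 0 ≤ d n)
    (hV : ∀ n, ∀ x ∈ V n, ∀ y ∈ V n, |x - y| ≤ d n) (hr : 0 < r)
    (hJ : coverWeight V d t (Set.Icc a (a + R * r)) < ENNReal.ofReal (r ^ t)) :
    ∑ i ∈ Finset.range R, coverWeight V d t (Set.Icc (a + i * r) (a + i * r + r)) ≤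
      2 * coverWeight V d t (Set.Icc a (a + R * r)) := by
  classical
  simp only [coverWeight]
  rw [← ENNReal.tsum_mul_left, ← Summable.tsum_finsetSum fun _ _ ↦ ENNReal.summable]
  refine ENNReal.tsum_le_tsum fun n ↦ ?_
  by_cases hn : (V n ∩ Set.Icc a (a + R * r)).Nonempty
  · have d_lt : d n < r := lt_of_coverWeight_lt ht (hd n) hr.le hn hJ
    rw [Set.indicator_of_mem (show n ∈ {n | (V n ∩ Set.Icc a (a + R * r)).Nonempty} from hn)]
    exact sum_indicator_inter_Icc_nonempty_le hr
      (fun x hx y hy ↦ (hV n x hx y hy).trans_lt d_lt) _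
  · refine (Finset.sum_eq_zero fun i hi ↦ Set.indicator_of_notMem (fun hni ↦ hn ?_) _).trans_le
      zero_le
    exact hni.mono (Set.inter_subset_inter_right _
      (Icc_add_mul_subset hr.le (Finset.mem_range.1 hi)))

open Classical in
theorem card_le_coverWeight_le (ht : 0 < t) (hd : ∀ n, 0 ≤ d n)
    (hV : ∀ n, ∀ x ∈ V n, ∀ y ∈ V n, |x - y| ≤ d n) (hr : 0 < r) (hR : 0 < R)
    (hJ : coverWeight V d t (Set.Icc a (a + R * r)) < ENNReal.ofReal (r ^ t)) :
    (((Finset.range R).filter fun i : ℕ ↦ ENNReal.ofReal ((r / R) ^ t) ≤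
      coverWeight V d t (Set.Icc (a + i * r) (a + i * r + r))).card : ℝ) ≤ 2 * (R : ℝ) ^ t := by
  set heavy := (Finset.range R).filter fun i : ℕ ↦ ENNReal.ofReal ((r / R) ^ t) ≤
    coverWeight V d t (Set.Icc (a + i * r) (a + i * r + r))
  have R_pos : (0 : ℝ) < R := by exact_mod_cast hR
  have ofReal_le : (heavy.card : ENNReal) * ENNReal.ofReal ((r / R) ^ t) ≤
      2 * ENNReal.ofReal (r ^ t) := by
    calc (heavy.card : ENNReal) * ENNReal.ofReal ((r / R) ^ t)
        = ∑ _i ∈ heavy, ENNReal.ofReal ((r / R) ^ t) := by rw [Finset.sum_const, nsmul_eq_mul]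
      _ ≤ ∑ i ∈ heavy, coverWeight V d t (Set.Icc (a + i * r) (a + i * r + r)) :=
        Finset.sum_le_sum fun i hi ↦ (Finset.mem_filter.1 hi).2
      _ ≤ ∑ i ∈ Finset.range R, coverWeight V d t (Set.Icc (a + i * r) (a + i * r + r)) :=
        Finset.sum_le_sum_of_subset (Finset.filter_subset _ _)
      _ ≤ 2 * ENNReal.ofReal (r ^ t) :=
        (sum_coverWeight_le ht hd hV hr hJ).trans (by gcongr)
  have card_mul_le : (heavy.card : ℝ) * (r / R) ^ t ≤ 2 * r ^ t := by
    rw [← ENNReal.ofReal_le_ofReal_iff (by positivity), ENNReal.ofReal_mul (by positivity),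
      ENNReal.ofReal_mul two_pos.le, ENNReal.ofReal_natCast, ENNReal.ofReal_ofNat]
    exact ofReal_le
  rw [Real.div_rpow hr.le R_pos.le, mul_div_assoc', div_le_iff₀ (by positivity)] at card_mul_le
  refine le_of_mul_le_mul_right (card_mul_le.trans_eq ?_) (by positivity : 0 < r ^ t)
  ring

end

theorem dni_eq_abs {x : ℝ} (hx : |x| ≤ 1 / 2) : dni x = |x| := by
  rw [dni_eq_norm, AddCircle.norm_coe_eq_abs_iff 1 one_ne_zero, abs_one]
  exact hx

section

variable {b c : ℝ}

theorem le_half_of_forall_le_mul_dni (hb : ∀ n : ℕ, 1 ≤ n → c ≤ n * dni (n * b)) : c ≤ 1 / 2 := by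
  refine (hb 1 le_rfl).trans ?_
  rw [Nat.cast_one, one_mul]
  exact abs_sub_round _

theorem eq_of_dni_mul_sub_lt (hb : ∀ n : ℕ, 1 ≤ n → c ≤ n * dni (n * b)) {p q : ℕ} {l x y : ℝ}
    (hp : 4 * p * l < c) (hq : 4 * q * l < c) (hx : dni (p * b - x) < l)
    (hy : dni (q * b - y) < l) (hxy : |x - y| ≤ l) : p = q := by
  wlog hpq : p < q generalizing p q x y
  · rcases eq_or_lt_of_not_gt hpq with h | h
    · exact h.symm
    · exact (this hq hp hy hx (by rwa [abs_sub_comm]) h).symm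
  exfalso
  have l_pos : 0 < l := (dni_nonneg _).trans_lt hx
  have dni_le : dni ((q - p : ℕ) * b) ≤ 3 * l := by
    rw [Nat.cast_sub hpq.le, show ((q : ℝ) - p) * b = (q * b - y) - (p * b - x) - (x - y) by ring]
    have := dni_sub_le (q * b - y - (p * b - x)) (x - y)
    have := dni_sub_le (q * b - y) (p * b - x)
    have := dni_le_abs_sub_intCast (x - y) 0
    rw [Int.cast_zero, sub_zero] at this
    linarith
  have c_le : c ≤ q * (3 * l) :=
    (hb (q - p) (by lia)).trans (mul_le_mul (by simp) dni_le (dni_nonneg _) (by positivity))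
  linarith [show 0 ≤ q * l by positivity]

theorem abs_sub_lt_of_dni_mul_sub_lt (hb : ∀ n : ℕ, 1 ≤ n → c ≤ n * dni (n * b)) {p q : ℕ}
    {l r x y : ℝ} (hrl : r ≤ l) (hp₁ : 1 ≤ p) (hp : 4 * p * l < c) (hq : 4 * q * l < c)
    (hx : dni (p * b - x) < r) (hy : dni (q * b - y) < r) (hxy : |x - y| ≤ l) :
    |x - y| < 2 * r := by
  obtain rfl : p = q := eq_of_dni_mul_sub_lt hb hp hq (hx.trans_le hrl) (hy.trans_le hrl) hxy
  have l_le : l ≤ 1 / 2 := by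
    have : (1 : ℝ) ≤ p := by exact_mod_cast hp₁
    nlinarith [le_half_of_forall_le_mul_dni hb, dni_nonneg (p * b - x)]
  have := dni_sub_le (p * b - y) (p * b - x)
  rw [← dni_eq_abs (hxy.trans l_le), show x - y = p * b - y - (p * b - x) by ring]
  linarith

end

/-- A stage of a Cantor construction, with `R` children per interval: on the interval `[a, a + l]`
the cover `V` has little weight, and the points of the interval are already known to satisfy the
inhomogeneous condition for all `q` below `c / (4 R l)`. -/
structure IsSafeInterval (b c : ℝ) (R : ℕ) (V : ℕ → Set ℝ) (d : ℕ → ℝ) (t a l : ℝ) : Prop where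
  coverWeight_lt : coverWeight V d t (Set.Icc a (a + l)) < ENNReal.ofReal ((l / R) ^ t)
  le_mul_dni : ∀ q : ℕ, 1 ≤ q → 4 * R * q * l < c → ∀ x ∈ Set.Icc a (a + l),
    c / (4 * R ^ 2) ≤ q * dni (q * b - x)

namespace IsSafeInterval

variable {b c : ℝ} {R : ℕ} {V : ℕ → Set ℝ} {d : ℕ → ℝ} {t a l : ℝ}

theorem dni_mul_sub_lt (hI : IsSafeInterval b c R V d t a l) (hR : 0 < R) {q : ℕ} (hq : 1 ≤ q)
    {x : ℝ} (hx : x ∈ Set.Icc a (a + l)) (hqx : q * dni (q * b - x) < c / (4 * R ^ 2)) :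
    dni (q * b - x) < l / R := by
  have c_le : c ≤ 4 * R * q * l := by
    by_contra! lt_c
    exact hqx.not_ge (hI.le_mul_dni q hq lt_c x hx)
  have : (0 : ℝ) < R := by exact_mod_cast hR
  refine lt_of_mul_lt_mul_left (hqx.trans_le ?_) q.cast_nonneg
  rw [div_le_iff₀ (by positivity)]
  exact c_le.trans_eq (by field_simp)

open Classical in
theorem card_exists_mul_dni_lt_le (hI : IsSafeInterval b c R V d t a l) (hR : 0 < R) (hl : 0 < l)
    (hb : ∀ n : ℕ, 1 ≤ n → c ≤ n * dni (n * b)) :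
    ((Finset.range R).filter fun i : ℕ ↦
      ∃ x ∈ Set.Icc (a + i * (l / R)) (a + i * (l / R) + l / R),
        ∃ q : ℕ, 1 ≤ q ∧ 4 * q * l < c ∧ q * dni (q * b - x) < c / (4 * R ^ 2)).card ≤ 3 := by
  have one_le_R : (1 : ℝ) ≤ R := by exact_mod_cast hR
  have r_pos : 0 < l / R := by positivity
  have mul_r : R * (l / R) = l := by field_simp
  refine card_le_succ_of_forall_le_add _ 2 fun i hi j hj ↦ ?_
  obtain ⟨hiR, x, hx, p, hp₁, hp, hpx⟩ := Finset.mem_filter.1 hi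
  obtain ⟨hjR, y, hy, q, hq₁, hq, hqy⟩ := Finset.mem_filter.1 hj
  have hx' := mul_r ▸ Icc_add_mul_subset (a := a) r_pos.le (Finset.mem_range.1 hiR) hx
  have hy' := mul_r ▸ Icc_add_mul_subset (a := a) r_pos.le (Finset.mem_range.1 hjR) hy
  have abs_sub_le : |x - y| ≤ l :=
    abs_sub_le_iff.2 ⟨by linarith [hx'.2, hy'.1], by linarith [hx'.1, hy'.2]⟩
  refine le_add_of_abs_sub_lt r_pos hx hy ?_
  exact_mod_cast abs_sub_lt_of_dni_mul_sub_lt hb (div_le_self hl.le one_le_R) hp₁ hp hq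
    (hI.dni_mul_sub_lt hR hp₁ hx' hpx) (hI.dni_mul_sub_lt hR hq₁ hy' hqy) abs_sub_le

/-- At most three children contain a point violating the inhomogeneous condition for the next range
of `q`, since such `q` and the nearest integer are unique; at most `2 R ^ t` are heavy. -/
theorem exists_child (hI : IsSafeInterval b c R V d t a l) (hl : 0 < l)
    (hb : ∀ n : ℕ, 1 ≤ n → c ≤ n * dni (n * b)) (ht : 0 < t) (hR : 2 * (R : ℝ) ^ t + 3 < R)
    (hd : ∀ n, 0 ≤ d n) (hV : ∀ n, ∀ x ∈ V n, ∀ y ∈ V n, |x - y| ≤ d n) :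
    ∃ a', Set.Icc a' (a' + l / R) ⊆ Set.Icc a (a + l) ∧ IsSafeInterval b c R V d t a' (l / R) := by
  classical
  have R_pos : (0 : ℝ) < R := lt_of_le_of_lt (by positivity) hR
  have R_pos' : 0 < R := by exact_mod_cast R_pos
  have mul_r : R * (l / R) = l := by field_simp
  have r_pos : 0 < l / R := by positivity
  have card_heavy := card_le_coverWeight_le (a := a) ht hd hV r_pos R_pos'
    (by rw [mul_r]; exact hI.coverWeight_lt)
  have card_violating := hI.card_exists_mul_dni_lt_le R_pos' hl hb
  set heavy := (Finset.range R).filter fun i : ℕ ↦ ENNReal.ofReal ((l / R / R) ^ t) ≤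
    coverWeight V d t (Set.Icc (a + i * (l / R)) (a + i * (l / R) + l / R)) with heavy_def
  set violating := (Finset.range R).filter fun i : ℕ ↦
    ∃ x ∈ Set.Icc (a + i * (l / R)) (a + i * (l / R) + l / R),
      ∃ q : ℕ, 1 ≤ q ∧ 4 * q * l < c ∧ q * dni (q * b - x) < c / (4 * R ^ 2) with violating_def
  have card_lt : (heavy ∪ violating).card < (Finset.range R).card := by
    rw [Finset.card_range, ← Nat.cast_lt (α := ℝ)]
    have : ((heavy ∪ violating).card : ℝ) ≤ heavy.card + violating.card := by
      exact_mod_cast Finset.card_union_le _ _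
    have : (violating.card : ℝ) ≤ 3 := by exact_mod_cast card_violating
    linarith
  obtain ⟨i, hi, notMem⟩ := Finset.exists_mem_notMem_of_card_lt_card card_lt
  simp only [heavy_def, violating_def, Finset.mem_union, Finset.mem_filter, hi, true_and, not_or,
    not_le, not_exists, not_and, not_lt] at notMem
  have subset := mul_r ▸ Icc_add_mul_subset (a := a) r_pos.le (Finset.mem_range.1 hi)
  refine ⟨a + i * (l / R), subset, notMem.1, fun q hq hqc x hx ↦ notMem.2 x hx q hq ?_⟩
  exact hqc.trans_eq' (by field_simp)

theorem exists_forall_exists_mem_Icc (h : IsSafeInterval b c R V d t 0 1)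
    (hb : ∀ n : ℕ, 1 ≤ n → c ≤ n * dni (n * b)) (ht : 0 < t) (hR : 2 * (R : ℝ) ^ t + 3 < R)
    (hd : ∀ n, 0 ≤ d n) (hV : ∀ n, ∀ x ∈ V n, ∀ y ∈ V n, |x - y| ≤ d n) :
    ∃ x, ∀ k : ℕ, ∃ a, x ∈ Set.Icc a (a + 1 / (R : ℝ) ^ k) ∧
      IsSafeInterval b c R V d t a (1 / (R : ℝ) ^ k) := by
  have R_pos : (0 : ℝ) < R := lt_of_le_of_lt (by positivity) hR
  have child : ∀ (k : ℕ) (a : ℝ), IsSafeInterval b c R V d t a (1 / (R : ℝ) ^ k) →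
      ∃ a', Set.Icc a' (a' + 1 / (R : ℝ) ^ (k + 1)) ⊆ Set.Icc a (a + 1 / (R : ℝ) ^ k) ∧
        IsSafeInterval b c R V d t a' (1 / (R : ℝ) ^ (k + 1)) := fun k a ha ↦ by
    simpa only [pow_succ, div_div] using ha.exists_child (by positivity) hb ht hR hd hV
  choose! next next_subset next_safe using child
  let s : ℕ → ℝ := fun k ↦ Nat.rec 0 next k
  have safe (k : ℕ) : IsSafeInterval b c R V d t (s k) (1 / (R : ℝ) ^ k) := by
    induction k with
    | zero =>
      simp only [pow_zero, div_one]
      exact h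
    | succ k ih => exact next_safe k (s k) ih
  obtain ⟨x, hx⟩ := IsCompact.nonempty_iInter_of_sequence_nonempty_isCompact_isClosed
    (fun k ↦ Set.Icc (s k) (s k + 1 / (R : ℝ) ^ k)) (fun k ↦ next_subset k (s k) (safe k))
    (fun k ↦ Set.nonempty_Icc.2 (le_add_of_nonneg_right (by positivity))) isCompact_Icc
    fun _ ↦ isClosed_Icc
  exact ⟨x, fun k ↦ ⟨s k, Set.mem_iInter.1 hx k, safe k⟩⟩

end IsSafeInterval

theorem exists_forall_notMem_forall_le_mul_dni {b c t : ℝ} (hc : 0 < c)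
    (hb : ∀ n : ℕ, 1 ≤ n → c ≤ n * dni (n * b)) (ht : 0 < t) {R : ℕ}
    (hR : 2 * (R : ℝ) ^ t + 3 < R) {V : ℕ → Set ℝ} {d : ℕ → ℝ} (hd : ∀ n, 0 < d n)
    (hV : ∀ n, ∀ x ∈ V n, ∀ y ∈ V n, |x - y| ≤ d n)
    (hW : coverWeight V d t Set.univ < ENNReal.ofReal ((1 / (R : ℝ)) ^ t)) :
    ∃ x, (∀ n, x ∉ V n) ∧ ∀ q : ℕ, 1 ≤ q → c / (4 * R ^ 2) ≤ q * dni (q * b - x) := by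
  have R_gt : (3 : ℝ) < R := lt_of_le_of_lt (by linarith [show 0 ≤ (R : ℝ) ^ t by positivity]) hR
  have initial : IsSafeInterval b c R V d t 0 1 := by
    refine ⟨(coverWeight_mono (Set.subset_univ _)).trans_lt hW, fun q hq hqc ↦ absurd hqc ?_⟩
    have : (1 : ℝ) ≤ q := by exact_mod_cast hq
    nlinarith [le_half_of_forall_le_mul_dni hb]
  obtain ⟨x, hx⟩ := initial.exists_forall_exists_mem_Icc hb ht hR (fun n ↦ (hd n).le) hV
  have tendsto : Tendsto (fun k : ℕ ↦ 1 / (R : ℝ) ^ k) atTop (nhds 0) := by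
    simpa only [one_div_pow] using tendsto_pow_atTop_nhds_zero_of_lt_one (r := 1 / (R : ℝ))
      (by positivity) ((div_lt_one (by linarith)).2 (by linarith))
  refine ⟨x, fun n hn ↦ ?_, fun q hq ↦ ?_⟩
  · obtain ⟨k, hk⟩ := (tendsto.eventually_lt_const (hd n)).exists
    obtain ⟨a, hxa, ha⟩ := hx k
    have d_lt := lt_of_coverWeight_lt ht (hd n).le (by positivity) ⟨x, hn, hxa⟩ ha.coverWeight_lt
    exact (d_lt.trans_le (div_le_self (by positivity) (by linarith))).not_gt hk
  · have tendsto_mul : Tendsto (fun k : ℕ ↦ 4 * R * q * (1 / (R : ℝ) ^ k)) atTop (nhds 0) := by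
      simpa only [mul_zero] using tendsto.const_mul (4 * R * q : ℝ)
    obtain ⟨k, hk⟩ := (tendsto_mul.eventually_lt_const hc).exists
    obtain ⟨a, hxa, ha⟩ := hx k
    exact ha.le_mul_dni q hq hk x hxa

/-! ### Slicing Hausdorff measure in the plane -/

theorem tsum_ofReal_div_two_div_two_pow {η : ℝ} (hη : 0 ≤ η) :
    ∑' n : ℕ, ENNReal.ofReal (η / 2 / 2 ^ n) = ENNReal.ofReal η := by
  rw [← ENNReal.ofReal_tsum_of_nonneg (fun n ↦ by positivity) (summable_geometric_two' η),
    tsum_geometric_two']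

theorem exists_cover_of_hausdorffMeasure_eq_zero {X : Type*} [MetricSpace X] [MeasurableSpace X]
    [BorelSpace X] {E : Set X} {D : ℝ} (hD : 0 < D) (hE : μH[D] E = 0) {η : ℝ} (hη : 0 < η) :
    ∃ (U : ℕ → Set X) (d : ℕ → ℝ), E ⊆ ⋃ n, U n ∧ (∀ n, 0 < d n) ∧
      (∀ n, ∀ p ∈ U n, ∀ q ∈ U n, dist p q ≤ d n) ∧
      ∑' n, ENNReal.ofReal (d n ^ D) ≤ ENNReal.ofReal (2 * η) := by
  rw [Measure.hausdorffMeasure_apply] at hE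
  have lt_η := ((iSup₂_le_iff (a := (0 : ENNReal))).1 hE.le 1 one_pos).trans_lt
    (ENNReal.ofReal_pos.2 hη)
  simp only [iInf_lt_iff] at lt_η
  obtain ⟨U, hU, ediam_le, sum_lt⟩ := lt_η
  have ediam_ne_top (n : ℕ) : Metric.ediam (U n) ≠ ⊤ :=
    ((ediam_le n).trans_lt ENNReal.one_lt_top).ne
  set w : ℕ → ℝ := fun n ↦ Metric.diam (U n) ^ D + η / 2 / 2 ^ n
  have w_pos (n : ℕ) : 0 < w n := by positivity
  refine ⟨U, fun n ↦ w n ^ (1 / D), hU, fun n ↦ Real.rpow_pos_of_pos (w_pos n) _,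
    fun n p hp q hq ↦ ?_, ?_⟩
  · have le_w : Metric.diam (U n) ^ D ≤ w n := le_add_of_nonneg_right (by positivity)
    rw [one_div, Real.le_rpow_inv_iff_of_pos dist_nonneg (w_pos n).le hD]
    refine le_w.trans' (Real.rpow_le_rpow dist_nonneg ?_ hD.le)
    exact Metric.dist_le_diam_of_mem (Metric.isBounded_iff_ediam_ne_top.2 (ediam_ne_top n)) hp hq
  · have ofReal_le (n : ℕ) : ENNReal.ofReal ((w n ^ (1 / D)) ^ D) ≤
        (⨆ _ : (U n).Nonempty, Metric.ediam (U n) ^ D) +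
          ENNReal.ofReal (η / 2 / 2 ^ n) := by
      rw [one_div, Real.rpow_inv_rpow (w_pos n).le hD.ne',
        ENNReal.ofReal_add (by positivity) (by positivity)]
      gcongr
      obtain hUn | hUn := (U n).eq_empty_or_nonempty
      · simp [hUn, Real.zero_rpow hD.ne']
      · refine le_iSup_of_le hUn ?_
        rw [Metric.diam, ENNReal.toReal_rpow]
        exact ENNReal.ofReal_toReal_le
    refine (ENNReal.tsum_le_tsum ofReal_le).trans ?_
    rw [ENNReal.tsum_add, tsum_ofReal_div_two_div_two_pow hη.le, two_mul,
      ENNReal.ofReal_add hη.le hη.le]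
    exact add_le_add_left sum_lt.le _

theorem dist_le_of_mem_closure {X : Type*} [PseudoMetricSpace X] {S : Set X} {d : ℝ}
    (hS : ∀ x ∈ S, ∀ y ∈ S, dist x y ≤ d) {x y : X} (hx : x ∈ closure S) (hy : y ∈ closure S) :
    dist x y ≤ d := by
  have subset : S ×ˢ S ⊆ {p : X × X | dist p.1 p.2 ≤ d} := fun p hp ↦ hS p.1 hp.1 p.2 hp.2
  have mem : (x, y) ∈ closure (S ×ˢ S) := by
    rw [closure_prod_eq]
    exact ⟨hx, hy⟩
  exact closure_minimal subset (isClosed_le continuous_dist continuous_const) mem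

theorem lintegral_tsum_indicator_le {ν : Measure ℝ} {A t t' : ℝ} (hA : 0 ≤ A)
    {S : ℕ → Set ℝ} {d : ℕ → ℝ} (hd : ∀ n, 0 < d n) (hS : ∀ n, MeasurableSet (S n))
    (hν : ∀ n, ν (S n) ≤ ENNReal.ofReal (A * d n ^ t)) :
    ∫⁻ b, ∑' n, (S n).indicator (fun _ ↦ ENNReal.ofReal (d n ^ t')) b ∂ν ≤
      ENNReal.ofReal A * ∑' n, ENNReal.ofReal (d n ^ (t + t')) := by
  rw [lintegral_tsum fun n ↦ (measurable_const.indicator (hS n)).aemeasurable,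
    ← ENNReal.tsum_mul_left]
  refine ENNReal.tsum_le_tsum fun n ↦ ?_
  have d_pos := hd n
  rw [lintegral_indicator (hS n), setLIntegral_const]
  calc ENNReal.ofReal (d n ^ t') * ν (S n)
      ≤ ENNReal.ofReal (d n ^ t') * ENNReal.ofReal (A * d n ^ t) := by gcongr; exact hν n
    _ = ENNReal.ofReal A * ENNReal.ofReal (d n ^ (t + t')) := by
      rw [← ENNReal.ofReal_mul (by positivity), ← ENNReal.ofReal_mul hA, Real.rpow_add d_pos]
      ring_nf

/-- If `E` had measure zero, a thin cover of it by sets of size `d n` would give fibres whose covers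
weigh `∑ d n ^ t'` over the `n` with `b` in the projection of `U n`; by the Frostman condition this
is small on average over `b`, so some fibre escapes its cover. -/
theorem hausdorffMeasure_add_ne_zero {ν : Measure ℝ} [IsProbabilityMeasure ν] {E : Set (ℝ × ℝ)}
    {A t t' κ : ℝ} (hA : 0 < A) (ht : 0 < t) (ht' : 0 < t') (hκ : 0 < κ)
    (hν : ∀ S : Set ℝ, MeasurableSet S → ∀ r, 0 < r → (∀ x ∈ S, ∀ y ∈ S, x - y ≤ r) →
      ν S ≤ ENNReal.ofReal (A * r ^ t))
    (hE : ∀ᵐ b ∂ν, ∀ (V : ℕ → Set ℝ) (d : ℕ → ℝ), (∀ n, 0 < d n) →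
      (∀ n, ∀ x ∈ V n, ∀ y ∈ V n, |x - y| ≤ d n) →
      coverWeight V d t' Set.univ < ENNReal.ofReal κ → ∃ x, (∀ n, x ∉ V n) ∧ (b, x) ∈ E) :
    μH[t + t'] E ≠ 0 := by
  intro hE₀
  obtain ⟨U, d, hU, d_pos, dist_le, sum_le⟩ := exists_cover_of_hausdorffMeasure_eq_zero
    (by positivity) hE₀ (η := κ / (4 * A)) (by positivity)
  set S : ℕ → Set ℝ := fun n ↦ closure (Prod.fst '' U n)
  have S_measurable (n : ℕ) : MeasurableSet (S n) := isClosed_closure.measurableSet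
  have S_dist (n : ℕ) : ∀ x ∈ S n, ∀ y ∈ S n, x - y ≤ d n := fun x hx y hy ↦
    (le_abs_self _).trans <| dist_le_of_mem_closure (by
      rintro _ ⟨p, hp, rfl⟩ _ ⟨q, hq, rfl⟩
      exact (le_max_left _ _).trans (dist_le n p hp q hq)) hx hy
  have κ_le : ∀ᵐ b ∂ν, ENNReal.ofReal κ ≤
      ∑' n, (S n).indicator (fun _ ↦ ENNReal.ofReal (d n ^ t')) b := by
    filter_upwards [hE] with b hb
    by_contra! lt_κ
    have weight_le : coverWeight (fun n ↦ {x | (b, x) ∈ U n}) d t' Set.univ ≤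
        ∑' n, (S n).indicator (fun _ ↦ ENNReal.ofReal (d n ^ t')) b :=
      ENNReal.tsum_le_tsum fun n ↦ Set.indicator_apply_le' (fun ⟨x, hx, _⟩ ↦ by
        have mem : b ∈ S n := subset_closure ⟨(b, x), hx, rfl⟩
        rw [Set.indicator_of_mem mem]) fun _ ↦ zero_le
    obtain ⟨x, notMem, hx⟩ := hb (fun n ↦ {x | (b, x) ∈ U n}) d d_pos
      (fun n x hx y hy ↦ (le_max_right _ _).trans (dist_le n _ hx _ hy)) (weight_le.trans_lt lt_κ)
    obtain ⟨n, hn⟩ := Set.mem_iUnion.1 (hU hx)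
    exact notMem n hn
  have := calc ENNReal.ofReal κ = ∫⁻ _, ENNReal.ofReal κ ∂ν := by simp
    _ ≤ ENNReal.ofReal A * ∑' n, ENNReal.ofReal (d n ^ (t + t')) :=
      (lintegral_mono_ae κ_le).trans <| lintegral_tsum_indicator_le hA.le d_pos S_measurable
        fun n ↦ hν _ (S_measurable n) _ (d_pos n) (S_dist n)
    _ ≤ ENNReal.ofReal A * ENNReal.ofReal (2 * (κ / (4 * A))) := by gcongr
    _ = ENNReal.ofReal (κ / 2) := by
      rw [← ENNReal.ofReal_mul hA.le]
      congr 1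
      field_simp
      norm_num
  rw [ENNReal.ofReal_le_ofReal_iff (by positivity)] at this
  linarith

/-! ### Kaufman measures and the dimension of sets of shifts -/

theorem exists_rpow_le_sq_div_eight {t : ℝ} (ht : t < 1) (N : ℕ) :
    ∃ Y : ℕ, N ≤ Y ∧ (36 * (Y : ℝ) ^ 2) ^ t ≤ (Y : ℝ) ^ 2 / 8 := by
  have tendsto : Tendsto (fun Y : ℕ ↦ (Y : ℝ) ^ (2 - 2 * t)) atTop atTop :=
    (tendsto_rpow_atTop (by linarith)).comp tendsto_natCast_atTop_atTop
  obtain ⟨Y, ⟨le_Y, le_rpow⟩, Y_pos⟩ := (((eventually_ge_atTop N).and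
    (tendsto.eventually_ge_atTop 288)).and (eventually_gt_atTop 0)).exists
  refine ⟨Y, le_Y, ?_⟩
  have Y_pos' : (0 : ℝ) < Y := by exact_mod_cast Y_pos
  rw [le_div_iff₀ (by norm_num), Real.mul_rpow (by norm_num) (by positivity)]
  calc (36 : ℝ) ^ t * ((Y : ℝ) ^ 2) ^ t * 8 ≤ 36 * ((Y : ℝ) ^ 2) ^ t * 8 := by
        gcongr
        exact Real.rpow_le_self_of_one_le (by norm_num) ht.le
    _ = 288 * (Y : ℝ) ^ (2 * t) := by rw [Real.rpow_mul Y_pos'.le, Real.rpow_two]; ring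
    _ ≤ (Y : ℝ) ^ (2 - 2 * t) * (Y : ℝ) ^ (2 * t) := by gcongr
    _ = (Y : ℝ) ^ 2 := by rw [← Real.rpow_add Y_pos', sub_add_cancel, Real.rpow_two]

theorem exists_two_mul_rpow_add_three_lt {t : ℝ} (ht₀ : 0 ≤ t) (ht₁ : t < 1) :
    ∃ R : ℕ, 2 * (R : ℝ) ^ t + 3 < R := by
  have tendsto : Tendsto (fun R : ℕ ↦ (R : ℝ) ^ (1 - t)) atTop atTop :=
    (tendsto_rpow_atTop (by linarith)).comp tendsto_natCast_atTop_atTop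
  obtain ⟨R, lt_rpow, R_pos⟩ :=
    ((tendsto.eventually_gt_atTop 5).and (eventually_gt_atTop 0)).exists
  have one_le_R : (1 : ℝ) ≤ R := by exact_mod_cast R_pos
  refine ⟨R, ?_⟩
  calc 2 * (R : ℝ) ^ t + 3 ≤ 5 * (R : ℝ) ^ t := by
        linarith [Real.one_le_rpow one_le_R ht₀]
    _ < (R : ℝ) ^ (1 - t) * (R : ℝ) ^ t := by gcongr
    _ = R := by rw [← Real.rpow_add (by positivity), sub_add_cancel, Real.rpow_one]

/-- A Kaufman measure of dimension `t`: a probability measure on the line satisfying the Frostman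
condition of exponent `t`, whose Fourier coefficients decay polynomially, and which is concentrated
on uniformly badly approximable numbers. -/
structure IsKaufmanMeasure (t : ℝ) (ν : Measure ℝ) : Prop where
  isProbabilityMeasure : IsProbabilityMeasure ν
  frostman : ∃ A, 0 < A ∧ ∀ S : Set ℝ, MeasurableSet S → ∀ r, 0 < r →
    (∀ x ∈ S, ∀ y ∈ S, x - y ≤ r) → ν S ≤ ENNReal.ofReal (A * r ^ t)
  fourier_decay : ∃ D η : ℝ, 0 < η ∧ ∀ n : ℕ, 1 ≤ n →
    ‖∫ x, (𝐞 (n * x) : ℂ) ∂ν‖ ≤ D * (n : ℝ) ^ (-η)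
  ae_badly_approximable : ∃ c, 0 < c ∧ ∀ᵐ b ∂ν, ∀ n : ℕ, 1 ≤ n → c ≤ n * dni (n * b)

theorem exists_isKaufmanMeasure {t : ℝ} (ht₀ : 0 ≤ t) (ht₁ : t < 1) :
    ∃ ν, IsKaufmanMeasure t ν := by
  obtain ⟨Y, le_Y, hYt⟩ := exists_rpow_le_sq_div_eight ht₁ (288 ^ 8)
  obtain ⟨B, hB, hcard⟩ := exists_finset_isDigit (le_Y.trans' (by norm_num) : 416 ≤ Y)
  have one_le_Y : 1 ≤ Y := le_Y.trans' (by norm_num)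
  have : (0 : ℝ) < Y := by exact_mod_cast one_le_Y
  have card_pos : (0 : ℝ) < B.card := hcard.trans_lt' (by positivity)
  obtain ⟨ν, hν⟩ := exists_isDigitMeasure hB (Finset.card_pos.1 (by exact_mod_cast card_pos))
  obtain ⟨D, hD⟩ := hν.exists_norm_integral_fourierChar_le_rpow
    (by have : (288 ^ 8 : ℝ) ≤ Y := (by exact_mod_cast le_Y); linarith) (by linarith)
  refine ⟨ν, hν.isProbabilityMeasure, ⟨2 * B.card * 2 ^ t, by positivity, fun S hS r hr hSr ↦ ?_⟩,
    ⟨D, 1 / 32, by norm_num, hD⟩, ⟨1 / (72 * Y ^ 2), by positivity, ?_⟩⟩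
  · rw [mul_assoc, ← Real.mul_rpow two_pos.le hr.le]
    exact hν.measure_le_rpow one_le_Y ht₀ (hYt.trans hcard) hS hr hSr
  · filter_upwards [hν.ae_forall_exists_mem_pow] with b hb n hn
    have n_pos : (0 : ℝ) < n := by exact_mod_cast hn
    rw [← div_le_iff₀' n_pos, div_div]
    exact one_div_le_abs_mul_sub_of_forall_mem_image hB one_le_Y hb hn (round (n * b))

theorem IsKaufmanMeasure.hausdorffMeasure_add_ne_zero {t : ℝ} {ν : Measure ℝ}
    (hν : IsKaufmanMeasure t ν) (ht₀ : 0 < t) (ht₁ : t < 1) {E : Set (ℝ × ℝ)}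
    (hE : ∀ᵐ β ∂ν, ∀ δ, (β, δ) ∈ BSet → (β, δ) ∈ E) : μH[t + t] E ≠ 0 := by
  have := hν.isProbabilityMeasure
  obtain ⟨A, A_pos, hA⟩ := hν.frostman
  obtain ⟨c, c_pos, hc⟩ := hν.ae_badly_approximable
  obtain ⟨R, hR⟩ := exists_two_mul_rpow_add_three_lt ht₀.le ht₁
  have R_gt : (3 : ℝ) < R := hR.trans_le' (by linarith [show 0 ≤ (R : ℝ) ^ t by positivity])
  refine _root_.hausdorffMeasure_add_ne_zero (κ := (1 / (R : ℝ)) ^ t) A_pos ht₀ ht₀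
    (by positivity) hA ?_
  filter_upwards [hE, hc] with β hβE hβ V d hd hV hVt
  obtain ⟨δ, notMem, hδ⟩ := exists_forall_notMem_forall_le_mul_dni c_pos hβ ht₀ hR hd hV hVt
  have c_le : c / (4 * R ^ 2) ≤ c := div_le_self c_pos.le (by nlinarith)
  exact ⟨δ, notMem,
    hβE δ (mk_mem_BSet (by positivity) (fun n hn ↦ c_le.trans (hβ n hn)) hδ)⟩

theorem dimH_eq_two_of_forall_hausdorffMeasure_ne_zero {E : Set (ℝ × ℝ)}
    (hE : ∀ t : ℝ, 0 < t → t < 1 → μH[t + t] E ≠ 0) : dimH E = 2 := by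
  refine le_antisymm ?_ (le_of_forall_lt fun s hs ↦ ?_)
  · refine (dimH_mono (Set.subset_univ E)).trans_eq ?_
    rw [Real.dimH_univ_eq_finrank]
    simp
  · lift s to NNReal using hs.ne_top
    have s_lt : (s : ℝ) < 2 := by exact_mod_cast hs
    obtain ⟨t, s_lt_t, t_lt⟩ := exists_between (show (s : ℝ) / 2 < 1 by linarith)
    have t_pos : 0 < t := s_lt_t.trans_le' (by positivity)
    lift t to NNReal using t_pos.le
    refine lt_of_lt_of_le ?_ (le_dimH_of_hausdorffMeasure_ne_zero (d := t + t) (hE t t_pos t_lt))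
    have : s < t + t := by
      rw [← NNReal.coe_lt_coe, NNReal.coe_add]
      linarith
    exact_mod_cast this

theorem stmt_3_general {ι : Type*} [Countable ι] {ψ : ℕ → ℝ} (hψ : Tendsto ψ atTop atTop)
    (α γ : ι → ℝ) (hα : ∀ i, α i ∈ KSet) :
    ∃ E : Set (ℝ × ℝ), E ⊆ BSet ∧ dimH E = 2 ∧
      ∀ i : ι, ∀ p ∈ E, ∃ᶠ n : ℕ in atTop,
        (n : ℝ) * dni (n * α i - γ i) * dni (n * p.1 - p.2) < ψ n / log n ^ ((1 : ℝ) / 2) := by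
  refine ⟨{p | p ∈ BSet ∧ ∀ i, ∃ᶠ n : ℕ in atTop,
    (n : ℝ) * dni (n * α i - γ i) * dni (n * p.1 - p.2) < ψ n / log n ^ ((1 : ℝ) / 2)},
    fun p hp ↦ hp.1, ?_, fun i p hp ↦ hp.2 i⟩
  refine dimH_eq_two_of_forall_hausdorffMeasure_ne_zero fun t ht₀ ht₁ ↦ ?_
  obtain ⟨ν, hν⟩ := exists_isKaufmanMeasure ht₀.le ht₁
  have := hν.isProbabilityMeasure
  obtain ⟨D, η, η_pos, hD⟩ := hν.fourier_decay
  have ae_frequently := ae_all_iff.2 fun i ↦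
    ae_forall_frequently_mul_dni_lt η_pos hD hψ (hα i) (γ i)
  refine hν.hausdorffMeasure_add_ne_zero ht₀ ht₁ ?_
  filter_upwards [ae_frequently] with β hβ δ hδ
  exact ⟨hδ, fun i ↦ hβ i δ⟩

theorem stmt_3 (ε : ℝ) (hε : 0 < ε) (α γ : ℕ → ℝ) (hα : ∀ i, α i ∈ KSet) :
    ∃ E : Set (ℝ × ℝ), E ⊆ BSet ∧ dimH E = 2 ∧
      ∀ i : ℕ, ∀ p ∈ E,
        ∃ᶠ n : ℕ in Filter.atTop,
          (n : ℝ) * dni (n * α i - γ i) * dni (n * p.1 - p.2) <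
            (Real.log (Real.log (Real.log n))) ^ (ε + 1/2) / (Real.log n) ^ ((1:ℝ)/2) := by
  refine stmt_3_general ((tendsto_rpow_atTop (by positivity)).comp ?_) α γ hα
  exact tendsto_log_atTop.comp <| tendsto_log_atTop.comp <|
    tendsto_log_atTop.comp tendsto_natCast_atTop_atTop
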